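/- arXiv:1304.6609 — 8 statements merged into one kernel-verified Lean document; each statement's English description precedes it below -/
import Mathlib

section
/- For an integer N ≥ 2, there exists a Vuza canon of the cyclic group ℤ_N if and only if there exist distinct primes p₁, p₂ and integers n₁, n₂, n₃ ≥ 2 such that N = n₁·n₂·n₃·p₁·p₂ and gcd(n₁·p₁, n₂·p₂) = 1 (such N are called Vuza orders). -/
/-!
Write a canon of a cyclic group as a tiling `A ⊕ B = ZMod N`, so that `|A| |B| = N`.

*A Vuza canon forces a Vuza order.* If `|A|` or `|B|` is a prime power, one factor is periodic
(Sands; `Tile.per_of_prime_pow`, by discrete Fourier analysis). Otherwise `|A|` is divisible by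
`p q` and `|B|` by `r s` with `p ≠ q` and `r ≠ s` primes. If `N ≠ p q r s`, the four primes can be
grouped so as to show that `N` is a Vuza order (`isVuzaOrder_of_primes`). If `N = p q r s`, one
factor is periodic. The tool for this is Tijdeman's theorem (`Tile.smul`): multiplying `A` by a
number coprime to `|A|` preserves the tiling. In the form `Tile.forb` it says that
`k (a - a') = l (b - b')`, with `k` coprime to `|A|` and `l` to `|B|`, only has the trivial
solutions `a = a'`, `b = b'`. Through the Chinese remainder theorem this becomes a condition on
which residues of `a - a'` and `b - b'` vanish, and the cases of four distinct primes
(`Tile.per_pqrs`), of exactly one prime common to both factors (`Tile.per_ppqr`) and of `|A| = |B|`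
(`Tile.per_pqpq`) are combinatorial arguments about these vanishing patterns, in the last case
after a reduction to factors of prime order.

*A Vuza order admits a Vuza canon.* The subgroup of index `n₃` is a product
`X × Y = ZMod (n₁ p₁) × ZMod (n₂ p₂)`. With `U ≤ X`, `V ≤ Y` the subgroups of orders `p₁`, `p₂` and
non-periodic transversals `T₁`, `T₂`, the set `T₁ × T₂` is complemented in `X × Y` by `U × V`, and
still is after the slice over `0 ∈ X` is moved to another coset of `V` (which destroys the periods
in `U`) or symmetrically (which destroys those in `V`). Taking the first variant on one coset of
`X × Y` and the second on all others gives a non-periodic complement of `T₁ × T₂` in `ZMod N`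
(`exists_isVuzaCanon`).
-/

open Pointwise

/-- A subset `S` of an additive group is periodic if some nonzero `g` satisfies `g + S = S`. -/
def IsPeriodic {G : Type*} [AddCommGroup G] (S : Set G) : Prop :=
  ∃ g : G, g ≠ 0 ∧ (fun x => g + x) '' S = S

/-- `(S, R)` is a rhythmic canon of `G`: `S`, `R` are nonempty and every `g ∈ G` has
a unique representation `g = s + r` with `s ∈ S`, `r ∈ R`. -/
def IsRhythmicCanon {G : Type*} [AddCommGroup G] (S R : Set G) : Prop :=
  S.Nonempty ∧ R.Nonempty ∧
    ∀ g : G, ∃! p : G × G, p.1 ∈ S ∧ p.2 ∈ R ∧ p.1 + p.2 = g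

/-- A Vuza canon is a rhythmic canon in which neither factor is periodic. -/
def IsVuzaCanon {G : Type*} [AddCommGroup G] (S R : Set G) : Prop :=
  IsRhythmicCanon S R ∧ ¬ IsPeriodic S ∧ ¬ IsPeriodic R

set_option linter.unusedSectionVars false

/-! ### Tilings and Tijdeman's theorem -/

/-- `G = A ⊕ B`: every element is `a + b` for exactly one pair `(a, b) ∈ A × B`. Uniqueness is
spelled out as injectivity of `(a, b) ↦ a + b` on `A × B`. -/
def Tile {G : Type*} [AddCommGroup G] (A B : Finset G) : Prop :=
  (∀ a ∈ A, ∀ a' ∈ A, ∀ b ∈ B, ∀ b' ∈ B, a + b = a' + b' → a = a' ∧ b = b') ∧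
    ∀ g, ∃ a ∈ A, ∃ b ∈ B, a + b = g

section
variable {G : Type*} [AddCommGroup G] [Fintype G] [DecidableEq G]

lemma Tile.symm {A B : Finset G} (h : Tile A B) : Tile B A := by
  refine ⟨fun b hb b' hb' a ha a' ha' e => ?_, fun g => ?_⟩
  · rw [add_comm b, add_comm b'] at e
    exact (h.1 a ha a' ha' b hb b' hb' e).symm
  · obtain ⟨a, ha, b, hb, e⟩ := h.2 g
    exact ⟨b, hb, a, ha, by rw [add_comm, e]⟩

lemma Tile.sum {A B : Finset G} (h : Tile A B) {M : Type*} [AddCommMonoid M] (f : G → M) :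
    ∑ x ∈ A ×ˢ B, f (x.1 + x.2) = ∑ g, f g := by
  refine Finset.sum_bij (fun x _ => x.1 + x.2) (fun _ _ => Finset.mem_univ _) ?_ ?_
    (fun _ _ => rfl)
  · rintro ⟨a, b⟩ hx ⟨a', b'⟩ hx' e
    simp only [Finset.mem_product] at hx hx'
    obtain ⟨h1, h2⟩ := h.1 a hx.1 a' hx'.1 b hx.2 b' hx'.2 e
    simp [h1, h2]
  · intro g _
    obtain ⟨a, ha, b, hb, e⟩ := h.2 g
    exact ⟨(a, b), by simp [ha, hb], e⟩

lemma Tile.card {A B : Finset G} (h : Tile A B) : A.card * B.card = Fintype.card G := by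
  have := h.sum (fun _ => 1)
  simpa using this

/-- When `|A| |B| = |G|`, covering `G` by the sums `f a + b` already makes them distinct. -/
lemma Tile.of_surj {A B : Finset G} (hc : A.card * B.card = Fintype.card G) (f : G → G)
    (h : ∀ g, ∃ a ∈ A, ∃ b ∈ B, f a + b = g) :
    Set.InjOn f A ∧ Tile (A.image f) B := by
  have inj : Set.InjOn (fun x : G × G => f x.1 + x.2) ((A ×ˢ B : Finset (G × G)) : Set (G × G)) := by
    apply Finset.injOn_of_surjOn_of_card_le (t := Finset.univ)
    · intro x _; simp
    · intro g _
      obtain ⟨a, ha, b, hb, e⟩ := h g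
      exact ⟨(a, b), by simp [ha, hb], e⟩
    · simp [hc]
  have key : ∀ a ∈ A, ∀ a' ∈ A, ∀ b ∈ B, ∀ b' ∈ B, f a + b = f a' + b' → a = a' ∧ b = b' := by
    intro a ha a' ha' b hb b' hb' e
    have := @inj (a, b) (by simp [ha, hb]) (a', b') (by simp [ha', hb']) e
    simpa using this
  refine ⟨fun a ha a' ha' e => ?_, ?_, fun g => ?_⟩
  · obtain ⟨_, _, b, hb, _⟩ := h 0
    exact (key a ha a' ha' b hb b hb (by rw [show f a = f a' from e])).1
  · simp only [Finset.mem_image]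
    rintro _ ⟨a, ha, rfl⟩ _ ⟨a', ha', rfl⟩ b hb b' hb' e
    obtain ⟨h1, h2⟩ := key a ha a' ha' b hb b' hb' e
    exact ⟨by rw [h1], h2⟩
  · obtain ⟨a, ha, b, hb, e⟩ := h g
    exact ⟨f a, Finset.mem_image_of_mem f ha, b, hb, e⟩

open AddMonoidAlgebra in
/-- Multiplying `A` by a prime `l ∤ |A|` preserves tilings. In the group algebra over `𝔽_l`, let
`α`, `β`, `T` be the sums over `A`, `B`, `G`. Frobenius gives `∑ a ∈ A, [l • a] = α ^ l`, and
`α ^ l * β = α ^ (l - 1) * T = |A| ^ (l - 1) * T = T`, so every `g` has a nonzero coefficient in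
`(∑ a ∈ A, [l • a]) * β`. -/
lemma Tile.smul_prime {A B : Finset G} (h : Tile A B) {l : ℕ} (hl : l.Prime)
    (hcop : l.Coprime A.card) :
    Set.InjOn (fun x => l • x) (A : Set G) ∧ Tile (A.image (fun x => l • x)) B := by
  have := Fact.mk hl
  have : CharP (AddMonoidAlgebra (ZMod l) G) l :=
    charP_of_injective_algebraMap (FaithfulSMul.algebraMap_injective (ZMod l) _) l
  apply Tile.of_surj h.card
  set α : AddMonoidAlgebra (ZMod l) G := ∑ a ∈ A, single a 1 with hα
  set β : AddMonoidAlgebra (ZMod l) G := ∑ b ∈ B, single b 1 with hβ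
  set T : AddMonoidAlgebra (ZMod l) G := ∑ g, single g 1 with hT
  have hαβ : α * β = T := by
    rw [hα, hβ, hT, Finset.sum_mul_sum, ← Finset.sum_product', ← h.sum fun g => single g (1 : ZMod l)]
    simp [single_mul_single]
  have hsT : ∀ a : G, single a (1 : ZMod l) * T = T := by
    intro a
    rw [hT, Finset.mul_sum]
    simp only [single_mul_single, mul_one]
    exact Fintype.sum_equiv (Equiv.addLeft a) _ _ (fun _ => rfl)
  have hαT : α * T = (A.card : AddMonoidAlgebra (ZMod l) G) * T := by
    rw [hα, Finset.sum_mul]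
    simp [hsT]
  have hpow : ∀ n : ℕ, α ^ n * T = ((A.card : ZMod l) ^ n) • T := by
    intro n
    induction n with
    | zero => simp
    | succ n ih =>
      rw [pow_succ', mul_assoc, ih, mul_smul_comm, hαT, ← nsmul_eq_mul,
        ← Nat.cast_smul_eq_nsmul (ZMod l), smul_smul, pow_succ]
  have hne : (A.card : ZMod l) ≠ 0 := by
    rw [Ne, ZMod.natCast_eq_zero_iff]
    exact fun hd => hl.one_lt.ne' (Nat.Coprime.eq_one_of_dvd hcop hd)
  have hfin : (∑ a ∈ A, single (l • a) 1) * β = T := by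
    have h1 : α ^ l = ∑ a ∈ A, single (l • a) (1 : ZMod l) := by
      rw [hα, sum_pow_char]
      simp [single_pow]
    rw [← h1]
    have h2 := hpow (l - 1)
    rw [ZMod.pow_card_sub_one_eq_one hne, one_smul] at h2
    calc α ^ l * β = α ^ (l - 1) * (α * β) := by
          rw [← mul_assoc, ← pow_succ, Nat.sub_add_cancel hl.one_lt.le]
      _ = T := by rw [hαβ, h2]
  intro g
  by_contra hcon
  push Not at hcon
  have h3 : ((∑ a ∈ A, single (l • a) 1) * β).coeff g = (0 : ZMod l) := by
    rw [hβ, Finset.sum_mul_sum]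
    simp only [single_mul_single, mul_one]
    rw [coeff_sum, Finsupp.finsetSum_apply]
    refine Finset.sum_eq_zero fun a ha => ?_
    rw [coeff_sum, Finsupp.finsetSum_apply]
    refine Finset.sum_eq_zero fun b hb => ?_
    exact Finsupp.single_eq_of_ne (hcon a ha b hb).symm
  rw [hfin, hT, coeff_sum, Finsupp.finsetSum_apply] at h3
  simp [Finsupp.single_apply] at h3

/-- **Tijdeman's theorem**: if `A ⊕ B = G` and `k` is coprime to `|A|`, then `kA ⊕ B = G`. -/
lemma Tile.smul {B : Finset G} (k : ℕ) : ∀ {A : Finset G}, Tile A B → k.Coprime A.card →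
    Set.InjOn (fun x => k • x) (A : Set G) ∧ Tile (A.image (fun x => k • x)) B := by
  induction k using Nat.recOnMul with
  | zero =>
    intro A h hc
    rw [Nat.coprime_zero_left, Finset.card_eq_one] at hc
    obtain ⟨a, rfl⟩ := hc
    refine Tile.of_surj h.card _ fun g => ?_
    obtain ⟨a', ha', b, hb, e⟩ := h.2 (a + g)
    obtain rfl : a' = a := by simpa using ha'
    exact ⟨a', ha', b, hb, by simpa using e⟩
  | one => intro A h _; simpa using h
  | prime p hp => exact fun h hc => h.smul_prime hp hc
  | mul m n hm hn =>
    intro A h hc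
    obtain ⟨hc1, hc2⟩ := Nat.coprime_mul_iff_left.1 hc
    obtain ⟨i1, t1⟩ := hn h hc2
    obtain ⟨i2, t2⟩ := hm t1 (by rwa [Finset.card_image_of_injOn i1])
    refine ⟨fun a ha a' ha' e => i1 ha ha' (i2 (Finset.mem_coe.2 (Finset.mem_image_of_mem _ ha))
      (Finset.mem_coe.2 (Finset.mem_image_of_mem _ ha')) ?_), ?_⟩
    · simpa [mul_smul] using e
    · rw [Finset.image_image] at t2
      convert t2 using 2
      ext x
      simp [mul_smul]

/-- The exclusion principle behind all the case analysis: a multiple of a difference of `A` by a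
number coprime to `|A|` cannot equal a multiple of a difference of `B` by a number coprime to
`|B|`, unless both differences vanish. -/
lemma Tile.forb {A B : Finset G} (h : Tile A B) {k l : ℕ} (hk : k.Coprime A.card)
    (hl : l.Coprime B.card) {a a' b b' : G} (ha : a ∈ A) (ha' : a' ∈ A) (hb : b ∈ B) (hb' : b' ∈ B)
    (e : k • (a - a') = l • (b - b')) : a = a' ∧ b = b' := by
  obtain ⟨i1, t1⟩ := h.smul k hk
  obtain ⟨i2, t2⟩ := t1.symm.smul l hl
  have := t2.1 (l • b') (Finset.mem_image_of_mem _ hb') (l • b) (Finset.mem_image_of_mem _ hb)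
    (k • a) (Finset.mem_image_of_mem _ ha) (k • a') (Finset.mem_image_of_mem _ ha')
    (by rw [smul_sub, smul_sub] at e; rw [add_comm, ← sub_eq_sub_iff_add_eq_add, e])
  exact ⟨i1 ha ha' this.2, (i2 hb' hb this.1).symm⟩
end

/-! ### Fourier transforms and factors of prime power order -/

section
variable {N : ℕ} [NeZero N]

/-- `A` has a nonzero period `w`. Only `A + w ⊆ A` is asked for; for a finite set this is the same
as `A + w = A`. -/
def Per {G : Type*} [AddCommGroup G] (A : Finset G) : Prop :=
  ∃ w, w ≠ 0 ∧ ∀ x ∈ A, x + w ∈ A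

/-- The Fourier coefficient at `k` of the indicator function of `A`. -/
noncomputable def hat (A : Finset (ZMod N)) (k : ZMod N) : ℂ :=
  ∑ a ∈ A, ZMod.stdAddChar (-(a * k))

lemma stdAddChar_eq_one_iff (x : ZMod N) : ZMod.stdAddChar x = (1 : ℂ) ↔ x = 0 := by
  rw [← ZMod.injective_stdAddChar.eq_iff (a := x), AddChar.map_zero_eq_one]

lemma Tile.hat_mul {A B : Finset (ZMod N)} (h : Tile A B) {k : ZMod N} (hk : k ≠ 0) :
    hat A k * hat B k = 0 := by
  have h1 := h.sum fun g => (ZMod.stdAddChar (-(g * k)) : ℂ)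
  have h2 := AddChar.sum_mulShift (-k) (ZMod.isPrimitive_stdAddChar N)
  rw [if_neg (neg_ne_zero.2 hk)] at h2
  simp only [mul_neg, Nat.cast_zero] at h2
  rw [h2] at h1
  rw [← h1, hat, hat, Finset.sum_mul_sum, ← Finset.sum_product']
  refine Finset.sum_congr rfl fun x _ => ?_
  rw [← AddChar.map_add_eq_mul]
  congr 1
  ring

lemma dft_shift (Φ : ZMod N → ℂ) (w k : ZMod N) :
    ZMod.dft (fun x => Φ (x + w)) k = ZMod.stdAddChar (w * k) * ZMod.dft Φ k := by
  rw [ZMod.dft_apply, ZMod.dft_apply, Finset.mul_sum]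
  refine Fintype.sum_equiv (Equiv.addRight w) _ _ fun x => ?_
  simp only [Equiv.coe_addRight, smul_eq_mul]
  rw [← mul_assoc, ← AddChar.map_add_eq_mul]
  congr 2
  ring

/-- A function whose Fourier transform lives on the annihilator of `w` is `w`-periodic. -/
lemma shift_eq_of_dft {Φ : ZMod N → ℂ} {w : ZMod N}
    (h : ∀ k, w * k ≠ 0 → ZMod.dft Φ k = 0) (x : ZMod N) : Φ (x + w) = Φ x := by
  suffices (fun x => Φ (x + w)) = Φ from congrFun this x
  apply ZMod.dft.injective
  ext k
  rw [dft_shift]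
  by_cases hk : w * k = 0
  · rw [(stdAddChar_eq_one_iff _).2 hk, one_mul]
  · rw [h k hk, mul_zero]

lemma dft_indicator (A : Finset (ZMod N)) (k : ZMod N) :
    ZMod.dft (fun x => if x ∈ A then (1 : ℂ) else 0) k = hat A k := by
  rw [ZMod.dft_apply, hat]
  simp

/-- The annihilator of the generator `N / p` of the subgroup of order `p` consists of the
multiples of `p`. -/
lemma h_mul_eq_zero {p : ℕ} (hp : p ∣ N) (k : ZMod N) :
    ((N / p : ℕ) : ZMod N) * k = 0 ↔ p ∣ k.val := by
  obtain ⟨m, hm⟩ := hp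
  have hN : N ≠ 0 := NeZero.ne N
  have hp0 : 0 < p := Nat.pos_of_ne_zero (by rintro rfl; simp at hm; exact hN hm)
  have hm0 : 0 < m := Nat.pos_of_ne_zero (by rintro rfl; simp at hm; exact hN hm)
  conv_lhs => rw [← ZMod.natCast_zmod_val k, ← Nat.cast_mul, ZMod.natCast_eq_zero_iff]
  generalize k.val = v
  rw [hm, Nat.mul_div_cancel_left _ hp0, mul_comm m]
  exact Nat.mul_dvd_mul_iff_right hm0

lemma h_ne_zero {p : ℕ} (hp : p ∣ N) (hp1 : p ≠ 1) : ((N / p : ℕ) : ZMod N) ≠ 0 := by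
  intro h0
  have hN : N ≠ 0 := NeZero.ne N
  have := (ZMod.natCast_eq_zero_iff _ _).1 h0
  have h2 := Nat.le_of_dvd (Nat.div_pos (Nat.le_of_dvd (Nat.pos_of_ne_zero hN) hp)
    (Nat.pos_of_dvd_of_pos hp (Nat.pos_of_ne_zero hN))) this
  have h3 : 2 ≤ p := by
    have := Nat.pos_of_dvd_of_pos hp (Nat.pos_of_ne_zero hN); omega
  exact absurd h2 (not_le.2 (Nat.div_lt_self (Nat.pos_of_ne_zero hN) h3))

/-- Suppose `|A|` is a power of `p` and `hat B k ≠ 0` for some `k` prime to `p`. For `u` prime to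
`p`, `uA ⊕ B` is again a tiling, so the transform of `uA` vanishes at `k`; hence the image measure
of `A` under multiplication by `k` is invariant under the subgroup of order `p`. -/
lemma Tile.exists_mul_eq {A B : Finset (ZMod N)} (h : Tile A B) {p j : ℕ} (hp : p.Prime)
    (hpN : p ∣ N) (hA : A.card = p ^ j) {k : ZMod N} (hk : ¬ p ∣ k.val) (hB : hat B k ≠ 0) :
    ∀ a ∈ A, ∃ a' ∈ A, k * a' = k * a + ((N / p : ℕ) : ZMod N) := by
  intro a ha
  set Φ : ZMod N → ℂ := fun x => ((A.filter fun y => k * y = x).card : ℂ) with hΦ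
  have hdft : ∀ u, ZMod.dft Φ u = ∑ a ∈ A, ZMod.stdAddChar (-(k * a * u)) := by
    intro u
    rw [ZMod.dft_apply]
    simp only [hΦ, Finset.card_filter, Nat.cast_sum, Finset.smul_sum]
    rw [Finset.sum_comm]
    refine Finset.sum_congr rfl fun y _ => ?_
    simp
  have key : ∀ u, ((N / p : ℕ) : ZMod N) * u ≠ 0 → ZMod.dft Φ u = 0 := by
    intro u hu
    rw [Ne, h_mul_eq_zero hpN] at hu
    have hc : u.val.Coprime A.card := by
      rw [hA]
      exact Nat.Coprime.pow_right _ ((Nat.Prime.coprime_iff_not_dvd hp).2 hu).symm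
    obtain ⟨i1, t1⟩ := h.smul u.val hc
    have hk0 : k ≠ 0 := by rintro rfl; simp at hk
    have := t1.hat_mul hk0
    rw [mul_eq_zero, or_iff_left hB, hat, Finset.sum_image i1] at this
    rw [hdft, ← this]
    refine Finset.sum_congr rfl fun y _ => ?_
    congr 1
    rw [nsmul_eq_mul, ZMod.natCast_zmod_val]
    ring
  have h2 := shift_eq_of_dft key (k * a)
  simp only [hΦ, Nat.cast_inj] at h2
  have h3 : 0 < (A.filter fun y => k * y = k * a).card :=
    Finset.card_pos.2 ⟨a, by simp [ha]⟩
  rw [← h2, Finset.card_pos] at h3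
  obtain ⟨a', ha'⟩ := h3
  rw [Finset.mem_filter] at ha'
  exact ⟨a', ha'.1, ha'.2⟩

lemma Tile.exists_mul_eq' {A B : Finset (ZMod N)} (h : Tile A B) {p j : ℕ} (hp : p.Prime)
    (hpN : p ∣ N) (hA : A.card = p ^ j) {k : ZMod N} (hk : ¬ p ∣ k.val) (hB : hat B k ≠ 0) (i : ℕ) :
    ∀ a ∈ A, ∃ a' ∈ A, k * a' = k * a + i * ((N / p : ℕ) : ZMod N) := by
  induction i with
  | zero => exact fun a ha => ⟨a, ha, by simp⟩
  | succ i ih =>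
    intro a ha
    obtain ⟨a', ha', e⟩ := ih a ha
    obtain ⟨a'', ha'', e'⟩ := h.exists_mul_eq hp hpN hA hk hB a' ha'
    exact ⟨a'', ha'', by rw [e', e]; push_cast; ring⟩

/-- An integer `e` with `e ≡ 1` modulo the exact power of `p` in `N` and `e ≡ 0` modulo the
cofactor prime to `p`: it acts as the projection of `ZMod N` onto its `p`-primary part, and every
`k` prime to `p` is invertible there. -/
lemma exists_primary_idem {p : ℕ} (hp : p.Prime) (hpN : p ∣ N) : ∃ e : ℕ, ¬ p ∣ e ∧
    (e : ZMod N) * ((N / p : ℕ) : ZMod N) = ((N / p : ℕ) : ZMod N) ∧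
    ∀ k : ZMod N, ¬ p ∣ k.val → ∃ k', (e : ZMod N) * k * k' = e := by
  obtain ⟨n, m, hpm, hN⟩ := Nat.exists_eq_pow_mul_and_not_dvd (NeZero.ne N) p hp.ne_one
  have hn : n ≠ 0 := by rintro rfl; simp at hN; exact hpm (hN ▸ hpN)
  have hcop : (p ^ n).Coprime m := Nat.Coprime.pow_left _ ((Nat.Prime.coprime_iff_not_dvd hp).2 hpm)
  obtain ⟨e, he1, he0⟩ := Nat.chineseRemainder hcop 1 0
  have hpe : (e : ℤ) ≡ 1 [ZMOD p] := by
    have : e ≡ 1 [MOD p] := he1.of_dvd (dvd_pow_self p hn)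
    exact_mod_cast (Int.natCast_modEq_iff.2 this)
  refine ⟨e, ?_, ?_, ?_⟩
  · intro hd
    have h1 : (p : ℤ) ∣ 1 := by
      have := (Int.modEq_iff_dvd.1 hpe)
      have h2 : (p : ℤ) ∣ e := by exact_mod_cast hd
      simpa using dvd_add this h2
    have : p ∣ 1 := by exact_mod_cast h1
    exact hp.one_lt.ne' (Nat.dvd_one.1 this)
  · rw [← sub_eq_zero, ← sub_one_mul, mul_comm]
    obtain ⟨c, hc⟩ := Int.modEq_iff_dvd.1 hpe.symm
    have : ((e : ZMod N) - 1) = ((p * c : ℤ) : ZMod N) := by rw [← hc]; push_cast; ring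
    rw [this]; push_cast
    rw [← mul_assoc, ← Nat.cast_mul, Nat.div_mul_cancel hpN]
    simp
  · intro k hk
    have hck : k.val.Coprime (p ^ n) :=
      Nat.Coprime.pow_right _ ((Nat.Prime.coprime_iff_not_dvd hp).2 hk).symm
    refine ⟨((k.val : ZMod (p ^ n))⁻¹).val, ?_⟩
    have h1 : ((e * k.val * ((k.val : ZMod (p ^ n))⁻¹).val : ℕ) : ZMod N) = (e : ℕ) := by
      rw [ZMod.natCast_eq_natCast_iff]
      have : e * k.val * ((k.val : ZMod (p ^ n))⁻¹).val ≡ e [MOD p ^ n * m] := by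
        rw [← Nat.modEq_and_modEq_iff_modEq_mul hcop]
        constructor
        · have : NeZero (p ^ n) := ⟨pow_ne_zero _ hp.ne_zero⟩
          rw [← ZMod.natCast_eq_natCast_iff]
          push_cast
          rw [ZMod.natCast_zmod_val, mul_assoc, ZMod.coe_mul_inv_eq_one _ hck, mul_one]
        · have := (he0.mul_right k.val).mul_right ((k.val : ZMod (p ^ n))⁻¹).val
          simp only [zero_mul] at this
          exact this.trans he0.symm
      rwa [← hN] at this
    push_cast at h1
    simpa using h1

/-- If one factor of a tiling of `ZMod N` has prime power order, one of the factors is periodic.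
Let `η = N / p`. If `hat B` vanishes at every `k` prime to `p`, then `η` is a period of `B`.
Otherwise, if `η` is not a period of `A`, say `a + η ∉ A`, some `a' ∈ A` has the same `p`-part as
`a + η`, and `w = a' - a - η ≠ 0`. This `w` turns out to be a period of `B`: `w` kills every `k`
prime to `p` with `hat B k ≠ 0`, so `1_B(x + w) - 1_B(x)` is `η`-periodic in `x`, and for `x ∈ B`,
`x + w ∉ B` this contradicts `B ∩ (B + η) = ∅`. -/
theorem Tile.per_of_prime_pow {A B : Finset (ZMod N)} (h : Tile A B) (hN : 2 ≤ N) {p j : ℕ}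
    (hp : p.Prime) (hA : A.card = p ^ j) : Per A ∨ Per B := by
  have hcard := h.card
  rw [ZMod.card] at hcard
  rcases Nat.eq_zero_or_pos j with rfl | hj
  · right
    have hB : B = Finset.univ := by
      rw [← Finset.card_eq_iff_eq_univ, ZMod.card]; rwa [hA, pow_zero, one_mul] at hcard
    have : Fact (1 < N) := ⟨hN⟩
    exact ⟨1, one_ne_zero, by simp [hB]⟩
  have hpN : p ∣ N := by
    rw [← hcard, hA]
    exact (dvd_pow_self p hj.ne').mul_right _
  set η : ZMod N := ((N / p : ℕ) : ZMod N) with hη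
  have hη0 : η ≠ 0 := h_ne_zero hpN hp.ne_one
  by_cases hB : ∀ k : ZMod N, ¬ p ∣ k.val → hat B k = 0
  · right
    refine ⟨η, hη0, fun x hx => ?_⟩
    have := shift_eq_of_dft (Φ := fun x => if x ∈ B then (1 : ℂ) else 0) (w := η) (fun k hk => by
      rw [dft_indicator]; rw [Ne, hη, h_mul_eq_zero hpN] at hk; exact hB k hk) x
    simpa [hx] using this
  push Not at hB
  obtain ⟨k₀, hk₀, hBk₀⟩ := hB
  obtain ⟨e, hpe, heη, hek⟩ := exists_primary_idem (N := N) hp hpN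
  have hec : e.Coprime A.card := by
    rw [hA]; exact Nat.Coprime.pow_right _ ((Nat.Prime.coprime_iff_not_dvd hp).2 hpe).symm
  obtain ⟨ie, te⟩ := h.smul e hec
  simp only [nsmul_eq_mul] at ie te
  by_cases hAη : ∀ a ∈ A, a + η ∈ A
  · exact Or.inl ⟨η, hη0, hAη⟩
  right
  push Not at hAη
  obtain ⟨a, ha, haη⟩ := hAη
  -- all the `a'` obtained here have the same `p`-part, hence coincide, since multiplication by `e`
  -- is injective on `A`
  have lift : ∀ k : ZMod N, ¬ p ∣ k.val → hat B k ≠ 0 →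
      ∃ a' ∈ A, k * a' = k * a + k * η ∧ (e : ZMod N) * a' = e * a + η := by
    intro k hk hBk
    obtain ⟨a', ha', e1⟩ := h.exists_mul_eq' hp hpN hA hk hBk k.val a ha
    rw [ZMod.natCast_zmod_val, ← hη] at e1
    refine ⟨a', ha', e1, ?_⟩
    obtain ⟨k', hk'⟩ := hek k hk
    calc (e : ZMod N) * a' = k' * (e * (k * a')) := by
          rw [← hk']; linear_combination (-a' * k' * k) * hk'
      _ = (e * k * k') * a + (e * k * k') * η := by rw [e1]; ring
      _ = e * a + η := by rw [hk', heη]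
  obtain ⟨a', ha', -, ea'⟩ := lift k₀ hk₀ hBk₀
  set w := a' - a - η with hw
  have hw0 : w ≠ 0 := by
    intro h0
    rw [hw, sub_sub, sub_eq_zero] at h0
    exact haη (h0 ▸ ha')
  have hBη : ∀ b ∈ B, b + η ∉ B := by
    intro b hb hb'
    have := te.1 _ (Finset.mem_image_of_mem _ ha') _ (Finset.mem_image_of_mem _ ha) b hb _ hb'
      (by simp only [ea']; ring)
    exact hη0 (by simpa using this.2)
  have hBw : ∀ k : ZMod N, ¬ p ∣ k.val → w * k ≠ 0 → hat B k = 0 := by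
    intro k hk hwk
    by_contra hBk
    obtain ⟨a'', ha'', e1, e2⟩ := lift k hk hBk
    have : a'' = a' := ie ha'' ha' (by simp only [ea', e2])
    subst this
    apply hwk
    rw [hw]
    linear_combination e1
  refine ⟨w, hw0, fun x hx => ?_⟩
  by_contra hxw
  set Φ : ZMod N → ℂ := fun x => if x ∈ B then (1 : ℂ) else 0 with hΦ
  have hC := shift_eq_of_dft (Φ := (fun x => Φ (x + w)) - Φ) (w := η) (fun k hk => by
      rw [map_sub, Pi.sub_apply, dft_shift, dft_indicator]
      rw [Ne, hη, h_mul_eq_zero hpN] at hk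
      by_cases hwk : w * k = 0
      · rw [(stdAddChar_eq_one_iff _).2 hwk]; ring
      · rw [hBw k hk hwk]; ring) x
  simp only [Pi.sub_apply, hΦ, if_neg hxw, if_neg (hBη x hx), if_pos hx] at hC
  split_ifs at hC <;> norm_num at hC
end

/-! ### The case `|A| = |B| = p q` -/

section
variable {N : ℕ} [NeZero N]

lemma closed_nsmul {G : Type*} [AddCommGroup G] {A : Finset G} {w : G}
    (h : ∀ x ∈ A, x + w ∈ A) (n : ℕ) : ∀ x ∈ A, x + n • w ∈ A := by
  induction n with
  | zero => simp
  | succ n ih =>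
    intro x hx
    rw [succ_nsmul, ← add_assoc]
    exact h _ (ih x hx)

lemma map_eq_natCast_val {m : ℕ} (f : ZMod N →+* ZMod m) (x : ZMod N) : f x = (x.val : ZMod m) := by
  conv_lhs => rw [← ZMod.natCast_zmod_val x]
  exact map_natCast f _

lemma coprime_of_map_ne_zero {p : ℕ} (hp : p.Prime) (f : ZMod N →+* ZMod p) {x : ZMod N}
    (h : f x ≠ 0) : x.val.Coprime p := by
  rw [map_eq_natCast_val, Ne, ZMod.natCast_eq_zero_iff] at h
  exact ((Nat.Prime.coprime_iff_not_dvd hp).2 h).symm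

lemma Tile.forb' {A B : Finset (ZMod N)} (h : Tile A B) {k l : ZMod N} (hk : k.val.Coprime A.card)
    (hl : l.val.Coprime B.card) {a a' b b' : ZMod N} (ha : a ∈ A) (ha' : a' ∈ A) (hb : b ∈ B)
    (hb' : b' ∈ B) (e : k * (a - a') = l * (b - b')) : a = a' ∧ b = b' :=
  h.forb hk hl ha ha' hb hb' (by simpa [nsmul_eq_mul] using e)

/-- Every element of prime order `q` generates the subgroup generated by `N / q`. -/
lemma exists_nsmul_eq_eta {q : ℕ} (hq : q.Prime) (hqN : q ∣ N) {w : ZMod N} (hw : w ≠ 0)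
    (hqw : q • w = 0) : ∃ j : ℕ, j • w = ((N / q : ℕ) : ZMod N) := by
  have h1 : N ∣ q * w.val := by
    rw [← ZMod.natCast_eq_zero_iff]; simpa using hqw
  have hN : q * (N / q) = N := Nat.mul_div_cancel' hqN
  obtain ⟨c, hc⟩ : N / q ∣ w.val := by
    have : q * (N / q) ∣ q * w.val := hN.symm ▸ h1
    exact Nat.dvd_of_mul_dvd_mul_left hq.pos this
  have hqc : ¬ q ∣ c := by
    rintro ⟨d, rfl⟩
    apply hw
    rw [← ZMod.val_eq_zero]
    have h2 : N ∣ w.val := ⟨d, by rw [hc, ← mul_assoc, mul_comm (N / q), hN]⟩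
    exact Nat.eq_zero_of_dvd_of_lt h2 (ZMod.val_lt w)
  have hcop : c.Coprime q := ((Nat.Prime.coprime_iff_not_dvd hq).2 hqc).symm
  obtain ⟨j, -, hj⟩ := Nat.exists_mul_mod_eq_one_of_coprime hcop hq.one_lt
  refine ⟨j, ?_⟩
  have hcj : c * j = q * (c * j / q) + 1 := by rw [← hj]; exact (Nat.div_add_mod _ _).symm
  rw [nsmul_eq_mul, ← ZMod.natCast_zmod_val w, hc, ← Nat.cast_mul]
  rw [show j * (N / q * c) = N * (c * j / q) + N / q by
    calc j * (N / q * c) = (N / q) * (c * j) := by ring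
      _ = (q * (N / q)) * (c * j / q) + N / q := by
        rw [hcj]; simp only [Nat.mul_add_div hq.pos, Nat.div_eq_of_lt hq.one_lt]; ring
      _ = _ := by rw [hN]]
  push_cast
  simp

lemma exists_of_injOn {G X : Type*} [Fintype X] {A : Finset G} {f : G → X}
    (hf : ∀ a ∈ A, ∀ a' ∈ A, f a = f a' → a = a') (hc : Fintype.card X ≤ A.card) (x : X) :
    ∃ a ∈ A, f a = x := by
  classical
  have : A.image f = Finset.univ := by
    rw [← Finset.card_eq_iff_eq_univ, Finset.card_image_of_injOn hf]
    refine le_antisymm ?_ hc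
    rw [← Finset.card_image_of_injOn (f := f) hf]
    exact Finset.card_le_univ _
  have hx : x ∈ A.image f := this ▸ Finset.mem_univ x
  simpa using hx

/-- If `A` lies in one fibre of `φ : ZMod N → ZMod p`, then `A' = A ⊕ {0, …, p - 1}` is a complement
of each `B ∩ φ⁻¹(i)`, a set with `q` elements. Either `A'`, and then `A`, is periodic, or all the
sets `B ∩ φ⁻¹(i)` are; their periods have order `q`, so `N / q` is a common one. -/
lemma Tile.per_of_fiber {A B : Finset (ZMod N)} (h : Tile A B) {p q : ℕ} (hp : p.Prime)
    (hq : q.Prime) (hN : N = p * q * (p * q)) (hA : A.card = p * q) (φ : ZMod N →+* ZMod p)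
    (hφ : ∀ a ∈ A, ∀ a' ∈ A, φ a = φ a') : Per A ∨ Per B := by
  have : NeZero p := ⟨hp.ne_zero⟩
  have hN2 : 2 ≤ N := by
    rw [hN]
    calc 2 ≤ p := hp.two_le
      _ ≤ p * (q * (p * q)) :=
        Nat.le_mul_of_pos_right _ (Nat.mul_pos hq.pos (Nat.mul_pos hp.pos hq.pos))
      _ = _ := by ring
  obtain ⟨a₀, ha₀⟩ : A.Nonempty := by
    rw [← Finset.card_pos, hA]; exact Nat.mul_pos hp.pos hq.pos
  set A' := (A ×ˢ Finset.range p).image (fun x => x.1 + ((x.2 : ℕ) : ZMod N)) with hA'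
  have tinj : ∀ t ∈ Finset.range p, ∀ t' ∈ Finset.range p, (t : ZMod p) = t' → t = t' := by
    intro t ht t' ht' e
    rw [ZMod.natCast_eq_natCast_iff'] at e
    rwa [Nat.mod_eq_of_lt (Finset.mem_range.1 ht), Nat.mod_eq_of_lt (Finset.mem_range.1 ht')] at e
  have hcardA' : A'.card = p * q * p := by
    rw [hA', Finset.card_image_of_injOn, Finset.card_product, hA, Finset.card_range]
    rintro ⟨a, t⟩ h1 ⟨a', t'⟩ h2 e
    simp only [Finset.coe_product, Set.mem_prod, Finset.mem_coe] at h1 h2 e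
    have e2 := congrArg φ e
    simp only [map_add, map_natCast, hφ a h1.1 a' h2.1, add_right_inj] at e2
    obtain rfl := tinj t h1.2 t' h2.2 e2
    simpa using e
  have tile : ∀ i, Tile A' (B.filter fun b => φ b = i) := by
    intro i
    refine ⟨?_, ?_⟩
    · simp only [hA', Finset.mem_image, Finset.mem_product, Finset.mem_filter, Prod.exists]
      rintro _ ⟨a, t, ⟨ha, ht⟩, rfl⟩ _ ⟨a', t', ⟨ha', ht'⟩, rfl⟩ b ⟨hb, hbi⟩ b' ⟨hb', hbi'⟩ e
      have e2 := congrArg φ e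
      simp only [map_add, map_natCast, hφ a ha a' ha', hbi, hbi', add_left_inj, add_right_inj] at e2
      obtain rfl := tinj t ht t' ht' e2
      obtain ⟨rfl, rfl⟩ := h.1 a ha a' ha' b hb b' hb' (by linear_combination e)
      exact ⟨rfl, rfl⟩
    · intro g
      obtain ⟨a, ha, b, hb, e⟩ := h.2 (g - ((φ g - φ a₀ - i).val : ℕ))
      refine ⟨a + ((φ g - φ a₀ - i).val : ℕ), ?_, b, ?_, by linear_combination e⟩
      · rw [hA', Finset.mem_image]
        exact ⟨(a, (φ g - φ a₀ - i).val), by simp [ha, ZMod.val_lt], rfl⟩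
      · rw [Finset.mem_filter]
        refine ⟨hb, ?_⟩
        have e2 := congrArg φ e
        simp only [map_add, map_sub, map_natCast, ZMod.natCast_zmod_val, hφ a ha a₀ ha₀] at e2
        linear_combination e2
  have hcardB : ∀ i, (B.filter fun b => φ b = i).card = q ^ 1 := by
    intro i
    have h1 := (tile i).card
    have h2 : p * q * p * (B.filter fun b => φ b = i).card = p * q * p * q := by
      rw [ZMod.card, hcardA'] at h1
      rw [h1]; linarith
    rw [pow_one]
    exact Nat.eq_of_mul_eq_mul_left (Nat.mul_pos (Nat.mul_pos hp.pos hq.pos) hp.pos) h2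
  by_cases hPA : Per A'
  · left
    obtain ⟨w, hw0, hw⟩ := hPA
    obtain ⟨w', hw'0, hφw', hw'⟩ : ∃ w', w' ≠ 0 ∧ φ w' = 0 ∧ ∀ x ∈ A', x + w' ∈ A' := by
      by_cases hpw : p • w = 0
      · refine ⟨w, hw0, ?_, hw⟩
        have h1 : N ∣ p * w.val := by
          rw [← ZMod.natCast_eq_zero_iff]; simpa using hpw
        rw [map_eq_natCast_val, ZMod.natCast_eq_zero_iff]
        have h2 : p * p ∣ p * w.val := Dvd.dvd.trans ⟨q * q, by rw [hN]; ring⟩ h1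
        exact Nat.dvd_of_mul_dvd_mul_left hp.pos h2
      · exact ⟨p • w, hpw, by simp, closed_nsmul hw p⟩
    refine ⟨w', hw'0, fun a ha => ?_⟩
    have h1 := hw' a (by
      rw [hA', Finset.mem_image]; exact ⟨(a, 0), by simp [ha, hp.pos], by simp⟩)
    rw [hA', Finset.mem_image] at h1
    obtain ⟨⟨a', t⟩, h2, e⟩ := h1
    rw [Finset.mem_product] at h2
    have e2 := congrArg φ e
    simp only [map_add, map_natCast, hφ a' h2.1 a ha, hφw', add_zero, add_eq_left] at e2
    have : t = 0 := tinj t h2.2 0 (by simp [hp.pos]) (by simpa using e2)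
    subst this
    rw [← e]; simpa using h2.1
  · right
    have hqN : q ∣ N := ⟨p * (p * q), by rw [hN]; ring⟩
    refine ⟨((N / q : ℕ) : ZMod N), h_ne_zero hqN hq.ne_one, fun b hb => ?_⟩
    obtain ⟨w, hw0, hw⟩ :=
      ((tile (φ b)).symm.per_of_prime_pow hN2 hq (hcardB (φ b))).resolve_right hPA
    have hqw : q • w = 0 := by
      set S := B.filter fun x => φ x = φ b
      have himg : S.image (fun x => x + w) = S :=
        Finset.eq_of_subset_of_card_le (Finset.image_subset_iff.2 hw)
          (Finset.card_image_of_injective _ (add_left_injective w)).ge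
      have h1 : ∑ x ∈ S, (x + w) = ∑ x ∈ S, x := by
        conv_rhs => rw [← himg]
        rw [Finset.sum_image (fun x _ y _ e => add_left_injective w e)]
      rw [Finset.sum_add_distrib, Finset.sum_const, hcardB, pow_one] at h1
      simpa using h1
    obtain ⟨j, hj⟩ := exists_nsmul_eq_eta hq hqN hw0 hqw
    have := closed_nsmul hw j b (by simp [hb])
    rw [hj] at this
    exact (Finset.mem_filter.1 this).1

/-- Here a unit difference in `A` excludes a unit difference in `B`, and a set without unit
differences lies in a fibre of one of the two residue maps. -/
lemma Tile.per_pqpq {A B : Finset (ZMod N)} (h : Tile A B) {p q : ℕ} (hp : p.Prime)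
    (hq : q.Prime) (hN : N = p * q * (p * q)) (hA : A.card = p * q)
    (hB : B.card = p * q) : Per A ∨ Per B := by
  set φ : ZMod N →+* ZMod p := ZMod.castHom ⟨q * (p * q), by rw [hN]; ring⟩ _
  set ψ : ZMod N →+* ZMod q := ZMod.castHom ⟨p * (p * q), by rw [hN]; ring⟩ _
  have unit : ∀ x, φ x ≠ 0 → ψ x ≠ 0 → x.val.Coprime (p * q) := fun x h1 h2 =>
    Nat.Coprime.mul_right (coprime_of_map_ne_zero hp φ h1) (coprime_of_map_ne_zero hq ψ h2)
  -- a set all of whose differences are nonunits lies in a fibre of `φ` or of `ψ`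
  have dich : ∀ C : Finset (ZMod N),
      (∀ c ∈ C, ∀ c' ∈ C, φ (c - c') = 0 ∨ ψ (c - c') = 0) →
      (∀ c ∈ C, ∀ c' ∈ C, φ c = φ c') ∨ (∀ c ∈ C, ∀ c' ∈ C, ψ c = ψ c') := by
    intro C hC
    simp only [map_sub, sub_eq_zero] at hC
    by_contra! hcon
    obtain ⟨⟨c, hc, c', hc', e⟩, ⟨d, hd, d', hd', e'⟩⟩ := hcon
    have := hC c hc c' hc'
    have := hC d hd d' hd'
    have := hC c hc d hd
    have := hC c hc d' hd'
    have := hC c' hc' d hd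
    have := hC c' hc' d' hd'
    grind
  have hN' : N = q * p * (q * p) := by rw [hN]; ring
  have hA' : A.card = q * p := by rw [hA, mul_comm]
  have hB' : B.card = q * p := by rw [hB, mul_comm]
  by_cases hCA : ∀ c ∈ A, ∀ c' ∈ A, φ (c - c') = 0 ∨ ψ (c - c') = 0
  · rcases dich A hCA with h1 | h1
    · exact h.per_of_fiber hp hq hN hA φ h1
    · exact h.per_of_fiber hq hp hN' hA' ψ h1
  by_cases hCB : ∀ c ∈ B, ∀ c' ∈ B, φ (c - c') = 0 ∨ ψ (c - c') = 0
  · rcases dich B hCB with h1 | h1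
    · exact (h.symm.per_of_fiber hp hq hN hB φ h1).symm
    · exact (h.symm.per_of_fiber hq hp hN' hB' ψ h1).symm
  push Not at hCA hCB
  obtain ⟨a, ha, a', ha', h1, h2⟩ := hCA
  obtain ⟨b, hb, b', hb', h3, h4⟩ := hCB
  obtain ⟨e, -⟩ := h.forb' (k := b - b') (l := a - a') (by rw [hA]; exact unit _ h3 h4)
    (by rw [hB]; exact unit _ h1 h2) ha ha' hb hb' (mul_comm _ _)
  simp [e] at h1
end

/-! ### Four distinct primes -/

section
variable {N : ℕ} [NeZero N]

/-- The combinatorial core of the case of four distinct primes. `F` is the exclusion principle in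
terms of the four residues; `hA`, `hB` say that `A` is a full set of residues for the first two
primes and `B` for the last two; `h₁`–`h₄` are what the absence of periods of order
`p`, `q`, `r`, `s` provides, once `r` and `s` are exchanged if necessary to have `f₄` in `h₁`. -/
lemma core_pqrs {G X₁ X₂ X₃ X₄ : Type*} {A B : Finset G} {f₁ : G → X₁} {f₂ : G → X₂}
    {f₃ : G → X₃} {f₄ : G → X₄}
    (F : ∀ a ∈ A, ∀ a' ∈ A, ∀ b ∈ B, ∀ b' ∈ B, (f₁ b = f₁ b' → f₁ a = f₁ a') →
      (f₂ b = f₂ b' → f₂ a = f₂ a') → (f₃ a = f₃ a' → f₃ b = f₃ b') →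
      (f₄ a = f₄ a' → f₄ b = f₄ b') → a = a' ∧ b = b')
    (hA : ∀ x y, ∃ a ∈ A, f₁ a = x ∧ f₂ a = y) (hB : ∀ x y, ∃ b ∈ B, f₃ b = x ∧ f₄ b = y)
    (h₁ : ∃ a ∈ A, ∃ a' ∈ A, f₁ a ≠ f₁ a' ∧ f₂ a = f₂ a' ∧ f₄ a ≠ f₄ a')
    (h₂ : ∃ a ∈ A, ∃ a' ∈ A, f₁ a = f₁ a' ∧ f₂ a ≠ f₂ a' ∧ (f₃ a ≠ f₃ a' ∨ f₄ a ≠ f₄ a'))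
    (h₃ : ∃ b ∈ B, ∃ b' ∈ B, f₃ b ≠ f₃ b' ∧ f₄ b = f₄ b' ∧ (f₁ b ≠ f₁ b' ∨ f₂ b ≠ f₂ b'))
    (h₄ : ∃ b ∈ B, ∃ b' ∈ B, f₃ b = f₃ b' ∧ f₄ b ≠ f₄ b' ∧ (f₁ b ≠ f₁ b' ∨ f₂ b ≠ f₂ b')) :
    False := by
  obtain ⟨a, ha, a', ha', a₁, a₂, a₄⟩ := h₁
  obtain ⟨c, hc, c', hc', c₁, c₂, c₃₄⟩ := h₂
  obtain ⟨b, hb, b', hb', b₃, b₄, b₁₂⟩ := h₃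
  obtain ⟨d, hd, d', hd', d₃, d₄, d₁₂⟩ := h₄
  have d₁ : f₁ d = f₁ d' := by
    by_contra d₁
    exact d₄ (congrArg f₄ (F a ha a' ha' d hd d' hd' (by tauto) (by tauto) (by tauto)
      (by tauto)).2)
  have d₂ : f₂ d ≠ f₂ d' := by tauto
  have c₄ : f₄ c = f₄ c' := by
    by_contra c₄
    exact d₄ (congrArg f₄ (F c hc c' hc' d hd d' hd' (by tauto) (by tauto) (by tauto)
      (by tauto)).2)
  have c₃ : f₃ c ≠ f₃ c' := by tauto
  have b₂ : f₂ b = f₂ b' := by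
    by_contra b₂
    exact b₃ (congrArg f₃ (F c hc c' hc' b hb b' hb' (by tauto) (by tauto) (by tauto)
      (by tauto)).2)
  have b₁ : f₁ b ≠ f₁ b' := by tauto
  -- on `A`, `f₃` factors through `f₂` and `f₄` through `f₁`; dually on `B`
  have A₃ : ∀ x ∈ A, ∀ y ∈ A, f₂ x = f₂ y → f₃ x = f₃ y := by
    intro x hx y hy e
    by_contra e₃
    exact b₃ (congrArg f₃ (F x hx y hy b hb b' hb' (by tauto) (by tauto) (by tauto)
      (by tauto)).2)
  have A₄ : ∀ x ∈ A, ∀ y ∈ A, f₁ x = f₁ y → f₄ x = f₄ y := by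
    intro x hx y hy e
    by_contra e₄
    exact d₄ (congrArg f₄ (F x hx y hy d hd d' hd' (by tauto) (by tauto) (by tauto)
      (by tauto)).2)
  have B₁ : ∀ x ∈ B, ∀ y ∈ B, f₃ x = f₃ y → f₁ x = f₁ y := by
    intro x hx y hy e
    by_contra e₁
    exact a₁ (congrArg f₁ (F a ha a' ha' x hx y hy (by tauto) (by tauto) (by tauto)
      (by tauto)).1)
  have B₂ : ∀ x ∈ B, ∀ y ∈ B, f₄ x = f₄ y → f₂ x = f₂ y := by
    intro x hx y hy e
    by_contra e₂
    exact c₂ (congrArg f₂ (F c hc c' hc' x hx y hy (by tauto) (by tauto) (by tauto)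
      (by tauto)).1)
  obtain ⟨z, hz, z₁, z₂⟩ := hA (f₁ a) (f₂ c)
  obtain ⟨z', hz', z₁', z₂'⟩ := hA (f₁ a') (f₂ c')
  obtain ⟨y, hy, y₃, y₄⟩ := hB (f₃ b) (f₄ d)
  obtain ⟨y', hy', y₃', y₄'⟩ := hB (f₃ b') (f₄ d')
  have e₃ : f₃ z ≠ f₃ z' := by rwa [A₃ z hz c hc z₂, A₃ z' hz' c' hc' z₂']
  have e₄ : f₄ z ≠ f₄ z' := by rwa [A₄ z hz a ha z₁, A₄ z' hz' a' ha' z₁']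
  have e₁ : f₁ y ≠ f₁ y' := by rwa [B₁ y hy b hb y₃, B₁ y' hy' b' hb' y₃']
  have e₂ : f₂ y ≠ f₂ y' := by rwa [B₂ y hy d hd y₄, B₂ y' hy' d' hd' y₄']
  exact e₃ (congrArg f₃ (F z hz z' hz' y hy y' hy' (by tauto) (by tauto) (by tauto)
    (by tauto)).1)

lemma exists_mul_eq_mul {R : Type*} [CommRing R] [Nontrivial R] {x y : R} (h : y = 0 → x = 0) :
    ∃ k l : R, k ≠ 0 ∧ k * x = l * y := by
  by_cases hy : y = 0
  · exact ⟨1, 1, one_ne_zero, by rw [hy, h hy]⟩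
  · exact ⟨y, x, hy, mul_comm _ _⟩

/-- The Chinese remainder theorem, in terms of residue maps. -/
lemma exists_coords {m n : ℕ} (hN : N = m * n) (h : m.Coprime n) :
    ∃ (f : ZMod N →+* ZMod m) (g : ZMod N →+* ZMod n),
      (∀ x y, ∃ k, f k = x ∧ g k = y) ∧ ∀ z, f z = 0 → g z = 0 → z = 0 := by
  subst hN
  let E := ZMod.chineseRemainder h
  refine ⟨(RingHom.fst _ _).comp E.toRingHom, (RingHom.snd _ _).comp E.toRingHom,
    fun x y => ⟨E.symm (x, y), ?_, ?_⟩, fun z h1 h2 => ?_⟩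
  · simp
  · simp
  · have : E z = 0 := Prod.ext h1 h2
    simpa using this

/-- By the Chinese remainder theorem the multipliers in the exclusion principle can be chosen
residue by residue, and the only constraint is that those for `A` be nonzero modulo `p`, `q` and
those for `B` nonzero modulo `r`, `s`. -/
lemma Tile.per_pqrs {A B : Finset (ZMod N)} (h : Tile A B) {p q r s : ℕ} (hp : p.Prime)
    (hq : q.Prime) (hr : r.Prime) (hs : s.Prime) (hN : N = p * q * (r * s)) (hpq : p ≠ q)
    (hpr : p ≠ r) (hps : p ≠ s) (hqr : q ≠ r) (hqs : q ≠ s) (hrs : r ≠ s)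
    (hA : A.card = p * q) (hB : B.card = r * s) : Per A ∨ Per B := by
  have := Fact.mk hp
  have := Fact.mk hq
  have := Fact.mk hr
  have := Fact.mk hs
  have c₁ := (Nat.coprime_primes hp hq).2 hpq
  have c₂ := (Nat.coprime_primes hr hs).2 hrs
  have c₃ : (p * q).Coprime (r * s) := Nat.Coprime.mul_left
    (Nat.Coprime.mul_right ((Nat.coprime_primes hp hr).2 hpr) ((Nat.coprime_primes hp hs).2 hps))
    (Nat.Coprime.mul_right ((Nat.coprime_primes hq hr).2 hqr) ((Nat.coprime_primes hq hs).2 hqs))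
  have : NeZero (p * q) := ⟨Nat.mul_ne_zero hp.ne_zero hq.ne_zero⟩
  have : NeZero (r * s) := ⟨Nat.mul_ne_zero hr.ne_zero hs.ne_zero⟩
  obtain ⟨f₁, f₂, f₃, f₄, surj, inj⟩ : ∃ (f₁ : ZMod N →+* ZMod p) (f₂ : ZMod N →+* ZMod q)
      (f₃ : ZMod N →+* ZMod r) (f₄ : ZMod N →+* ZMod s),
      (∀ x y z w, ∃ k, f₁ k = x ∧ f₂ k = y ∧ f₃ k = z ∧ f₄ k = w) ∧
      ∀ z, f₁ z = 0 → f₂ z = 0 → f₃ z = 0 → f₄ z = 0 → z = 0 := by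
    obtain ⟨f, g, s1, i1⟩ := exists_coords hN c₃
    obtain ⟨f₁, f₂, s2, i2⟩ := exists_coords (N := p * q) rfl c₁
    obtain ⟨f₃, f₄, s3, i3⟩ := exists_coords (N := r * s) rfl c₂
    refine ⟨f₁.comp f, f₂.comp f, f₃.comp g, f₄.comp g, fun x y z w => ?_, fun z h1 h2 h3 h4 => ?_⟩
    · obtain ⟨u, rfl, rfl⟩ := s2 x y
      obtain ⟨v, rfl, rfl⟩ := s3 z w
      obtain ⟨k, rfl, rfl⟩ := s1 u v
      exact ⟨k, rfl, rfl, rfl, rfl⟩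
    · exact i1 z (i2 _ h1 h2) (i3 _ h3 h4)
  have inj' : ∀ x y, f₁ x = f₁ y → f₂ x = f₂ y → f₃ x = f₃ y → f₄ x = f₄ y → x = y := by
    intro x y h1 h2 h3 h4
    rw [← sub_eq_zero]
    apply inj <;> rwa [map_sub, sub_eq_zero]
  have F : ∀ a ∈ A, ∀ a' ∈ A, ∀ b ∈ B, ∀ b' ∈ B, (f₁ b = f₁ b' → f₁ a = f₁ a') →
      (f₂ b = f₂ b' → f₂ a = f₂ a') → (f₃ a = f₃ a' → f₃ b = f₃ b') →
      (f₄ a = f₄ a' → f₄ b = f₄ b') → a = a' ∧ b = b' := by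
    intro a ha a' ha' b hb b' hb' h1 h2 h3 h4
    obtain ⟨k₁, l₁, n₁, e₁⟩ := exists_mul_eq_mul (x := f₁ a - f₁ a') (y := f₁ b - f₁ b')
      (by simpa only [sub_eq_zero] using h1)
    obtain ⟨k₂, l₂, n₂, e₂⟩ := exists_mul_eq_mul (x := f₂ a - f₂ a') (y := f₂ b - f₂ b')
      (by simpa only [sub_eq_zero] using h2)
    obtain ⟨l₃, k₃, n₃, e₃⟩ := exists_mul_eq_mul (x := f₃ b - f₃ b') (y := f₃ a - f₃ a')
      (by simpa only [sub_eq_zero] using h3)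
    obtain ⟨l₄, k₄, n₄, e₄⟩ := exists_mul_eq_mul (x := f₄ b - f₄ b') (y := f₄ a - f₄ a')
      (by simpa only [sub_eq_zero] using h4)
    obtain ⟨k, rfl, rfl, rfl, rfl⟩ := surj k₁ k₂ k₃ k₄
    obtain ⟨l, rfl, rfl, rfl, rfl⟩ := surj l₁ l₂ l₃ l₄
    refine h.forb' (k := k) (l := l) ?_ ?_ ha ha' hb hb' ?_
    · rw [hA]
      exact Nat.Coprime.mul_right (coprime_of_map_ne_zero hp f₁ n₁)
        (coprime_of_map_ne_zero hq f₂ n₂)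
    · rw [hB]
      exact Nat.Coprime.mul_right (coprime_of_map_ne_zero hr f₃ n₃)
        (coprime_of_map_ne_zero hs f₄ n₄)
    · apply inj' <;> simp only [map_mul, map_sub]
      exacts [e₁, e₂, e₃.symm, e₄.symm]
  obtain ⟨a₀, ha₀⟩ : A.Nonempty := by
    rw [← Finset.card_pos, hA]; exact Nat.mul_pos hp.pos hq.pos
  obtain ⟨b₀, hb₀⟩ : B.Nonempty := by
    rw [← Finset.card_pos, hB]; exact Nat.mul_pos hr.pos hs.pos
  have sA : ∀ x y, ∃ a ∈ A, f₁ a = x ∧ f₂ a = y := by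
    intro x y
    obtain ⟨a, ha, e⟩ := exists_of_injOn (A := A) (f := fun a => (f₁ a, f₂ a)) (fun a ha a' ha' e =>
      (F a ha a' ha' b₀ hb₀ b₀ hb₀ (fun _ => congrArg Prod.fst e) (fun _ => congrArg Prod.snd e)
        (by simp) (by simp)).1) (by simp [hA, ZMod.card]) (x, y)
    exact ⟨a, ha, congrArg Prod.fst e, congrArg Prod.snd e⟩
  have sB : ∀ x y, ∃ b ∈ B, f₃ b = x ∧ f₄ b = y := by
    intro x y
    obtain ⟨b, hb, e⟩ := exists_of_injOn (A := B) (f := fun b => (f₃ b, f₄ b)) (fun b hb b' hb' e =>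
      (F a₀ ha₀ a₀ ha₀ b hb b' hb' (by simp) (by simp)
        (fun _ => congrArg Prod.fst e) (fun _ => congrArg Prod.snd e)).2)
      (by simp [hB, ZMod.card]) (x, y)
    exact ⟨b, hb, congrArg Prod.fst e, congrArg Prod.snd e⟩
  by_contra! hcon
  obtain ⟨nA, nB⟩ := hcon
  simp only [Per, not_exists, not_and, not_forall] at nA nB
  obtain ⟨w₁, u₁, u₂, u₃, u₄⟩ := surj 1 0 0 0
  obtain ⟨w₂, v₁, v₂, v₃, v₄⟩ := surj 0 1 0 0
  obtain ⟨w₃, x₁, x₂, x₃, x₄⟩ := surj 0 0 1 0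
  obtain ⟨w₄, y₁, y₂, y₃, y₄⟩ := surj 0 0 0 1
  have h₁ : ∃ a ∈ A, ∃ a' ∈ A, f₁ a ≠ f₁ a' ∧ f₂ a = f₂ a' ∧ (f₃ a ≠ f₃ a' ∨ f₄ a ≠ f₄ a') := by
    obtain ⟨a, ha, hn⟩ := nA w₁ (by rintro rfl; simp at u₁)
    obtain ⟨a', ha', e₁, e₂⟩ := sA (f₁ a + 1) (f₂ a)
    refine ⟨a, ha, a', ha', by simp [e₁], e₂.symm, ?_⟩
    by_contra! hc
    apply hn
    rwa [← inj' a' (a + w₁) (by simp [e₁, u₁]) (by simp [e₂, u₂]) (by simp [hc, u₃])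
      (by simp [hc, u₄])]
  have h₂ : ∃ a ∈ A, ∃ a' ∈ A, f₁ a = f₁ a' ∧ f₂ a ≠ f₂ a' ∧ (f₃ a ≠ f₃ a' ∨ f₄ a ≠ f₄ a') := by
    obtain ⟨a, ha, hn⟩ := nA w₂ (by rintro rfl; simp at v₂)
    obtain ⟨a', ha', e₁, e₂⟩ := sA (f₁ a) (f₂ a + 1)
    refine ⟨a, ha, a', ha', e₁.symm, by simp [e₂], ?_⟩
    by_contra! hc
    apply hn
    rwa [← inj' a' (a + w₂) (by simp [e₁, v₁]) (by simp [e₂, v₂]) (by simp [hc, v₃])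
      (by simp [hc, v₄])]
  have h₃ : ∃ b ∈ B, ∃ b' ∈ B, f₃ b ≠ f₃ b' ∧ f₄ b = f₄ b' ∧ (f₁ b ≠ f₁ b' ∨ f₂ b ≠ f₂ b') := by
    obtain ⟨b, hb, hn⟩ := nB w₃ (by rintro rfl; simp at x₃)
    obtain ⟨b', hb', e₁, e₂⟩ := sB (f₃ b + 1) (f₄ b)
    refine ⟨b, hb, b', hb', by simp [e₁], e₂.symm, ?_⟩
    by_contra! hc
    apply hn
    rwa [← inj' b' (b + w₃) (by simp [hc, x₁]) (by simp [hc, x₂]) (by simp [e₁, x₃])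
      (by simp [e₂, x₄])]
  have h₄ : ∃ b ∈ B, ∃ b' ∈ B, f₃ b = f₃ b' ∧ f₄ b ≠ f₄ b' ∧ (f₁ b ≠ f₁ b' ∨ f₂ b ≠ f₂ b') := by
    obtain ⟨b, hb, hn⟩ := nB w₄ (by rintro rfl; simp at y₄)
    obtain ⟨b', hb', e₁, e₂⟩ := sB (f₃ b) (f₄ b + 1)
    refine ⟨b, hb, b', hb', e₁.symm, by simp [e₂], ?_⟩
    by_contra! hc
    apply hn
    rwa [← inj' b' (b + w₄) (by simp [hc, y₁]) (by simp [hc, y₂]) (by simp [e₁, y₃])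
      (by simp [e₂, y₄])]
  obtain ⟨a, ha, a', ha', e₁, e₂, e₃ | e₄⟩ := h₁
  · -- the roles of `r` and `s` are exchanged
    refine core_pqrs (f₁ := f₁) (f₂ := f₂) (f₃ := f₄) (f₄ := f₃)
      (fun a ha a' ha' b hb b' hb' i1 i2 i3 i4 => F a ha a' ha' b hb b' hb' i1 i2 i4 i3) sA
      (fun x y => ?_) ⟨a, ha, a', ha', e₁, e₂, e₃⟩ ?_ ?_ ?_
    · obtain ⟨b, hb, i1, i2⟩ := sB y x
      exact ⟨b, hb, i2, i1⟩
    · obtain ⟨c, hc, c', hc', i1, i2, i3⟩ := h₂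
      exact ⟨c, hc, c', hc', i1, i2, i3.symm⟩
    · obtain ⟨b, hb, b', hb', i1, i2, i3⟩ := h₄
      exact ⟨b, hb, b', hb', i2, i1, i3⟩
    · obtain ⟨b, hb, b', hb', i1, i2, i3⟩ := h₃
      exact ⟨b, hb, b', hb', i2, i1, i3⟩
  · exact core_pqrs F sA sB ⟨a, ha, a', ha', e₁, e₂, e₄⟩ h₂ h₃ h₄
end

/-! ### One prime common to both factors -/

section
variable {N : ℕ} [NeZero N]

/-- Elements of `ZMod (p ^ 2)` of equal valuation (`0`, `1` or `2`, read off from the vanishing of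
the element and of its residue modulo `p`) have a common multiple by units. -/
lemma exists_unit_mul_eq {p : ℕ} [Fact p.Prime] (g : ZMod (p ^ 2) →+* ZMod p) {x y : ZMod (p ^ 2)}
    (h : x = 0 ↔ y = 0) (hg : g x = 0 ↔ g y = 0) :
    ∃ k l, g k ≠ 0 ∧ g l ≠ 0 ∧ k * x = l * y := by
  have hp : p.Prime := Fact.out
  have : NeZero (p ^ 2) := ⟨pow_ne_zero 2 hp.ne_zero⟩
  by_cases hx : x = 0
  · exact ⟨1, 1, by simp, by simp, by rw [hx, h.1 hx]⟩
  by_cases hgx : g x = 0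
  · have key : ∀ z : ZMod (p ^ 2), z ≠ 0 → g z = 0 → ∃ c : ZMod (p ^ 2), g c ≠ 0 ∧ z = p * c := by
      intro z hz hgz
      rw [map_eq_natCast_val, ZMod.natCast_eq_zero_iff] at hgz
      obtain ⟨c, hc⟩ := hgz
      have hz' : z = p * (c : ZMod (p ^ 2)) := by
        rw [← ZMod.natCast_zmod_val z, hc, Nat.cast_mul]
      refine ⟨c, fun h0 => hz ?_, hz'⟩
      rw [map_natCast, ZMod.natCast_eq_zero_iff] at h0
      obtain ⟨d, rfl⟩ := h0
      rw [hz', Nat.cast_mul, ← mul_assoc, ← Nat.cast_mul, ← pow_two, ZMod.natCast_self, zero_mul]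
    obtain ⟨x', hx', rfl⟩ := key x hx hgx
    obtain ⟨y', hy', rfl⟩ := key y (fun h0 => hx (h.2 h0)) (hg.1 hgx)
    exact ⟨y', x', hy', hx', by ring⟩
  · exact ⟨y, x, fun h0 => hgx (hg.2 h0), hgx, mul_comm _ _⟩

/-- The case `p²qr` when the residue modulo `q` of an element of `A` determines its residue modulo
`p` (hypothesis `hi`). Then `(f₂, c ∘ f₁)` is bijective on `A` and `(f₃, g ∘ f₁)` on `B`, where
`c` is the second digit in base `p`. Absence of periods of order `p` and `q` in `A` and of order
`r` in `B` yields differences that violate the exclusion principle `F`. -/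
lemma core_ppqr {A B : Finset (ZMod N)} {p q r : ℕ} [Fact p.Prime] [Fact q.Prime] [Fact r.Prime]
    (f₁ : ZMod N →+* ZMod (p ^ 2)) (f₂ : ZMod N →+* ZMod q) (f₃ : ZMod N →+* ZMod r)
    (g : ZMod (p ^ 2) →+* ZMod p)
    (surj : ∀ x y z, ∃ k, f₁ k = x ∧ f₂ k = y ∧ f₃ k = z)
    (inj : ∀ x y, f₁ x = f₁ y → f₂ x = f₂ y → f₃ x = f₃ y → x = y)
    (hA : A.card = p * q) (hB : B.card = p * r)
    (F : ∀ a ∈ A, ∀ a' ∈ A, ∀ b ∈ B, ∀ b' ∈ B, (f₁ a = f₁ a' ↔ f₁ b = f₁ b') →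
      (g (f₁ a) = g (f₁ a') ↔ g (f₁ b) = g (f₁ b')) → (f₂ b = f₂ b' → f₂ a = f₂ a') →
      (f₃ a = f₃ a' → f₃ b = f₃ b') → a = a' ∧ b = b')
    (hi : ∀ a ∈ A, ∀ a' ∈ A, f₂ a = f₂ a' → g (f₁ a) = g (f₁ a')) : Per A ∨ Per B := by
  have hp : p.Prime := Fact.out
  have hq : q.Prime := Fact.out
  have hr : r.Prime := Fact.out
  have : NeZero (p ^ 2) := ⟨pow_ne_zero 2 hp.ne_zero⟩
  obtain ⟨a₀, ha₀⟩ : A.Nonempty := by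
    rw [← Finset.card_pos, hA]; exact Nat.mul_pos hp.pos hq.pos
  obtain ⟨b₀, hb₀⟩ : B.Nonempty := by
    rw [← Finset.card_pos, hB]; exact Nat.mul_pos hp.pos hr.pos
  -- `c` is the second base `p` digit, so that `(g, c)` is injective
  let c : ZMod (p ^ 2) → ZMod p := fun x => ((x.val / p : ℕ) : ZMod p)
  have hc : ∀ x y, g x = g y → c x = c y → x = y := by
    intro x y h1 h2
    simp only [c] at h2
    rw [map_eq_natCast_val, map_eq_natCast_val, ZMod.natCast_eq_natCast_iff'] at h1
    rw [ZMod.natCast_eq_natCast_iff'] at h2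
    have hlt : ∀ z : ZMod (p ^ 2), z.val / p < p := fun z => by
      rw [Nat.div_lt_iff_lt_mul hp.pos, ← pow_two]; exact ZMod.val_lt z
    rw [Nat.mod_eq_of_lt (hlt x), Nat.mod_eq_of_lt (hlt y)] at h2
    apply ZMod.val_injective
    rw [← Nat.div_add_mod x.val p, ← Nat.div_add_mod y.val p, h1, h2]
  have sA' : ∀ x y, ∃ a ∈ A, f₂ a = x ∧ c (f₁ a) = y := by
    intro x y
    obtain ⟨a, ha, e⟩ := exists_of_injOn (A := A) (f := fun a => (f₂ a, c (f₁ a)))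
      (fun a ha a' ha' e => by
        have e₂ : f₂ a = f₂ a' := congrArg Prod.fst e
        have e₁ := hc _ _ (hi a ha a' ha' e₂) (congrArg Prod.snd e)
        exact (F a ha a' ha' b₀ hb₀ b₀ hb₀ (by simp [e₁]) (by simp [e₁]) (fun _ => e₂)
          (by simp)).1) (by simp [hA, ZMod.card, mul_comm]) (x, y)
    exact ⟨a, ha, congrArg Prod.fst e, congrArg Prod.snd e⟩
  -- over each residue modulo `q`, `f₁` maps `A` onto a full residue class modulo `p`
  have sA : ∀ a ∈ A, ∀ u, g u = 0 → ∃ a' ∈ A, f₂ a' = f₂ a ∧ f₁ a' = f₁ a + u := by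
    intro a ha u hu
    obtain ⟨a', ha', e₂, e₁⟩ := sA' (f₂ a) (c (f₁ a + u))
    exact ⟨a', ha', e₂, hc _ _ (by rw [hi a' ha' a ha e₂, map_add, hu, add_zero]) e₁⟩
  have hπ : g p = 0 := by simp
  have hπ0 : (p : ZMod (p ^ 2)) ≠ 0 := by
    rw [Ne, ZMod.natCast_eq_zero_iff]
    intro h
    have h1 := Nat.le_of_dvd hp.pos h
    have h2 := hp.two_le
    nlinarith
  have sB : ∀ x y, ∃ b ∈ B, f₃ b = x ∧ g (f₁ b) = y := by
    intro x y
    obtain ⟨b, hb, e⟩ := exists_of_injOn (A := B) (f := fun b => (f₃ b, g (f₁ b)))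
      (fun b hb b' hb' e => by
        have e₃ : f₃ b = f₃ b' := congrArg Prod.fst e
        have e₁ : g (f₁ b) = g (f₁ b') := congrArg Prod.snd e
        by_cases e₄ : f₁ b = f₁ b'
        · exact (F a₀ ha₀ a₀ ha₀ b hb b' hb' (by simp [e₄]) (by simp [e₁]) (by simp)
            (fun _ => e₃)).2
        · obtain ⟨a', ha', i₂, i₁⟩ := sA a₀ ha₀ p hπ
          exact (F a₀ ha₀ a' ha' b hb b' hb' (by simp [i₁, e₄, hπ0])
            (by simp [i₁, e₁]) (fun _ => i₂.symm) (fun _ => e₃)).2)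
      (by simp [hB, ZMod.card, mul_comm]) (x, y)
    exact ⟨b, hb, congrArg Prod.fst e, congrArg Prod.snd e⟩
  by_contra! hcon
  obtain ⟨nA, nB⟩ := hcon
  simp only [Per, not_exists, not_and, not_forall] at nA nB
  obtain ⟨w₁, u₁, u₂, u₃⟩ := surj p 0 0
  obtain ⟨w₂, v₁, v₂, v₃⟩ := surj 0 1 0
  obtain ⟨w₃, x₁, x₂, x₃⟩ := surj 0 0 1
  obtain ⟨a, ha, a', ha', i₁, i₂, i₃⟩ :
      ∃ a ∈ A, ∃ a' ∈ A, f₁ a' = f₁ a + p ∧ f₂ a' = f₂ a ∧ f₃ a' ≠ f₃ a := by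
    obtain ⟨a, ha, hn⟩ := nA w₁ (by rintro rfl; rw [map_zero] at u₁; exact hπ0 u₁.symm)
    obtain ⟨a', ha', e₂, e₁⟩ := sA a ha p hπ
    refine ⟨a, ha, a', ha', e₁, e₂, fun e₃ => hn ?_⟩
    rwa [← inj a' (a + w₁) (by simp [e₁, u₁]) (by simp [e₂, u₂]) (by simp [e₃, u₃])]
  have ig : g (f₁ a') = g (f₁ a) := by simp [i₁]
  obtain ⟨b, hb, b', hb', j₁, j₂, j₃⟩ :
      ∃ b ∈ B, ∃ b' ∈ B, f₁ b' = f₁ b ∧ f₂ b' ≠ f₂ b ∧ f₃ b' ≠ f₃ b := by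
    obtain ⟨b, hb, hn⟩ := nB w₃ (by rintro rfl; simp at x₃)
    obtain ⟨b', hb', e₃, eg⟩ := sB (f₃ b + 1) (g (f₁ b))
    have e₁ : f₁ b' = f₁ b := by
      by_contra e₁
      have := (F a ha a' ha' b hb b' hb' (by simp [i₁, hπ0, Ne.symm e₁]) (by simp [ig, eg])
        (fun _ => i₂.symm) (fun e => absurd e.symm i₃)).1
      exact i₃ (by rw [this])
    refine ⟨b, hb, b', hb', e₁, fun e₂ => hn ?_, by simp [e₃]⟩
    rwa [← inj b' (b + w₃) (by simp [e₁, x₁]) (by simp [e₂, x₂]) (by simp [e₃, x₃])]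
  obtain ⟨a₃, ha₃, k₁⟩ : ∃ a₃ ∈ A, g (f₁ a₃) ≠ g (f₁ a) := by
    by_contra! hall
    obtain ⟨a₁, ha₁, hn⟩ := nA w₂ (by rintro rfl; simp at v₂)
    obtain ⟨d, hd, e₂, -⟩ := sA' (f₂ a₁ + 1) 0
    obtain ⟨a₂, ha₂, i₂, i₁⟩ := sA d hd (f₁ a₁ - f₁ d) (by
      rw [map_sub, hall d hd, hall a₁ ha₁, sub_self])
    rw [add_sub_cancel] at i₁
    rw [e₂] at i₂
    have i₃ : f₃ a₂ = f₃ a₁ := by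
      by_contra i₃
      exact i₃ (by rw [(F a₁ ha₁ a₂ ha₂ b hb b' hb' (by simp [i₁, j₁]) (by simp [i₁, j₁])
        (fun e => absurd e.symm j₂) (fun e => absurd e.symm i₃)).1])
    apply hn
    rwa [← inj a₂ (a₁ + w₂) (by simp [i₁, v₁]) (by simp [i₂, v₂]) (by simp [i₃, v₃])]
  obtain ⟨a₄, ha₄, k₃, k₄⟩ : ∃ a₄ ∈ A, g (f₁ a₄) = g (f₁ a) ∧ f₃ a₄ ≠ f₃ a₃ := by
    by_cases e : f₃ a = f₃ a₃
    · exact ⟨a', ha', ig, e ▸ i₃⟩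
    · exact ⟨a, ha, rfl, e⟩
  obtain ⟨b₃, hb₃, -, l₁⟩ := sB 0 (g (f₁ b) + 1)
  obtain ⟨b₄, hb₄, l₃, l₄⟩ : ∃ b₄ ∈ B, g (f₁ b₄) = g (f₁ b) ∧ f₂ b₄ ≠ f₂ b₃ := by
    by_cases e : f₂ b = f₂ b₃
    · exact ⟨b', hb', by rw [j₁], e ▸ j₂⟩
    · exact ⟨b, hb, rfl, e⟩
  -- two differences that are units modulo `p`, with the one in `B` nonzero modulo `q` and the one
  -- in `A` nonzero modulo `r`
  have ng : g (f₁ a₃) ≠ g (f₁ a₄) := by rwa [k₃]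
  have ng' : g (f₁ b₃) ≠ g (f₁ b₄) := by rw [l₃, l₁]; simp
  have n1 : f₁ a₃ ≠ f₁ a₄ := fun e => ng (by rw [e])
  have n2 : f₁ b₃ ≠ f₁ b₄ := fun e => ng' (by rw [e])
  exact k₄ (by rw [(F a₃ ha₃ a₄ ha₄ b₃ hb₃ b₄ hb₄ (by simp [n1, n2]) (by simp [ng, ng'])
    (fun e => absurd e.symm l₄) (fun e => absurd e.symm k₄)).1])

/-- Differences with nonzero residue modulo `p` and equal residues modulo `q` in `A`, modulo `r` in
`B`, cannot occur on both sides; so, up to exchanging `A` and `B`, the previous lemma applies. -/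
lemma Tile.per_ppqr {A B : Finset (ZMod N)} (h : Tile A B) {p q r : ℕ} (hp : p.Prime)
    (hq : q.Prime) (hr : r.Prime) (hN : N = p * q * (p * r)) (hpq : p ≠ q)
    (hpr : p ≠ r) (hqr : q ≠ r)
    (hA : A.card = p * q) (hB : B.card = p * r) : Per A ∨ Per B := by
  have := Fact.mk hp
  have := Fact.mk hq
  have := Fact.mk hr
  have c₁ := (Nat.coprime_primes hq hr).2 hqr
  have c₂ : (p ^ 2).Coprime (q * r) := Nat.Coprime.pow_left 2
    (Nat.Coprime.mul_right ((Nat.coprime_primes hp hq).2 hpq) ((Nat.coprime_primes hp hr).2 hpr))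
  have : NeZero (p ^ 2) := ⟨pow_ne_zero 2 hp.ne_zero⟩
  have : NeZero (q * r) := ⟨Nat.mul_ne_zero hq.ne_zero hr.ne_zero⟩
  obtain ⟨f₁, f₂, f₃, surj, inj⟩ : ∃ (f₁ : ZMod N →+* ZMod (p ^ 2)) (f₂ : ZMod N →+* ZMod q)
      (f₃ : ZMod N →+* ZMod r),
      (∀ x y z, ∃ k, f₁ k = x ∧ f₂ k = y ∧ f₃ k = z) ∧
      ∀ z, f₁ z = 0 → f₂ z = 0 → f₃ z = 0 → z = 0 := by
    obtain ⟨f, g, s1, i1⟩ := exists_coords (N := N) (by rw [hN]; ring) c₂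
    obtain ⟨f₂, f₃, s2, i2⟩ := exists_coords (N := q * r) rfl c₁
    refine ⟨f, f₂.comp g, f₃.comp g, fun x y z => ?_, fun z h1 h2 h3 => ?_⟩
    · obtain ⟨v, rfl, rfl⟩ := s2 y z
      obtain ⟨k, rfl, rfl⟩ := s1 x v
      exact ⟨k, rfl, rfl, rfl⟩
    · exact i1 z h1 (i2 _ h2 h3)
  have inj' : ∀ x y, f₁ x = f₁ y → f₂ x = f₂ y → f₃ x = f₃ y → x = y := by
    intro x y h1 h2 h3
    rw [← sub_eq_zero]
    apply inj <;> rwa [map_sub, sub_eq_zero]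
  set g : ZMod (p ^ 2) →+* ZMod p := ZMod.castHom (dvd_pow_self p two_ne_zero) _
  have F : ∀ a ∈ A, ∀ a' ∈ A, ∀ b ∈ B, ∀ b' ∈ B, (f₁ a = f₁ a' ↔ f₁ b = f₁ b') →
      (g (f₁ a) = g (f₁ a') ↔ g (f₁ b) = g (f₁ b')) → (f₂ b = f₂ b' → f₂ a = f₂ a') →
      (f₃ a = f₃ a' → f₃ b = f₃ b') → a = a' ∧ b = b' := by
    intro a ha a' ha' b hb b' hb' h1 hg h2 h3
    obtain ⟨k₁, l₁, n₁, n₁', e₁⟩ := exists_unit_mul_eq g (x := f₁ a - f₁ a') (y := f₁ b - f₁ b')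
      (by simpa only [sub_eq_zero] using h1) (by simpa only [map_sub, sub_eq_zero] using hg)
    obtain ⟨k₂, l₂, n₂, e₂⟩ := exists_mul_eq_mul (x := f₂ a - f₂ a') (y := f₂ b - f₂ b')
      (by simpa only [sub_eq_zero] using h2)
    obtain ⟨l₃, k₃, n₃, e₃⟩ := exists_mul_eq_mul (x := f₃ b - f₃ b') (y := f₃ a - f₃ a')
      (by simpa only [sub_eq_zero] using h3)
    obtain ⟨k, rfl, rfl, rfl⟩ := surj k₁ k₂ k₃
    obtain ⟨l, rfl, rfl, rfl⟩ := surj l₁ l₂ l₃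
    refine h.forb' (k := k) (l := l) ?_ ?_ ha ha' hb hb' ?_
    · rw [hA]
      exact Nat.Coprime.mul_right (coprime_of_map_ne_zero hp (g.comp f₁) n₁)
        (coprime_of_map_ne_zero hq f₂ n₂)
    · rw [hB]
      exact Nat.Coprime.mul_right (coprime_of_map_ne_zero hp (g.comp f₁) n₁')
        (coprime_of_map_ne_zero hr f₃ n₃)
    · apply inj' <;> simp only [map_mul, map_sub]
      exacts [e₁, e₂, e₃.symm]
  by_cases hi : ∀ a ∈ A, ∀ a' ∈ A, f₂ a = f₂ a' → g (f₁ a) = g (f₁ a')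
  · exact core_ppqr f₁ f₂ f₃ g surj inj' hA hB F hi
  by_cases hii : ∀ b ∈ B, ∀ b' ∈ B, f₃ b = f₃ b' → g (f₁ b) = g (f₁ b')
  · refine (core_ppqr f₁ f₃ f₂ g (fun x y z => ?_) (fun x y h1 h2 h3 => inj' x y h1 h3 h2) hB hA
      (fun b hb b' hb' a ha a' ha' h1 h2 h3 h4 =>
        (F a ha a' ha' b hb b' hb' h1.symm h2.symm h4 h3).symm) hii).symm
    obtain ⟨k, e₁, e₂, e₃⟩ := surj x z y
    exact ⟨k, e₁, e₃, e₂⟩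
  push Not at hi hii
  obtain ⟨a, ha, a', ha', e₂, eg⟩ := hi
  obtain ⟨b, hb, b', hb', e₃, eg'⟩ := hii
  have n1 : f₁ a ≠ f₁ a' := fun e => eg (by rw [e])
  have n2 : f₁ b ≠ f₁ b' := fun e => eg' (by rw [e])
  exact absurd (congrArg f₁ (F a ha a' ha' b hb b' hb' (by simp [n1, n2]) (by simp [eg, eg'])
    (fun _ => e₂) (fun _ => e₃)).1) n1
end

/-! ### From canons to Vuza orders -/

section
variable {N : ℕ} [NeZero N]

lemma Tile.per_of_shared_prime {A B : Finset (ZMod N)} (h : Tile A B) {p q s : ℕ} (hp : p.Prime)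
    (hq : q.Prime) (hs : s.Prime) (hN : N = p * q * (p * s)) (hpq : p ≠ q) (hps : p ≠ s)
    (hA : A.card = p * q) (hB : B.card = p * s) : Per A ∨ Per B := by
  by_cases hqs : q = s
  · subst hqs
    exact h.per_pqpq hp hq hN hA hB
  · exact h.per_ppqr hp hq hs hN hpq hps hqs hA hB

lemma Tile.per_of_two_primes {A B : Finset (ZMod N)} (h : Tile A B) {p q r s : ℕ} (hp : p.Prime)
    (hq : q.Prime) (hr : r.Prime) (hs : s.Prime) (hpq : p ≠ q) (hrs : r ≠ s)
    (hA : A.card = p * q) (hB : B.card = r * s) : Per A ∨ Per B := by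
  have hN : N = p * q * (r * s) := by rw [← hA, ← hB, h.card, ZMod.card]
  have hA' : A.card = q * p := by rw [hA, mul_comm]
  have hB' : B.card = s * r := by rw [hB, mul_comm]
  by_cases hpr : p = r
  · subst hpr
    exact h.per_of_shared_prime hp hq hs hN hpq hrs hA hB
  by_cases hps : p = s
  · subst hps
    exact h.per_of_shared_prime hp hq hr (by rw [hN]; ring) hpq hrs.symm hA hB'
  by_cases hqr : q = r
  · subst hqr
    exact h.per_of_shared_prime hq hp hs (by rw [hN]; ring) hpq.symm hrs hA' hB
  by_cases hqs : q = s
  · subst hqs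
    exact h.per_of_shared_prime hq hp hr (by rw [hN]; ring) hpq.symm hrs.symm hA' hB'
  exact h.per_pqrs hp hq hr hs hN hpq hpr hps hqr hqs hrs hA hB

/-- A number that is not a prime power is divisible by two distinct primes. -/
lemma exists_two_primes {a : ℕ} (ha : a ≠ 0) (h : ∀ p j, p.Prime → a ≠ p ^ j) :
    ∃ p q c, p.Prime ∧ q.Prime ∧ p ≠ q ∧ a = p * q * c := by
  have h1 : a ≠ 1 := by simpa using h 2 0 Nat.prime_two
  have hp := Nat.minFac_prime h1
  obtain ⟨k, m, hm, e⟩ := Nat.exists_eq_pow_mul_and_not_dvd ha a.minFac hp.ne_one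
  have hk : k ≠ 0 := by
    rintro rfl
    rw [pow_zero, one_mul] at e
    exact hm (e ▸ Nat.minFac_dvd a)
  have hm1 : m ≠ 1 := by
    rintro rfl
    exact h _ _ hp (by rw [mul_one] at e; exact e)
  have hq := Nat.minFac_prime hm1
  obtain ⟨d, hd⟩ := Nat.minFac_dvd m
  obtain ⟨k, rfl⟩ := Nat.exists_eq_succ_of_ne_zero hk
  refine ⟨a.minFac, m.minFac, a.minFac ^ k * d, hp, hq, fun e' => hm ?_, ?_⟩
  · rw [e']; exact Nat.minFac_dvd m
  · conv_lhs => rw [e, hd]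
    rw [pow_succ]; ring

/-- `N` is a Vuza order: `N = n₁ n₂ n₃ p₁ p₂` with `p₁ ≠ p₂` prime, `n₁, n₂, n₃ ≥ 2` and `n₁ p₁`
coprime to `n₂ p₂`. -/
def IsVuzaOrder (N : ℕ) : Prop :=
  ∃ p₁ p₂ n₁ n₂ n₃ : ℕ, Nat.Prime p₁ ∧ Nat.Prime p₂ ∧ p₁ ≠ p₂ ∧
    2 ≤ n₁ ∧ 2 ≤ n₂ ∧ 2 ≤ n₃ ∧ N = n₁ * n₂ * n₃ * p₁ * p₂ ∧
    Nat.gcd (n₁ * p₁) (n₂ * p₂) = 1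

/-- Grouping the four primes into two coprime pairs. -/
lemma isVuzaOrder_of_primes {p q r s c : ℕ} (hp : p.Prime)
    (hq : q.Prime) (hr : r.Prime) (hs : s.Prime) (hpq : p ≠ q) (hrs : r ≠ s) (hc : 2 ≤ c) :
    IsVuzaOrder (p * q * (r * s) * c) := by
  have cop : ∀ {x y z w : ℕ}, x.Prime → y.Prime → z.Prime → w.Prime → x ≠ z → x ≠ w → y ≠ z →
      y ≠ w → Nat.gcd (x * y) (z * w) = 1 := by
    intro x y z w hx hy hz hw h1 h2 h3 h4
    exact Nat.Coprime.mul_left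
      (Nat.Coprime.mul_right ((Nat.coprime_primes hx hz).2 h1) ((Nat.coprime_primes hx hw).2 h2))
      (Nat.Coprime.mul_right ((Nat.coprime_primes hy hz).2 h3) ((Nat.coprime_primes hy hw).2 h4))
  -- a prime common to both pairs is put together with itself
  by_cases hpr : p = r
  · subst hpr
    exact ⟨p, q, p, s, c, hp, hq, hpq, hp.two_le, hs.two_le, hc, by ring,
      cop hp hp hs hq hrs hpq hrs hpq⟩
  by_cases hps : p = s
  · subst hps
    exact ⟨p, q, p, r, c, hp, hq, hpq, hp.two_le, hr.two_le, hc, by ring,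
      cop hp hp hr hq hrs.symm hpq hrs.symm hpq⟩
  by_cases hqr : q = r
  · subst hqr
    exact ⟨q, p, q, s, c, hq, hp, hpq.symm, hq.two_le, hs.two_le, hc, by ring,
      cop hq hq hs hp hrs hpq.symm hrs hpq.symm⟩
  by_cases hqs : q = s
  · subst hqs
    exact ⟨q, p, q, r, c, hq, hp, hpq.symm, hq.two_le, hr.two_le, hc, by ring,
      cop hq hq hr hp hrs.symm hpq.symm hrs.symm hpq.symm⟩
  exact ⟨p, r, q, s, c, hp, hr, hpr, hq.two_le, hs.two_le, hc, by ring,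
    cop hq hp hs hr hqs hqr hps hpr⟩

lemma Tile.isVuzaOrder {A B : Finset (ZMod N)} (h : Tile A B) (hN : 2 ≤ N) (nA : ¬ Per A)
    (nB : ¬ Per B) : IsVuzaOrder N := by
  have hcard := h.card
  rw [ZMod.card] at hcard
  have hne : A.card * B.card ≠ 0 := by omega
  obtain ⟨p, q, c, hp, hq, hpq, eA⟩ := exists_two_primes (left_ne_zero_of_mul hne)
    (fun p j hp e => (h.per_of_prime_pow hN hp e).elim nA nB)
  obtain ⟨r, s, d, hr, hs, hrs, eB⟩ := exists_two_primes (right_ne_zero_of_mul hne)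
    (fun p j hp e => (h.symm.per_of_prime_pow hN hp e).elim nB nA)
  have e : N = p * q * (r * s) * (c * d) := by rw [← hcard, eA, eB]; ring
  have hcd0 : c * d ≠ 0 := by rintro h0; rw [h0] at e; omega
  by_cases hcd : c * d = 1
  · obtain ⟨rfl, rfl⟩ := mul_eq_one.1 hcd
    rw [mul_one] at eA eB
    exact ((h.per_of_two_primes hp hq hr hs hpq hrs eA eB).elim nA nB).elim
  · rw [e]
    exact isVuzaOrder_of_primes hp hq hr hs hpq hrs (by omega)

lemma IsVuzaCanon.isVuzaOrder {S R : Set (ZMod N)} (h : IsVuzaCanon S R) (hN : 2 ≤ N) :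
    IsVuzaOrder N := by
  classical
  obtain ⟨⟨-, -, h⟩, nS, nR⟩ := h
  have per : ∀ T : Set (ZMod N), ¬ IsPeriodic T → ¬ Per T.toFinset := by
    rintro T hT ⟨w, hw0, hw⟩
    refine hT ⟨w, hw0, Set.eq_of_subset_of_ncard_le ?_ ?_⟩
    · rintro _ ⟨x, hx, rfl⟩
      simpa [add_comm] using hw x (by simpa using hx)
    · exact (Set.ncard_image_of_injective T (add_right_injective w)).ge
  refine Tile.isVuzaOrder (A := S.toFinset) (B := R.toFinset) ⟨?_, fun g => ?_⟩ hN (per S nS)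
    (per R nR)
  · intro a ha a' ha' b hb b' hb' e
    simp only [Set.mem_toFinset] at ha ha' hb hb'
    have := (h (a + b)).unique (y₁ := (a, b)) (y₂ := (a', b')) ⟨ha, hb, rfl⟩ ⟨ha', hb', e.symm⟩
    exact Prod.mk.inj this
  · obtain ⟨⟨s, r⟩, ⟨hs, hr, e⟩, -⟩ := h g
    exact ⟨s, by simpa using hs, r, by simpa using hr, e⟩
end

/-! ### Construction of Vuza canons -/

/-- The subset of `X × Y` obtained from the subgroup `U × V` by moving its slice over `0 ∈ X` to
the coset `y + V`. -/
def twist {X Y : Type*} [AddCommGroup X] [AddCommGroup Y] (U : AddSubgroup X) (V : AddSubgroup Y)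
    (y : Y) : Set (X × Y) :=
  {z | z.1 ∈ U ∧ (z.1 = 0 → z.2 - y ∈ V) ∧ (z.1 ≠ 0 → z.2 ∈ V)}

section
variable {X Y : Type*} [AddCommGroup X] [AddCommGroup Y] {U : AddSubgroup X} {V : AddSubgroup Y}

/-- If `T₁`, `T₂` are transversals of `U`, `V`, then `T₁ × T₂` is a complement of the twisted
subgroup. -/
lemma existsUnique_twist {T₁ : Set X} {T₂ : Set Y} (h₁ : ∀ x, ∃! t, t ∈ T₁ ∧ x - t ∈ U)
    (h₂ : ∀ y, ∃! t, t ∈ T₂ ∧ y - t ∈ V) (y : Y) (z : X × Y) :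
    ∃! t : X × Y, t.1 ∈ T₁ ∧ t.2 ∈ T₂ ∧ z - t ∈ twist U V y := by
  obtain ⟨a, b⟩ := z
  obtain ⟨t, ⟨ht, hat⟩, ut⟩ := h₁ a
  by_cases h0 : a - t = 0
  · obtain ⟨s, ⟨hs, hbs⟩, us⟩ := h₂ (b - y)
    refine ⟨(t, s), ⟨ht, hs, hat, fun _ => ?_, fun hn => absurd h0 hn⟩, ?_⟩
    · simpa [sub_right_comm] using hbs
    · rintro ⟨t', s'⟩ ⟨ht', hs', h1, h2, -⟩
      obtain rfl := ut t' ⟨ht', h1⟩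
      obtain rfl := us s' ⟨hs', by simpa [sub_right_comm] using h2 h0⟩
      rfl
  · obtain ⟨s, ⟨hs, hbs⟩, us⟩ := h₂ b
    refine ⟨(t, s), ⟨ht, hs, hat, fun hn => absurd hn h0, fun _ => hbs⟩, ?_⟩
    rintro ⟨t', s'⟩ ⟨ht', hs', h1, -, h2⟩
    obtain rfl := ut t' ⟨ht', h1⟩
    obtain rfl := us s' ⟨hs', h2 h0⟩
    rfl

/-- The elements of `V` remain periods of the twist. -/
lemma twist_add_mem {y v : Y} (hv : v ∈ V) {z : X × Y} (hz : z ∈ twist U V y) :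
    z + (0, v) ∈ twist U V y := by
  obtain ⟨h1, h2, h3⟩ := hz
  refine ⟨by simpa using h1, fun h => ?_, fun h => ?_⟩
  · have := V.add_mem (h2 (by simpa using h)) hv
    simpa [add_sub_right_comm] using this
  · simpa using V.add_mem (h3 (by simpa using h)) hv

lemma mem_twist (y : Y) : ((0, y) : X × Y) ∈ twist U V y :=
  ⟨U.zero_mem, fun _ => by simp, fun h => absurd rfl h⟩

end

/-- The Vuza–Hajós construction. In the factorization of the subgroup `ι (X × Y)` by `T₁ × T₂`,
the complement is twisted over the zero coset in one direction and over the
remaining cosets in the other, so that no period survives. -/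
lemma exists_isVuzaCanon {G X Y Q : Type*} [AddCommGroup G] [AddCommGroup X] [AddCommGroup Y]
    [AddCommGroup Q] [Nontrivial Q] (ι : X × Y →+ G) (hι : Function.Injective ι) (π : G →+ Q)
    (hπ : Function.Surjective π) (hker : ∀ g, π g = 0 ↔ ∃ z, ι z = g)
    {U : AddSubgroup X} {V : AddSubgroup Y} {T₁ : Set X} {T₂ : Set Y}
    (h₁ : ∀ x, ∃! t, t ∈ T₁ ∧ x - t ∈ U) (h₂ : ∀ y, ∃! t, t ∈ T₂ ∧ y - t ∈ V)
    (n₁ : ¬ IsPeriodic T₁) (n₂ : ¬ IsPeriodic T₂) (hU : ∃ u ∈ U, u ≠ 0) (hV : ∃ v ∈ V, v ≠ 0)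
    (hx : ∃ x, x ∉ U) (hy : ∃ y, y ∉ V) : ∃ S R : Set G, IsVuzaCanon S R := by
  classical
  obtain ⟨u, hu, hu0⟩ := hU
  obtain ⟨v, hv, hv0⟩ := hV
  obtain ⟨x₁, hx₁⟩ := hx
  obtain ⟨y₁, hy₁⟩ := hy
  obtain ⟨q₁, hq₁⟩ := exists_ne (0 : Q)
  choose σ hσ using hπ
  have hπι : ∀ z, π (ι z) = 0 := fun z => (hker _).2 ⟨z, rfl⟩
  let C : Q → Set (X × Y) := fun q => if q = 0 then twist U V y₁ else Prod.swap ⁻¹' twist V U x₁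
  have C0 : C 0 = twist U V y₁ := by simp [C]
  have C1 : ∀ q, q ≠ 0 → C q = Prod.swap ⁻¹' twist V U x₁ := fun q hq => by simp [C, hq]
  let S : Set G := ι '' (T₁ ×ˢ T₂)
  let R : Set G := {g | ∃ z ∈ C (π g), g = σ (π g) + ι z}
  have memR : ∀ q z, σ q + ι z ∈ R ↔ z ∈ C q := by
    intro q z
    have e : π (σ q + ι z) = q := by rw [map_add, hσ, hπι, add_zero]
    simp only [R, Set.mem_ofPred_eq, e]
    constructor
    · rintro ⟨z', hz', e'⟩
      rwa [hι (add_left_cancel e')]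
    · exact fun h => ⟨z, h, rfl⟩
  have coord : ∀ g, ∃ z, g = σ (π g) + ι z := by
    intro g
    obtain ⟨z, hz⟩ := (hker (g - σ (π g))).1 (by rw [map_sub, hσ, sub_self])
    exact ⟨z, by rw [hz]; abel⟩
  have tile : ∀ q z, ∃! t : X × Y, t.1 ∈ T₁ ∧ t.2 ∈ T₂ ∧ z - t ∈ C q := by
    intro q z
    by_cases hq : q = 0
    · subst hq; rw [C0]; exact existsUnique_twist h₁ h₂ y₁ z
    · rw [C1 q hq]
      obtain ⟨t, ⟨a, b, c⟩, ut⟩ := existsUnique_twist h₂ h₁ x₁ z.swap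
      refine ⟨t.swap, ⟨b, a, c⟩, fun t' ht' => ?_⟩
      rw [← ut t'.swap ⟨ht'.2.1, ht'.1, ht'.2.2⟩, Prod.swap_swap]
  obtain ⟨t₁, ⟨ht₁, -⟩, -⟩ := h₁ 0
  obtain ⟨t₂, ⟨ht₂, -⟩, -⟩ := h₂ 0
  have memC0 : ((0, y₁) : X × Y) ∈ C 0 := by rw [C0]; exact mem_twist y₁
  have memC1 : ((x₁, 0) : X × Y) ∈ C q₁ := by rw [C1 _ hq₁]; exact mem_twist (U := V) x₁
  refine ⟨S, R, ⟨⟨_, (t₁, t₂), ⟨ht₁, ht₂⟩, rfl⟩, ⟨_, (memR 0 (0, y₁)).2 memC0⟩, fun g => ?_⟩, ?_, ?_⟩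
  · obtain ⟨z, hz⟩ := coord g
    obtain ⟨t, ⟨a, b, c⟩, ut⟩ := tile (π g) z
    refine ⟨(ι t, σ (π g) + ι (z - t)), ⟨⟨t, ⟨a, b⟩, rfl⟩, (memR _ _).2 c, ?_⟩, ?_⟩
    · change ι t + (σ (π g) + ι (z - t)) = g
      conv_rhs => rw [hz]
      rw [map_sub]; abel
    · rintro ⟨_, r⟩ ⟨⟨t', ht', rfl⟩, hr, e⟩
      simp only at hr e
      have er : r = σ (π g) + ι (z - t') := by
        rw [map_sub, ← add_sub_assoc, ← hz, ← e]; abel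
      rw [er] at hr ⊢
      rw [ut t' ⟨ht'.1, ht'.2, (memR _ _).1 hr⟩]
  · rintro ⟨g, hg0, hg⟩
    obtain ⟨⟨x, y⟩, rfl⟩ : ∃ z, ι z = g := by
      rw [← hker]
      have h : g + ι (t₁, t₂) ∈ S := hg ▸ ⟨_, ⟨_, ⟨ht₁, ht₂⟩, rfl⟩, rfl⟩
      obtain ⟨t, -, e⟩ := h
      have := congrArg π e
      rwa [map_add, hπι, hπι, add_zero, eq_comm] at this
    have fwd : ∀ s₁ ∈ T₁, ∀ s₂ ∈ T₂, x + s₁ ∈ T₁ ∧ y + s₂ ∈ T₂ := by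
      intro s₁ hs₁ s₂ hs₂
      have h : ι (x, y) + ι (s₁, s₂) ∈ S := hg ▸ ⟨_, ⟨_, ⟨hs₁, hs₂⟩, rfl⟩, rfl⟩
      obtain ⟨t, ht, e⟩ := h
      rw [← map_add] at e
      obtain rfl := hι e
      exact ht
    have bwd : ∀ s₁ ∈ T₁, ∀ s₂ ∈ T₂, ∃ t₁ ∈ T₁, ∃ t₂ ∈ T₂, x + t₁ = s₁ ∧ y + t₂ = s₂ := by
      intro s₁ hs₁ s₂ hs₂
      have h : ι (s₁, s₂) ∈ (fun x' => ι (x, y) + x') '' S := by rw [hg]; exact ⟨_, ⟨hs₁, hs₂⟩, rfl⟩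
      obtain ⟨_, ⟨t, ht, rfl⟩, e⟩ := h
      simp only [← map_add] at e
      have := hι e
      exact ⟨t.1, ht.1, t.2, ht.2, congrArg Prod.fst this, congrArg Prod.snd this⟩
    have hx0 : x = 0 := by
      by_contra hx0
      refine n₁ ⟨x, hx0, Set.Subset.antisymm ?_ fun s hs => ?_⟩
      · rintro _ ⟨s, hs, rfl⟩
        exact (fwd s hs t₂ ht₂).1
      · obtain ⟨t, ht, -, -, e, -⟩ := bwd s hs t₂ ht₂
        exact ⟨t, ht, e⟩
    have hy0 : y = 0 := by
      by_contra hy0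
      refine n₂ ⟨y, hy0, Set.Subset.antisymm ?_ fun s hs => ?_⟩
      · rintro _ ⟨s, hs, rfl⟩
        exact (fwd t₁ ht₁ s hs).2
      · obtain ⟨-, -, t, ht, -, e⟩ := bwd t₁ ht₁ s hs
        exact ⟨t, ht, e⟩
    apply hg0
    rw [hx0, hy0]
    exact map_zero ι
  · rintro ⟨g, hg0, hg⟩
    have inv : ∀ r, g + r ∈ R ↔ r ∈ R := by
      intro r
      conv_lhs => rw [← hg]
      constructor
      · rintro ⟨r', hr', e⟩
        rwa [← add_left_cancel e]
      · exact fun h => ⟨r, h, rfl⟩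
    by_cases hc : π g = 0
    · obtain ⟨⟨x, y⟩, rfl⟩ := (hker g).1 hc
      have invC : ∀ q z, (x, y) + z ∈ C q ↔ z ∈ C q := by
        intro q z
        rw [← memR, ← memR, map_add, add_left_comm, inv]
      have i0 := (invC 0 _).2 memC0
      have i1 := (invC q₁ _).2 memC1
      rw [C0] at i0
      rw [C1 _ hq₁] at i1
      obtain ⟨a1, -, a3⟩ := i0
      obtain ⟨b1, -, b3⟩ := i1
      simp only [Prod.mk_add_mk, Prod.swap_prod_mk, add_zero] at a1 a3 b1 b3
      have hx0 : x = 0 := by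
        by_contra hx0
        exact hy₁ ((V.add_mem_cancel_left b1).1 (a3 hx0))
      have hy0 : y = 0 := by
        by_contra hy0
        exact hx₁ ((U.add_mem_cancel_left a1).1 (b3 hy0))
      apply hg0
      rw [hx0, hy0]
      exact map_zero ι
    · -- the translation by `g` carries the twist over `0` to the one over `π g`
      obtain ⟨z₀, hz₀⟩ := coord (g + σ 0)
      have e : π (g + σ 0) = π g := by rw [map_add, hσ, add_zero]
      rw [e] at hz₀
      have trans : ∀ z, z₀ + z ∈ C (π g) ↔ z ∈ C 0 := by
        intro z
        rw [← memR, ← memR, map_add, ← add_assoc, ← hz₀, add_assoc, inv]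
      have h : ((u, y₁) : X × Y) ∈ C 0 := by
        rw [← trans]
        have h1 := (trans _).2 memC0
        rw [C1 _ hc] at h1 ⊢
        have h2 := twist_add_mem hu h1
        simpa [add_assoc, add_comm u] using h2
      rw [C0] at h
      exact hy₁ (h.2.2 hu0)

/-- In `ZMod (n * p)` the initial segment `{0, …, n - 1}` is a non-periodic transversal of the
subgroup generated by `n`. -/
lemma exists_transversal {n p : ℕ} (hn : 2 ≤ n) (hp : 2 ≤ p) :
    ∃ (U : AddSubgroup (ZMod (n * p))) (T : Set (ZMod (n * p))),
      (∀ x, ∃! t, t ∈ T ∧ x - t ∈ U) ∧ ¬ IsPeriodic T ∧ (∃ u ∈ U, u ≠ 0) ∧ ∃ x, x ∉ U := by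
  have hlt : n < n * p := by nlinarith
  have : NeZero n := ⟨by omega⟩
  have : NeZero (n * p) := ⟨by omega⟩
  let f : ZMod (n * p) →+* ZMod n := ZMod.castHom (dvd_mul_right n p) _
  have memU : ∀ x, x ∈ f.toAddMonoidHom.ker ↔ f x = 0 := fun x => Iff.rfl
  have hval : ∀ k, k ≤ n → ((k : ℕ) : ZMod (n * p)).val = k := fun k hk =>
    ZMod.val_natCast_of_lt (by omega)
  refine ⟨f.toAddMonoidHom.ker, {t | t.val < n}, fun x => ?_, ?_, ⟨(n : ZMod (n * p)), ?_, ?_⟩,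
    1, ?_⟩
  · refine ⟨((f x).val : ℕ), ⟨?_, ?_⟩, ?_⟩
    · rw [Set.mem_ofPred_eq, hval _ (ZMod.val_lt _).le]
      exact ZMod.val_lt _
    · rw [memU, map_sub, map_natCast, ZMod.natCast_zmod_val, sub_self]
    · rintro t ⟨ht, hxt⟩
      rw [memU, map_sub, sub_eq_zero] at hxt
      rw [Set.mem_ofPred_eq] at ht
      rw [hxt, map_eq_natCast_val, ZMod.val_natCast_of_lt ht, ZMod.natCast_zmod_val]
  · rintro ⟨g, hg0, hg⟩
    have shift : ∀ t : ZMod (n * p), t.val < n → (g + t).val < n := by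
      intro t ht
      have : g + t ∈ {t : ZMod (n * p) | t.val < n} := hg ▸ ⟨t, ht, rfl⟩
      exact this
    have h0 : g.val < n := by simpa using shift 0 (by simp; omega)
    have hpos : 0 < g.val := Nat.pos_of_ne_zero (by rwa [Ne, ZMod.val_eq_zero])
    -- `g` moves `n - g` to `n`
    have h1 := shift ((n - g.val : ℕ)) (by rw [hval _ (Nat.sub_le _ _)]; omega)
    have e : g + ((n - g.val : ℕ) : ZMod (n * p)) = (n : ℕ) := by
      conv_lhs => rw [← ZMod.natCast_zmod_val g]
      rw [ZMod.val_natCast_of_lt (by omega), ← Nat.cast_add]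
      congr 1; omega
    rw [e, hval n le_rfl] at h1
    omega
  · rw [memU, map_natCast, ZMod.natCast_self]
  · rw [Ne, ← ZMod.val_eq_zero, hval n le_rfl]; omega
  · rw [memU, map_one]
    have := Fact.mk (show 1 < n by omega)
    exact one_ne_zero

/-- The construction is applied to the multiples of `n₃`, identified with
`ZMod (n₁ * p₁) × ZMod (n₂ * p₂)`. -/
lemma IsVuzaOrder.exists_isVuzaCanon {N : ℕ} (h : IsVuzaOrder N) :
    ∃ S R : Set (ZMod N), IsVuzaCanon S R := by
  obtain ⟨p₁, p₂, n₁, n₂, n₃, hp₁, hp₂, -, hn₁, hn₂, hn₃, hN, hgcd⟩ := h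
  obtain ⟨U, T₁, h₁, i₁, hU, hx⟩ := exists_transversal hn₁ hp₁.two_le
  obtain ⟨V, T₂, h₂, i₂, hV, hy⟩ := exists_transversal hn₂ hp₂.two_le
  obtain ⟨m, hm⟩ : ∃ m, m = n₁ * p₁ * (n₂ * p₂) := ⟨_, rfl⟩
  have hN' : N = m * n₃ := by rw [hN, hm]; ring
  clear hN
  subst hN'
  have hm0 : m ≠ 0 := by
    rw [hm]; have := hp₁.ne_zero; have := hp₂.ne_zero
    have : n₁ ≠ 0 := by omega
    have : n₂ ≠ 0 := by omega
    positivity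
  have : NeZero (m * n₃) := ⟨Nat.mul_ne_zero hm0 (by omega)⟩
  have : Fact (1 < n₃) := ⟨hn₃⟩
  let π : ZMod (m * n₃) →+* ZMod n₃ := ZMod.castHom (dvd_mul_left n₃ m) _
  let μ : ZMod m →+ ZMod (m * n₃) :=
    ZMod.lift m ⟨zmultiplesHom _ (n₃ : ZMod (m * n₃)), by
      simp only [zmultiplesHom_apply, natCast_zsmul, nsmul_eq_mul]
      rw [← Nat.cast_mul, ZMod.natCast_self]⟩
  have hμ : ∀ k : ℕ, μ k = (k * n₃ : ℕ) := by
    intro k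
    have := ZMod.lift_coe m ⟨zmultiplesHom _ (n₃ : ZMod (m * n₃)), by
      simp only [zmultiplesHom_apply, natCast_zsmul, nsmul_eq_mul]
      rw [← Nat.cast_mul, ZMod.natCast_self]⟩ (k : ℤ)
    simpa using this
  have : NeZero m := ⟨hm0⟩
  have μinj : Function.Injective μ := by
    rw [injective_iff_map_eq_zero]
    intro x hx
    rw [← ZMod.natCast_zmod_val x] at hx ⊢
    rw [hμ, ZMod.natCast_eq_zero_iff] at hx
    rw [ZMod.natCast_eq_zero_iff]
    exact Nat.dvd_of_mul_dvd_mul_right (by omega) hx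
  let E : ZMod m ≃+* ZMod (n₁ * p₁) × ZMod (n₂ * p₂) :=
    (ZMod.ringEquivCongr hm).trans (ZMod.chineseRemainder hgcd)
  refine _root_.exists_isVuzaCanon (μ.comp E.symm.toAddEquiv.toAddMonoidHom)
    (μinj.comp E.symm.injective) π.toAddMonoidHom
    (ZMod.castHom_surjective (dvd_mul_left n₃ m)) (fun g => ?_) h₁ h₂ i₁ i₂ hU hV hx hy
  change π g = 0 ↔ ∃ z, μ (E.symm z) = g
  constructor
  · intro h
    rw [map_eq_natCast_val, ZMod.natCast_eq_zero_iff] at h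
    obtain ⟨k, hk⟩ := h
    exact ⟨E k, by rw [E.symm_apply_apply, hμ, mul_comm k, ← hk, ZMod.natCast_zmod_val]⟩
  · rintro ⟨z, rfl⟩
    rw [← ZMod.natCast_zmod_val (E.symm z), hμ, map_natCast, Nat.cast_mul, ZMod.natCast_self,
      mul_zero]

theorem vuza_canon_exists_iff_vuza_order (N : ℕ) (hN : 2 ≤ N) :
    (∃ S R : Set (ZMod N), IsVuzaCanon S R) ↔
      ∃ p₁ p₂ n₁ n₂ n₃ : ℕ, Nat.Prime p₁ ∧ Nat.Prime p₂ ∧ p₁ ≠ p₂ ∧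
        2 ≤ n₁ ∧ 2 ≤ n₂ ∧ 2 ≤ n₃ ∧ N = n₁ * n₂ * n₃ * p₁ * p₂ ∧
        Nat.gcd (n₁ * p₁) (n₂ * p₂) = 1 := by
  have : NeZero N := ⟨by omega⟩
  constructor
  · rintro ⟨S, R, h⟩
    exact h.isVuzaOrder hN
  · exact IsVuzaOrder.exists_isVuzaCanon
end

section
/- Let k and N be positive integers. If (S, R) is a rhythmic canon of ℤ_N, then (S ⊕ N·I_k, R) is a rhythmic canon of ℤ_{kN}, where S is identified with its set of representatives in {0, …, N−1}, S ⊕ N·I_k = {s + N·j : s ∈ S, 0 ≤ j ≤ k−1} ⊆ ℤ_{kN}, and R is likewise lifted to ℤ_{kN} via its representatives in {0, …, N−1}. -/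
/-! Reduction modulo `N` is a homomorphism `π : ℤ_{kN} → ℤ_N`. The concatenated set is the
full preimage `π⁻¹(S)`, and lifting `R` by its representatives in `{0, …, N - 1}` is the
application of a section `σ` of `π`. For any homomorphism `π` with section `σ` (not necessarily
additive), `(π⁻¹(S), σ(R))` is a canon as soon as `(S, R)` is: the decomposition
`π g = s + r` forces the second component of `g` to be `σ r`, hence the first to be
`g - σ r`, which does lie in `π⁻¹(S)`. -/

open Pointwise

/-- A canon pulls back along a homomorphism with a set-theoretic section: the first factor is
replaced by its preimage, the second by its image under the section. -/
theorem IsRhythmicCanon.preimage_image {G H : Type*} [AddCommGroup G] [AddCommGroup H]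
    {S R : Set H} (h : IsRhythmicCanon S R) (π : G →+ H) (σ : H → G)
    (hσ : ∀ x, π (σ x) = x) : IsRhythmicCanon (π ⁻¹' S) (σ '' R) := by
  obtain ⟨⟨s₀, hs₀⟩, hR, hu⟩ := h
  refine ⟨⟨σ s₀, by simpa [hσ] using hs₀⟩, hR.image σ, fun g => ?_⟩
  obtain ⟨⟨s, r⟩, ⟨hs, hr, hsr⟩, huniq⟩ := hu (π g)
  dsimp only at hs hr hsr
  refine ⟨(g - σ r, σ r), ⟨?_, ⟨r, hr, rfl⟩, sub_add_cancel _ _⟩, ?_⟩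
  · simpa [hσ, ← hsr] using hs
  · rintro ⟨a, b⟩ ⟨ha, ⟨r', hr', rfl⟩, rfl⟩
    have hp := huniq (π a, r') ⟨ha, hr', by simp [hσ]⟩
    obtain ⟨-, rfl⟩ := Prod.mk.inj hp
    simp

/-- The concatenated set consists of all residues modulo `k * N` whose reduction modulo `N`
lies in `S`. -/
theorem concat_eq_preimage (k N : ℕ) (hk : 0 < k) (hN : 0 < N) (S : Set (ZMod N)) :
    {x : ZMod (k * N) | ∃ s ∈ S, ∃ j < k, x = ((s.val + N * j : ℕ) : ZMod (k * N))} =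
      (ZMod.castHom (Dvd.intro_left k rfl) (ZMod N) : ZMod (k * N) →+* ZMod N).toAddMonoidHom
        ⁻¹' S := by
  have : NeZero N := ⟨hN.ne'⟩
  have : NeZero (k * N) := ⟨(Nat.mul_pos hk hN).ne'⟩
  ext x
  constructor
  · rintro ⟨s, hs, j, -, rfl⟩
    rw [Set.mem_preimage]
    convert hs
    change ZMod.castHom (Dvd.intro_left k rfl) (ZMod N) _ = s
    rw [map_natCast]
    simp
  · intro hx
    -- Euclidean division of the representative of `x` by `N` gives `s` and `j`.
    refine ⟨(x.val : ZMod N), ?_, x.val / N, ?_, ?_⟩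
    · simpa [ZMod.natCast_val] using hx
    · exact Nat.div_lt_of_lt_mul (by simpa [mul_comm] using x.val_lt)
    · rw [ZMod.val_natCast, Nat.mod_add_div, ZMod.natCast_zmod_val]

theorem rhythmicCanon_concat (k N : ℕ) (hk : 0 < k) (hN : 0 < N)
    (S R : Set (ZMod N)) (h : IsRhythmicCanon S R) :
    IsRhythmicCanon
      {x : ZMod (k * N) | ∃ s ∈ S, ∃ j < k, x = ((s.val + N * j : ℕ) : ZMod (k * N))}
      ((fun r : ZMod N => ((r.val : ℕ) : ZMod (k * N))) '' R) := by
  have : NeZero N := ⟨hN.ne'⟩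
  rw [concat_eq_preimage k N hk hN S]
  exact h.preimage_image _ _ fun r => by simp
end

section
/- Let G be a finite cyclic group and H a subgroup of G. If (S, R) is a Vuza canon of G, S is a subset of H, and R ∩ H is non-periodic in H (i.e., no nonzero h ∈ H satisfies h + (R ∩ H) = R ∩ H), then (S, R ∩ H) is a Vuza canon of H. -/
/-!
Let `h ∈ H` and write `h = s + r` in `G`. Since `s ∈ S ⊆ H`, also `r = h - s ∈ H`; so
decompositions of elements of `H` along `(S, R)` are exactly decompositions along
`(S, R ∩ H)`, which gives a rhythmic canon of `H`. A nonzero period of `S` in `H` would be a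
nonzero period of `S` in `G`, and non-periodicity of `R ∩ H` is a hypothesis.
-/

open Pointwise

theorem vuzaCanon_restrict_subgroup {G : Type*} [AddCommGroup G] [Fintype G]
    [IsAddCyclic G] (H : AddSubgroup G) (S R : Set G)
    (hSR : IsVuzaCanon S R) (hS : S ⊆ (H : Set G))
    (hRH : ¬ IsPeriodic {x : H | (x : G) ∈ R}) :
    IsVuzaCanon {x : H | (x : G) ∈ S} {x : H | (x : G) ∈ R} := by
  obtain ⟨⟨⟨s₀, hs₀⟩, -, hdec⟩, hSper, -⟩ := hSR
  -- The second component of a decomposition of an element of `H` lies in `H`.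
  have key : ∀ (h : H) (s r : G), s ∈ S → s + r = h → r ∈ H := fun h s r hs e =>
    (H.add_mem_cancel_left (hS hs)).1 (e ▸ h.2)
  refine ⟨⟨⟨⟨s₀, hS hs₀⟩, hs₀⟩, ?_, fun h => ?_⟩, ?_, hRH⟩
  · -- Decomposing `0 ∈ H` yields an element of `R ∩ H`.
    obtain ⟨⟨s, r⟩, ⟨hs, hr, e⟩, -⟩ := hdec 0
    exact ⟨⟨r, key 0 s r hs e⟩, hr⟩
  · obtain ⟨⟨s, r⟩, ⟨hs, hr, e⟩, huniq⟩ := hdec h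
    refine ⟨(⟨s, hS hs⟩, ⟨r, key h s r hs e⟩), ⟨hs, hr, Subtype.ext e⟩, ?_⟩
    rintro ⟨s', r'⟩ ⟨hs', hr', e'⟩
    have heq := huniq (↑s', ↑r') ⟨hs', hr', congrArg Subtype.val e'⟩
    exact Prod.ext (Subtype.ext (congrArg Prod.fst heq)) (Subtype.ext (congrArg Prod.snd heq))
  · rintro ⟨g, hg, hgS⟩
    refine hSper ⟨g, fun h0 => hg (Subtype.ext h0), Set.Subset.antisymm ?_ ?_⟩
    · rintro _ ⟨s, hs, rfl⟩
      have : g + ⟨s, hS hs⟩ ∈ {x : H | (x : G) ∈ S} := hgS ▸ Set.mem_image_of_mem _ hs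
      exact this
    · intro s hs
      have : (⟨s, hS hs⟩ : H) ∈ (fun x => g + x) '' {x : H | (x : G) ∈ S} := hgS.symm ▸ hs
      obtain ⟨x, hx, e⟩ := this
      exact ⟨x, hx, congrArg Subtype.val e⟩
end

section
/- Let k and N be positive integers. Suppose (S, R) is a Vuza canon of ℤ_{kN} such that S is contained in the subgroup k·I_N = {0, k, 2k, …, (N−1)k} of ℤ_{kN}, S is non-periodic, and R ∩ k·I_N is non-periodic as a subset of the subgroup k·I_N. Then the pair (S′, R′) defined by S′ = S/k and R′ = (R ∩ k·I_N)/k (i.e., the images of S and R ∩ k·I_N under the group isomorphism k·I_N → ℤ_N sending k·x mod kN to x mod N) is a Vuza canon of ℤ_N. -/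
/-!
Multiplication by `k` is an injective homomorphism `φ : ℤ_N → ℤ_{kN}` whose range is `k·I_N`, and
the two sets of the conclusion are preimages under `φ`. Since `S` lies in the range of `φ`,
whenever `φ y = s + r` with `s ∈ S` the summand `r` lies in the range as well; hence
the unique decompositions of the elements of the range pull back to unique decompositions in `ℤ_N`
(`IsRhythmicCanon.preimage`). A period `g` of the preimage of a subset of the range gives the
period `φ g` of that subset (`image_add_eq_of_preimage`), so non-periodicity descends.
-/

open Pointwise

/-- `kIa N k a` is the set `{0, k, 2k, …, (a−1)·k}` regarded as a subset of `ZMod N`. -/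
def kIa (N k a : ℕ) : Set (ZMod N) := {x | ∃ i < a, x = ((k * i : ℕ) : ZMod N)}

/-- A rhythmic canon of `G` whose first factor lies in the range of an injective homomorphism
`φ : H → G` pulls back to a rhythmic canon of `H`: as the range is a subgroup, the second summand
of any element of the range lies in the range too. -/
theorem IsRhythmicCanon.preimage {H G : Type*} [AddCommGroup H] [AddCommGroup G] (φ : H →+ G)
    (hφ : Function.Injective φ) {S R : Set G} (hSR : IsRhythmicCanon S R)
    (hS : S ⊆ Set.range φ) : IsRhythmicCanon (φ ⁻¹' S) (φ ⁻¹' R) := by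
  obtain ⟨⟨s₀, hs₀⟩, -, huniq⟩ := hSR
  have key : ∀ y : H, ∃ a b : H, φ a ∈ S ∧ φ b ∈ R ∧ a + b = y := by
    intro y
    obtain ⟨⟨s, r⟩, ⟨hs, hr, hsr⟩, -⟩ := huniq (φ y)
    dsimp only at hs hr hsr
    obtain ⟨a, rfl⟩ := hS hs
    refine ⟨a, y - a, hs, ?_, by abel⟩
    rwa [map_sub, ← hsr, add_sub_cancel_left]
  refine ⟨?_, ?_, fun y => ?_⟩
  · obtain ⟨a, rfl⟩ := hS hs₀
    exact ⟨a, hs₀⟩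
  · obtain ⟨-, b, -, hb, -⟩ := key 0
    exact ⟨b, hb⟩
  · obtain ⟨a, b, ha, hb, hab⟩ := key y
    refine ⟨(a, b), ⟨ha, hb, hab⟩, ?_⟩
    rintro ⟨c, d⟩ ⟨hc, hd, hcd⟩
    have h := (huniq (φ y)).unique (y₁ := (φ c, φ d)) (y₂ := (φ a, φ b))
      ⟨hc, hd, by rw [← map_add]; exact congrArg φ hcd⟩
      ⟨ha, hb, by rw [← map_add, hab]⟩
    rw [Prod.mk.injEq] at h
    exact Prod.ext (hφ h.1) (hφ h.2)

theorem image_add_eq_of_preimage {H G : Type*} [AddCommGroup H] [AddCommGroup G] (φ : H →+ G)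
    {A : Set G} (hA : A ⊆ Set.range φ) {g : H}
    (hg : (fun x => g + x) '' (φ ⁻¹' A) = φ ⁻¹' A) : (fun x => φ g + x) '' A = A := by
  have h := congrArg (Set.image φ) hg
  rw [Set.image_image, Set.image_preimage_eq_of_subset hA] at h
  simp only [map_add] at h
  rwa [← Set.image_image (fun x => φ g + x) φ, Set.image_preimage_eq_of_subset hA] at h

/-- Multiplication by `k`, as a homomorphism `ℤ_N → ℤ_{kN}`. -/
def mulHom (k N : ℕ) : ZMod N →+ ZMod (k * N) :=
  ZMod.lift N ⟨(Int.castAddHom (ZMod (k * N))).comp (AddMonoidHom.mulLeft (k : ℤ)), by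
    have h := ZMod.natCast_self (k * N)
    push_cast at h
    simpa using h⟩

theorem mulHom_natCast (k N n : ℕ) : mulHom k N (n : ZMod N) = ((k * n : ℕ) : ZMod (k * N)) := by
  rw [← Int.cast_natCast n, mulHom, ZMod.lift_coe]
  simp

theorem mulHom_injective (k N : ℕ) (hk : 0 < k) : Function.Injective (mulHom k N) := by
  refine (ZMod.lift_injective _).2 fun m hm => ?_
  have hm' : ((k * m : ℤ) : ZMod (k * N)) = 0 := by simpa using hm
  rw [ZMod.intCast_zmod_eq_zero_iff_dvd] at hm'
  push_cast at hm'
  rw [ZMod.intCast_zmod_eq_zero_iff_dvd]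
  exact Int.dvd_of_mul_dvd_mul_left (by exact_mod_cast hk.ne') hm'

theorem range_mulHom (k N : ℕ) (hN : 0 < N) : Set.range (mulHom k N) = kIa (k * N) k N := by
  have : NeZero N := ⟨hN.ne'⟩
  ext x
  constructor
  · rintro ⟨y, rfl⟩
    refine ⟨y.val, y.val_lt, ?_⟩
    rw [← mulHom_natCast, ZMod.natCast_zmod_val]
  · rintro ⟨i, -, rfl⟩
    exact ⟨i, mulHom_natCast k N i⟩

theorem vuzaCanon_descend (k N : ℕ) (hk : 0 < k) (hN : 0 < N)
    (S R : Set (ZMod (k * N))) (hSR : IsVuzaCanon S R)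
    (hSsub : S ⊆ kIa (k * N) k N)
    (hSnp : ¬ IsPeriodic S)
    (hRnp : ¬ ∃ h : ZMod (k * N), h ∈ kIa (k * N) k N ∧ h ≠ 0 ∧
      (fun x => h + x) '' (R ∩ kIa (k * N) k N) = R ∩ kIa (k * N) k N) :
    IsVuzaCanon
      {y : ZMod N | ((k * y.val : ℕ) : ZMod (k * N)) ∈ S}
      {y : ZMod N | ((k * y.val : ℕ) : ZMod (k * N)) ∈ R ∩ kIa (k * N) k N} := by
  have : NeZero N := ⟨hN.ne'⟩
  have hval : ∀ y : ZMod N, ((k * y.val : ℕ) : ZMod (k * N)) = mulHom k N y := fun y => by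
    rw [← mulHom_natCast, ZMod.natCast_zmod_val]
  simp only [hval]
  have hinj := mulHom_injective k N hk
  have hne : ∀ {g : ZMod N}, g ≠ 0 → mulHom k N g ≠ 0 := fun h =>
    (map_ne_zero_iff _ hinj).2 h
  have hrange := range_mulHom k N hN
  have hR : {y : ZMod N | mulHom k N y ∈ R ∩ kIa (k * N) k N} = mulHom k N ⁻¹' R := by
    rw [← hrange]
    ext y
    simp
  refine ⟨?_, ?_, ?_⟩
  · rw [hR]
    exact hSR.1.preimage (mulHom k N) hinj (hrange ▸ hSsub)
  · rintro ⟨g, hg, h⟩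
    exact hSnp ⟨_, hne hg, image_add_eq_of_preimage (mulHom k N) (hrange ▸ hSsub) h⟩
  · rintro ⟨g, hg, h⟩
    exact hRnp ⟨_, hrange ▸ Set.mem_range_self g, hne hg,
      image_add_eq_of_preimage (mulHom k N) (hrange ▸ Set.inter_subset_right) h⟩
end

section
/- Let p₁, p₂ be distinct primes and n₁, n₂, n₃ positive integers such that gcd(n₁·p₁, n₂·p₂) = 1, and set N = n₁·n₂·n₃·p₁·p₂. Define the subsets of ℤ_N: A = n₁p₁n₃·I_{n₂}, B = n₂p₂n₃·I_{n₁}, U = n₁n₂n₃p₁·I_{p₂}, V = n₁n₂n₃p₂·I_{p₁}, U′ = n₂n₃·I_{p₂}, V′ = n₁n₃·I_{p₁}, K₁ = {0}, K₂ = {1, 2, …, n₃−1}. Let S = A + B and R = (U + V′ + K₁) ∪ (U′ + V + K₂). If R is a non-periodic subset of ℤ_N, then (S, R) is a Vuza canon of ℤ_N. -/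
/-!
The sets `A`, `B`, `U`, `V`, `U'`, `V'` lie in the subgroup `n₃ ℤ_N`, which by coprimality of
`a = n₁ p₁` and `b = n₂ p₂` is isomorphic to `ℤ_a × ℤ_b`. Under this isomorphism `S = A + B`
becomes, up to multiplication by units, a product of the intervals `I_{n₁} ⊆ ℤ_a` and
`I_{n₂} ⊆ ℤ_b`.

* Tiling. `U` completes `A` to `0 × ℤ_b`, and `V'` completes `B` modulo `0 × ℤ_b`; hence
  `S ⊕ (U + V') = n₃ ℤ_N`, and symmetrically `S ⊕ (U' + V) = n₃ ℤ_N`. The set `K₁ ∪ K₂` selects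
  each coset of `n₃ ℤ_N` once. The injectivity of the resulting parametrization of `ℤ_N` is
  `tile_injective`, applied in both orders of the indices; surjectivity follows by counting.
* Non-periodicity of `S`. As `0 ∈ S`, a period has the form `a n₃ i + b n₃ j` with `i < n₂` and
  `j < n₁`. If `i ≠ 0`, translating `a n₃ (n₂ - i) ∈ S` by it gives an element whose `A`-coordinate
  is `n₂`, which leaves the interval `I_{n₂}` because `n₂ < n₂ p₂` (`not_mem_interval_sum`).
  The case `j ≠ 0` is symmetric.

Congruences modulo `N` are handled as divisibility in `ℤ`.
-/

open Pointwise

theorem eq_of_dvd_sub_of_lt {m i j : ℕ} (hi : i < m) (hj : j < m)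
    (h : (m : ℤ) ∣ (j : ℤ) - i) : i = j :=
  Nat.ModEq.eq_of_lt_of_lt ((Nat.modEq_iff_dvd).2 h) hi hj

/-- The sum `a q · I_b + b r · I_a + a b q · I_r + a · I_q` is direct modulo `a b q r`. -/
theorem tile_injective {a q b r : ℕ} (hcop : Nat.gcd (a * q) (b * r) = 1)
    (ha : 0 < a) (hb : 0 < b)
    {i i' j j' x x' y y' : ℕ} (hi : i < b) (hi' : i' < b) (hj : j < a) (hj' : j' < a)
    (hx : x < q) (hx' : x' < q) (hy : y < r) (hy' : y' < r)
    (h : ((a * b * q * r : ℕ) : ℤ) ∣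
      ((a * q * i' + b * r * j' + a * b * q * y' + a * x' : ℕ) : ℤ)
        - ((a * q * i + b * r * j + a * b * q * y + a * x : ℕ) : ℤ)) :
    i = i' ∧ j = j' ∧ x = x' ∧ y = y' := by
  have haz : (a : ℤ) ≠ 0 := by exact_mod_cast ha.ne'
  have hbz : (b : ℤ) ≠ 0 := by exact_mod_cast hb.ne'
  have c1 : IsCoprime ((a * q : ℕ) : ℤ) ((b * r : ℕ) : ℤ) := Nat.isCoprime_iff_coprime.2 hcop
  push_cast at c1
  obtain ⟨c, hc⟩ := h
  push_cast at hc
  -- Modulo `a` only the terms in `j` survive.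
  have ej : j = j' := by
    refine eq_of_dvd_sub_of_lt hj hj' ?_
    have hd : (a : ℤ) ∣ ((b : ℤ) * r) * ((j' : ℤ) - j) :=
      ⟨b * q * r * c - q * (i' - i) - b * q * (y' - y) - (x' - x), by linear_combination hc⟩
    exact c1.of_mul_left_left.dvd_of_dvd_mul_left hd
  subst ej
  -- Modulo `a q` only the terms in `x` now survive.
  have ex : x = x' := by
    refine eq_of_dvd_sub_of_lt hx hx' ?_
    refine (mul_dvd_mul_iff_left haz).1
      ⟨b * r * c - (i' - i) - b * (y' - y), by linear_combination hc⟩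
  subst ex
  have ez : i + b * y = i' + b * y' := by
    have bd : ∀ {s t : ℕ}, s < b → t < r → s + b * t < b * r := fun {s t} hs ht => by
      calc s + b * t < b * (t + 1) := by rw [Nat.mul_succ]; omega
        _ ≤ b * r := Nat.mul_le_mul_left _ ht
    refine eq_of_dvd_sub_of_lt (bd hi hy) (bd hi' hy') ?_
    have hd : ((b * r : ℕ) : ℤ) ∣
        ((a : ℤ) * q) * (((i' + b * y' : ℕ) : ℤ) - ((i + b * y : ℕ) : ℤ)) :=
      ⟨a * q * c, by push_cast; linear_combination hc⟩
    push_cast at hd ⊢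
    exact c1.symm.dvd_of_dvd_mul_left hd
  have ei : i = i' := by
    refine eq_of_dvd_sub_of_lt hi hi' ⟨(y : ℤ) - y', ?_⟩
    have : (i : ℤ) + b * y = i' + b * y' := by exact_mod_cast ez
    linear_combination -this
  subst ei
  exact ⟨rfl, rfl, rfl, Nat.eq_of_mul_eq_mul_left hb (Nat.add_left_cancel ez)⟩

/-- In `ℤ / (a b q r n₃)`, no element of `a q n₃ · I_b + b r n₃ · I_a` has the form
`a q n₃ b + b r n₃ j`: such an element would have `b` as its first coordinate in `ℤ_{b r}`. -/
theorem not_mem_interval_sum {a q b r n₃ : ℕ} (hcop : Nat.gcd (a * q) (b * r) = 1)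
    (hb : 0 < b) (hn₃ : 0 < n₃) (hr : 2 ≤ r) {i j j' : ℕ} (hi : i < b)
    (h : ((a * q * n₃ * b + b * r * n₃ * j : ℕ) : ZMod (a * b * n₃ * q * r)) =
      ((a * q * n₃ * i + b * r * n₃ * j' : ℕ) : ZMod (a * b * n₃ * q * r))) : False := by
  rw [ZMod.natCast_eq_natCast_iff, Nat.modEq_iff_dvd] at h
  obtain ⟨c, hc⟩ := h
  push_cast at hc
  have hnz : (n₃ : ℤ) ≠ 0 := by exact_mod_cast hn₃.ne'
  have c1 : IsCoprime ((a * q : ℕ) : ℤ) ((b * r : ℕ) : ℤ) := Nat.isCoprime_iff_coprime.2 hcop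
  have hbr : b < b * r := by nlinarith
  have e : b = i := by
    refine eq_of_dvd_sub_of_lt hbr (hi.trans hbr) ?_
    refine c1.symm.dvd_of_dvd_mul_left ⟨a * q * c - (j' - j), ?_⟩
    apply mul_left_cancel₀ hnz
    push_cast
    linear_combination hc
  omega

/-- A bijective parametrization `(u, v) ↦ σ u + ρ v` of the group exhibits the ranges of `σ` and
`ρ` as the factors of a rhythmic canon. -/
theorem isRhythmicCanon_of_bijective {G P Q : Type*} [AddCommGroup G] (σ : P → G) (ρ : Q → G)
    (h : Function.Bijective fun t : P × Q => σ t.1 + ρ t.2) :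
    IsRhythmicCanon (Set.range σ) (Set.range ρ) := by
  obtain ⟨⟨u₀, v₀⟩, -⟩ := h.2 0
  refine ⟨⟨_, u₀, rfl⟩, ⟨_, v₀, rfl⟩, fun g => ?_⟩
  obtain ⟨⟨u, v⟩, huv⟩ := h.2 g
  refine ⟨(σ u, ρ v), ⟨⟨u, rfl⟩, ⟨v, rfl⟩, huv⟩, ?_⟩
  rintro ⟨s, r⟩ ⟨⟨u', rfl⟩, ⟨v', rfl⟩, h'⟩
  have e : (u', v') = (u, v) := h.1 (h'.trans huv.symm)
  rw [Prod.mk.injEq] at e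
  rw [e.1, e.2]

theorem vuzaCanon_construction (p₁ p₂ n₁ n₂ n₃ N : ℕ)
    (hp₁ : Nat.Prime p₁) (hp₂ : Nat.Prime p₂) (hpne : p₁ ≠ p₂)
    (hn₁ : 0 < n₁) (hn₂ : 0 < n₂) (hn₃ : 0 < n₃)
    (hcop : Nat.gcd (n₁ * p₁) (n₂ * p₂) = 1)
    (hN : N = n₁ * n₂ * n₃ * p₁ * p₂)
    (S R : Set (ZMod N))
    (hS : S = kIa N (n₁ * p₁ * n₃) n₂ + kIa N (n₂ * p₂ * n₃) n₁)
    (hR : R = (kIa N (n₁ * n₂ * n₃ * p₁) p₂ + kIa N (n₁ * n₃) p₁ + ({0} : Set (ZMod N)))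
        ∪ (kIa N (n₂ * n₃) p₂ + kIa N (n₁ * n₂ * n₃ * p₂) p₁ +
            {x : ZMod N | ∃ i : ℕ, 1 ≤ i ∧ i < n₃ ∧ x = (i : ZMod N)}))
    (hRnp : ¬ IsPeriodic R) :
    IsVuzaCanon S R := by
  have hS' : ∀ g, g ∈ S ↔ ∃ i < n₂, ∃ j < n₁,
      ((n₁ * p₁ * n₃ * i + n₂ * p₂ * n₃ * j : ℕ) : ZMod N) = g := by
    intro g
    rw [hS, Set.mem_add]
    constructor
    · rintro ⟨_, ⟨i, hi, rfl⟩, _, ⟨j, hj, rfl⟩, rfl⟩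
      exact ⟨i, hi, j, hj, by push_cast; ring⟩
    · rintro ⟨i, hi, j, hj, rfl⟩
      exact ⟨_, ⟨i, hi, rfl⟩, _, ⟨j, hj, rfl⟩, by push_cast; ring⟩
  refine ⟨?_, ?_, hRnp⟩
  · let σ : Fin n₂ × Fin n₁ → ZMod N := fun u =>
      ((n₁ * p₁ * n₃ * u.1 + n₂ * p₂ * n₃ * u.2 : ℕ) : ZMod N)
    -- The residue `k` modulo `n₃` decides which of the two complements of `S` in `n₃ ℤ_N` is used.
    let τ : ℕ → ℕ → ℕ → ℕ := fun k x y =>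
      if k = 0 then n₁ * n₂ * n₃ * p₁ * y + n₁ * n₃ * x
        else n₂ * n₃ * y + n₁ * n₂ * n₃ * p₂ * x + k
    let ρ : Fin n₃ × Fin p₁ × Fin p₂ → ZMod N := fun v => (τ v.1 v.2.1 v.2.2 : ZMod N)
    have eS : S = Set.range σ := by
      ext g
      rw [hS']
      constructor
      · rintro ⟨i, hi, j, hj, rfl⟩
        exact ⟨(⟨i, hi⟩, ⟨j, hj⟩), rfl⟩
      · rintro ⟨⟨i, j⟩, rfl⟩
        exact ⟨i, i.2, j, j.2, rfl⟩
    have eR : R = Set.range ρ := by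
      rw [hR]
      ext g
      simp only [Set.mem_union, Set.mem_add]
      constructor
      · rintro (⟨_, ⟨_, ⟨y, hy, rfl⟩, _, ⟨x, hx, rfl⟩, rfl⟩, _, rfl, rfl⟩ |
          ⟨_, ⟨_, ⟨y, hy, rfl⟩, _, ⟨x, hx, rfl⟩, rfl⟩, _, ⟨k, hk, hk', rfl⟩, rfl⟩)
        · refine ⟨(⟨0, hn₃⟩, ⟨x, hx⟩, ⟨y, hy⟩), ?_⟩
          simp [ρ, τ]
        · refine ⟨(⟨k, hk'⟩, ⟨x, hx⟩, ⟨y, hy⟩), ?_⟩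
          simp [ρ, τ, show k ≠ 0 by omega]
      · rintro ⟨⟨⟨k, hk⟩, ⟨x, hx⟩, ⟨y, hy⟩⟩, rfl⟩
        by_cases h0 : k = 0
        · left
          exact ⟨_, ⟨_, ⟨y, hy, rfl⟩, _, ⟨x, hx, rfl⟩, rfl⟩, _, rfl, by simp [ρ, τ, h0]⟩
        · right
          exact ⟨_, ⟨_, ⟨y, hy, rfl⟩, _, ⟨x, hx, rfl⟩, rfl⟩, _, ⟨k, by omega, hk, rfl⟩,
            by simp [ρ, τ, h0]⟩
    rw [eS, eR]
    apply isRhythmicCanon_of_bijective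
    have hNpos : 0 < N := by
      have := hp₁.pos
      have := hp₂.pos
      rw [hN]; positivity
    have : NeZero N := ⟨hNpos.ne'⟩
    rw [Fintype.bijective_iff_injective_and_card]
    constructor
    swap
    · simp only [Fintype.card_prod, Fintype.card_fin, ZMod.card]
      rw [hN]; ring
    have hnz : (n₃ : ℤ) ≠ 0 := by exact_mod_cast hn₃.ne'
    rintro ⟨⟨⟨i, hi⟩, ⟨j, hj⟩⟩, ⟨k, hk⟩, ⟨x, hx⟩, ⟨y, hy⟩⟩
      ⟨⟨⟨i', hi'⟩, ⟨j', hj'⟩⟩, ⟨k', hk'⟩, ⟨x', hx'⟩, ⟨y', hy'⟩⟩ h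
    simp only [σ, ρ] at h
    rw [← Nat.cast_add, ← Nat.cast_add, ZMod.natCast_eq_natCast_iff, Nat.modEq_iff_dvd] at h
    have hτ : ∀ k x y, ∃ m : ℕ, τ k x y = n₃ * m + k := by
      intro k x y
      by_cases h0 : k = 0
      · exact ⟨n₁ * n₂ * p₁ * y + n₁ * x, by simp only [τ, h0, if_true]; ring⟩
      · exact ⟨n₂ * y + n₁ * n₂ * p₂ * x, by simp only [τ, h0, if_false]; ring⟩
    have ek : k = k' := by
      obtain ⟨m, hm⟩ := hτ k x y
      obtain ⟨m', hm'⟩ := hτ k' x' y'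
      rw [hm, hm'] at h
      obtain ⟨c, hc⟩ := h
      rw [hN] at hc
      push_cast at hc
      exact eq_of_dvd_sub_of_lt hk hk' ⟨n₁ * n₂ * p₁ * p₂ * c
        - (n₁ * p₁ * i' + n₂ * p₂ * j' + m') + (n₁ * p₁ * i + n₂ * p₂ * j + m),
        by linear_combination hc⟩
    subst ek
    obtain ⟨c, hc⟩ := h
    rw [hN] at hc
    by_cases h0 : k = 0
    · simp only [τ, h0, if_true] at hc
      push_cast at hc
      obtain ⟨rfl, rfl, rfl, rfl⟩ := tile_injective hcop hn₁ hn₂ hi hi' hj hj' hx hx' hy hy'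
        ⟨c, by
          apply mul_left_cancel₀ hnz
          push_cast
          linear_combination hc⟩
      rfl
    · simp only [τ, h0, if_false] at hc
      push_cast at hc
      obtain ⟨rfl, rfl, rfl, rfl⟩ := tile_injective ((Nat.gcd_comm _ _).trans hcop) hn₂ hn₁
        hj hj' hi hi' hy hy' hx hx'
        ⟨c, by
          apply mul_left_cancel₀ hnz
          push_cast
          linear_combination hc⟩
      rfl
  · rintro ⟨g, hg, hgS⟩
    have hsub : ∀ s ∈ S, g + s ∈ S := fun s hs => by
      rw [← hgS]
      exact ⟨s, hs, rfl⟩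
    have hgmem : g ∈ S := by
      have := hsub 0 ((hS' 0).2 ⟨0, hn₂, 0, hn₁, by simp⟩)
      rwa [add_zero] at this
    obtain ⟨i, hi, j, hj, rfl⟩ := (hS' g).1 hgmem
    rcases Nat.eq_zero_or_pos i with hi0 | hi0
    · rcases Nat.eq_zero_or_pos j with hj0 | hj0
      · exact hg (by simp [hi0, hj0])
      · have h := hsub _ ((hS' _).2 ⟨0, hn₂, n₁ - j, by omega, rfl⟩)
        obtain ⟨i', hi', j', hj', he⟩ := (hS' _).1 h
        have hM : N = n₂ * n₁ * n₃ * p₂ * p₁ := by rw [hN]; ring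
        clear hS hR hS' hgS hsub hgmem hg h hRnp S R
        subst hM
        refine not_mem_interval_sum (i := j') (j := i) (j' := i')
          ((Nat.gcd_comm _ _).trans hcop) hn₁ hn₃ hp₁.two_le hj' ?_
        rw [add_comm (n₂ * p₂ * n₃ * j') _, he, ← Nat.cast_add]
        congr 1
        obtain ⟨d, rfl⟩ := Nat.exists_eq_add_of_lt hj
        rw [show j + d + 1 - j = d + 1 by omega]
        ring
    · have h := hsub _ ((hS' _).2 ⟨n₂ - i, by omega, 0, hn₁, rfl⟩)
      obtain ⟨i', hi', j', hj', he⟩ := (hS' _).1 h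
      clear hS hR hS' hgS hsub hgmem hg h hRnp S R
      subst hN
      refine not_mem_interval_sum (i := i') (j := j) (j' := j')
        hcop hn₂ hn₃ hp₂.two_le hi' ?_
      rw [he, ← Nat.cast_add]
      congr 1
      obtain ⟨d, rfl⟩ := Nat.exists_eq_add_of_lt hi
      rw [show i + d + 1 - i = d + 1 by omega]
      ring
end

section
/- Let G be a finite cyclic group and let A, B be normalized (i.e., 0 ∈ A and 0 ∈ B) non-periodic subsets of G. If the sum A + ⟨B⟩ is direct (every element of the sumset A + ⟨B⟩ has a unique representation a + h with a ∈ A and h ∈ ⟨B⟩, where ⟨B⟩ is the subgroup of G generated by B), then the sumset A + B is a non-periodic subset of G. -/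
/-! Write `H` for the subgroup generated by `B`. Directness makes the translates `a + B`
(`a ∈ A`) lie in distinct cosets of `H`, so `A + B` meets `a + H` exactly in `a + B`.
If `g + (A + B) = A + B`, write `g + a = a' + b'` for `a ∈ A`, which is possible since `0 ∈ B`.
Comparing `g + (a + B)` with `A + B` inside the coset `a' + H` gives `b' + B ⊆ B`, an equality
by finiteness, so `b' = 0` because `B` is non-periodic. Thus `g + A ⊆ A`, which again is an
equality, and `g = 0` because `A` is non-periodic. -/

open Pointwise

/-- By finiteness, a one-sided inclusion `g + S ⊆ S` makes `g` a period of `S`, so `g = 0`. -/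
lemma eq_zero_of_add_mem {G : Type*} [AddCommGroup G] [Finite G] {S : Set G}
    (hS : ¬ IsPeriodic S) {g : G} (h : ∀ x ∈ S, g + x ∈ S) : g = 0 := by
  by_contra hg
  refine hS ⟨g, hg, Set.eq_of_subset_of_ncard_le ?_ ?_ S.toFinite⟩
  · rintro _ ⟨x, hx, rfl⟩
    exact h x hx
  · exact (Set.ncard_image_of_injective S (add_right_injective g)).ge

theorem nonperiodic_sum_of_direct {G : Type*} [AddCommGroup G] [Fintype G] [IsAddCyclic G]
    (A B : Set G) (hA0 : (0 : G) ∈ A) (hB0 : (0 : G) ∈ B)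
    (hAnp : ¬ IsPeriodic A) (hBnp : ¬ IsPeriodic B)
    (hdirect : ∀ a₁ ∈ A, ∀ h₁ ∈ AddSubgroup.closure B, ∀ a₂ ∈ A,
      ∀ h₂ ∈ AddSubgroup.closure B, a₁ + h₁ = a₂ + h₂ → a₁ = a₂ ∧ h₁ = h₂) :
    ¬ IsPeriodic (A + B) := by
  rintro ⟨g, hg, hper⟩
  have hshift : ∀ x ∈ A + B, g + x ∈ A + B := fun x hx => hper ▸ ⟨x, hx, rfl⟩
  have hcl : ∀ b ∈ B, b ∈ AddSubgroup.closure B := fun b hb => AddSubgroup.subset_closure hb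
  refine hg (eq_zero_of_add_mem hAnp fun a ha => ?_)
  obtain ⟨a', ha', b', hb', hab⟩ : g + a ∈ A + B :=
    hshift a ⟨a, ha, 0, hB0, add_zero a⟩
  have hab : a' + b' = g + a := hab
  have hb0 : b' = 0 := by
    refine eq_zero_of_add_mem hBnp fun b hb => ?_
    obtain ⟨a'', ha'', b'', hb'', h⟩ := hshift (a + b) ⟨a, ha, b, hb, rfl⟩
    have h : a'' + b'' = g + (a + b) := h
    have key : a' + (b' + b) = a'' + b'' := by
      rw [h, ← add_assoc, ← add_assoc, hab]
    rw [(hdirect a' ha' _ (add_mem (hcl _ hb') (hcl _ hb)) a'' ha'' _ (hcl _ hb'') key).2]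
    exact hb''
  rw [← hab, hb0, add_zero]
  exact ha'
end

section
/- Let p₁, p₂ be distinct primes and n₁, n₂, n₃ positive integers such that gcd(n₁·p₁, n₂·p₂) = 1, set N = n₁·n₂·n₃·p₁·p₂, and let H be the subgroup H = n₃·I_{n₁p₁n₂p₂} of ℤ_N (the multiples of n₃). Let K be a complete set of coset representatives for ℤ_N modulo H, written as a disjoint union K = K₁ ∪ K₂. Define A = n₁p₁n₃·I_{n₂}, B = n₂p₂n₃·I_{n₁}, U = n₁n₂n₃p₁·I_{p₂}, V = n₁n₂n₃p₂·I_{p₁}, U′ = α·n₂n₃·I_{p₂}, V′ = β·n₁n₃·I_{p₁}, where α ∈ {1, n₁, p₁} and β ∈ {1, n₂, p₂}. Let S = A + B and R = (U + V′ + K₁) ∪ (U′ + V + K₂). If R is a non-periodic subset of ℤ_N, then (S, R) is a Vuza canon of ℤ_N. -/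
/-!
Dividing by `n₃` identifies `H` with `ℤ/M`, where `M = n₁p₁n₂p₂`, and coprimality splits it as
`ℤ/n₁p₁ × ℤ/n₂p₂`. In the first coordinate `S = A + B` is a unit multiple of `{0, …, n₁ - 1}`, in
the second a unit multiple of `{0, …, n₂ - 1}`.

* `tiles_subgroup`: every element of `H` is uniquely `s + t` with `s ∈ S` and `t ∈ U + V'`. The
  coefficients of `B`, of `V'` and of `A`, `U` are read off one after the other, as digits modulo
  `n₁`, `p₁`, `n₂` and `p₂`; this only uses that `β` is prime to `p₁`. Exchanging the indices `1`
  and `2` gives the same statement for `U' + V`.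
* `existsUnique_of_tiles`: the coset representatives in `K₁` may be combined with one complement of
  `S` in `H` and those in `K₂` with another.
* `not_isPeriodic_factor`: a period of `S` lies in `S`, since `0 ∈ S`, so its coordinates have
  digits `a₀ < n₂` and `b₀ < n₁`. Adding it to the element of `S` with the largest digits forces
  `a₀ = b₀ = 0`, because a proper initial interval of a cyclic group is not periodic.
-/

open Pointwise

/-- `K` is a complete set of coset representatives for `ZMod N` modulo the subset `H`:
it contains exactly one element of each coset of `H`. -/
def IsCompleteCosetReps {N : ℕ} (H K : Set (ZMod N)) : Prop :=
  ∀ g : ZMod N, ∃! x, x ∈ K ∧ g - x ∈ H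

/-- `H` is the direct sum of `S` and `T`: the sums `s + t` lie in `H`, and each element of `H` is
such a sum for exactly one pair `(s, t) ∈ S × T`. -/
def Tiles {G : Type*} [AddCommGroup G] (S T H : Set G) : Prop :=
  (∀ s ∈ S, ∀ t ∈ T, s + t ∈ H) ∧
    ∀ h ∈ H, ∃! p : G × G, p.1 ∈ S ∧ p.2 ∈ T ∧ p.1 + p.2 = h

theorem existsUnique_of_tiles {N : ℕ} {H K K₁ K₂ S T₁ T₂ : Set (ZMod N)}
    (hK : IsCompleteCosetReps H K) (hsplit : K = K₁ ∪ K₂) (hdisj : Disjoint K₁ K₂)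
    (h₁ : Tiles S T₁ H) (h₂ : Tiles S T₂ H) (g : ZMod N) :
    ∃! p : ZMod N × ZMod N,
      p.1 ∈ S ∧ p.2 ∈ (T₁ + K₁) ∪ (T₂ + K₂) ∧ p.1 + p.2 = g := by
  obtain ⟨k, ⟨hkK, hkH⟩, hku⟩ := hK g
  have key : ∀ T L, L ⊆ K → Tiles S T H → ∀ s ∈ S, ∀ r ∈ T + L, s + r = g →
      k ∈ L ∧ ∃ t ∈ T, r = t + k ∧ s + t = g - k := by
    rintro T L hL hT s hs _ ⟨t, ht, l, hl, rfl⟩ hg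
    beta_reduce at hg
    have hlk : l = k := by
      refine hku l ⟨hL hl, ?_⟩
      have : g - l = s + t := by rw [← hg]; abel
      rw [this]
      exact hT.1 s hs t ht
    subst hlk
    exact ⟨hl, t, ht, rfl, by rw [← hg]; abel⟩
  have hL₁ : K₁ ⊆ K := hsplit ▸ Set.subset_union_left
  have hL₂ : K₂ ⊆ K := hsplit ▸ Set.subset_union_right
  rw [hsplit] at hkK
  rcases hkK with hk | hk
  · obtain ⟨⟨s, t⟩, ⟨hs, ht, hst⟩, hu⟩ := h₁.2 _ hkH
    refine ⟨(s, t + k), ⟨hs, Or.inl ⟨t, ht, k, hk, rfl⟩, ?_⟩, ?_⟩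
    · simp only at hst ⊢
      rw [← add_assoc, hst]; abel
    · rintro ⟨s', r⟩ ⟨hs', hr | hr, hg⟩
      · obtain ⟨-, t', ht', rfl, he⟩ := key _ _ hL₁ h₁ s' hs' r hr hg
        have := hu (s', t') ⟨hs', ht', he⟩
        simp only [Prod.mk.injEq] at this ⊢
        exact ⟨this.1, by rw [this.2]⟩
      · exact (Set.disjoint_left.1 hdisj hk (key _ _ hL₂ h₂ s' hs' r hr hg).1).elim
  · obtain ⟨⟨s, t⟩, ⟨hs, ht, hst⟩, hu⟩ := h₂.2 _ hkH
    refine ⟨(s, t + k), ⟨hs, Or.inr ⟨t, ht, k, hk, rfl⟩, ?_⟩, ?_⟩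
    · simp only at hst ⊢
      rw [← add_assoc, hst]; abel
    · rintro ⟨s', r⟩ ⟨hs', hr | hr, hg⟩
      · exact (Set.disjoint_left.1 hdisj (key _ _ hL₁ h₁ s' hs' r hr hg).1 hk).elim
      · obtain ⟨-, t', ht', rfl, he⟩ := key _ _ hL₂ h₂ s' hs' r hr hg
        have := hu (s', t') ⟨hs', ht', he⟩
        simp only [Prod.mk.injEq] at this ⊢
        exact ⟨this.1, by rw [this.2]⟩

/-- Every integer is congruent mod `n` to a multiple `c * b` with `0 ≤ b < n`, if `c` is a unit
mod `n`. -/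
theorem exists_digit {n : ℕ} (hn : 0 < n) {c : ℤ} (hc : IsCoprime (n : ℤ) c) (h : ℤ) :
    ∃ b : ℕ, b < n ∧ (n : ℤ) ∣ h - c * b := by
  obtain ⟨x, y, hxy⟩ := hc
  have hn' : (0 : ℤ) < n := by exact_mod_cast hn
  obtain ⟨b, hb⟩ := Int.eq_ofNat_of_zero_le (Int.emod_nonneg (y * h) hn'.ne')
  refine ⟨b, ?_, ?_⟩
  · have := Int.emod_lt_of_pos (y * h) hn'
    omega
  · have hb' : (b : ℤ) = y * h - n * (y * h / n) := by
      have := Int.emod_add_mul_ediv (y * h) n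
      omega
    refine ⟨x * h + c * (y * h / n), ?_⟩
    rw [hb']
    linear_combination (-h) * hxy

/-- Two digits `a, b < n` agree as soon as `n` divides a unit multiple of `b - a`. -/
theorem digit_unique {n a b : ℕ} (ha : a < n) (hb : b < n) {c : ℤ} (hc : IsCoprime (n : ℤ) c)
    (h : (n : ℤ) ∣ c * (b - a)) : a = b := by
  have h' : (a : ℤ) ≡ b [ZMOD n] := (Int.modEq_iff_dvd).2 (hc.dvd_of_dvd_mul_left h)
  exact Nat.ModEq.eq_of_lt_of_lt (Int.natCast_modEq_iff.1 h') ha hb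

section

variable {n₁ p₁ n₂ p₂ n₃ N : ℕ}

/-- Equality in `ZMod N` of two multiples of `n₃` is a congruence modulo `N / n₃`. -/
theorem mul_cast_eq_iff (hn₃ : 0 < n₃) (hN : N = n₁ * n₂ * n₃ * p₁ * p₂) (x y : ℤ) :
    ((n₃ * x : ℤ) : ZMod N) = ((n₃ * y : ℤ) : ZMod N) ↔
      (n₁ * p₁ * n₂ * p₂ : ℤ) ∣ y - x := by
  rw [ZMod.intCast_eq_intCast_iff_dvd_sub]
  have h1 : (N : ℤ) = n₃ * (n₁ * p₁ * n₂ * p₂) := by rw [hN]; push_cast; ring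
  have h2 : (n₃ * y - n₃ * x : ℤ) = n₃ * (y - x) := by ring
  rw [h1, h2]
  exact mul_dvd_mul_iff_left (by exact_mod_cast hn₃.ne')

theorem mul_cast_mem (hn₁ : 0 < n₁) (hn₂ : 0 < n₂) (hp₁ : 0 < p₁) (hp₂ : 0 < p₂) (hn₃ : 0 < n₃)
    (hN : N = n₁ * n₂ * n₃ * p₁ * p₂) (z : ℤ) :
    ((n₃ * z : ℤ) : ZMod N) ∈ kIa N n₃ (n₁ * p₁ * n₂ * p₂) := by
  have hM : 0 < n₁ * p₁ * n₂ * p₂ := by positivity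
  obtain ⟨b, hb, hd⟩ := exists_digit hM isCoprime_one_right z
  refine ⟨b, hb, ?_⟩
  have := (mul_cast_eq_iff hn₃ hN z b).2 (by
    rw [← dvd_neg]
    have e : -((b : ℤ) - z) = z - 1 * b := by ring
    rw [e]
    exact_mod_cast hd)
  rw [this]
  push_cast
  ring

/-- The digits `a < n₂`, `b < n₁`, `u < p₂`, `v < p₁` exist. -/
theorem exists_digits {β : ℕ} (hn₁ : 0 < n₁) (hn₂ : 0 < n₂) (hp₁ : 0 < p₁) (hp₂ : 0 < p₂)
    (hcop : Nat.Coprime (n₁ * p₁) (n₂ * p₂)) (hβ : Nat.Coprime p₁ β) (z : ℤ) :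
    ∃ a b u v : ℕ, a < n₂ ∧ b < n₁ ∧ u < p₂ ∧ v < p₁ ∧
      (n₁ * p₁ * n₂ * p₂ : ℤ) ∣
        z - ((n₁ * p₁ * a + n₂ * p₂ * b) + (n₁ * n₂ * p₁ * u + β * n₁ * v)) := by
  have c1 : IsCoprime (n₁ : ℤ) (n₂ * p₂ : ℤ) := by
    exact_mod_cast hcop.coprime_mul_right.isCoprime
  have c2 : IsCoprime (p₁ : ℤ) (β : ℤ) := hβ.isCoprime
  obtain ⟨b, hb, x, hx⟩ := exists_digit hn₁ c1 z
  obtain ⟨v, hv, y, hy⟩ := exists_digit hp₁ c2 x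
  obtain ⟨a, ha, w, hw⟩ := exists_digit hn₂ isCoprime_one_right y
  obtain ⟨u, hu, t, ht⟩ := exists_digit hp₂ isCoprime_one_right w
  refine ⟨a, b, u, v, ha, hb, hu, hv, t, ?_⟩
  linear_combination hx + n₁ * hy + n₁ * p₁ * hw + n₁ * p₁ * n₂ * ht

/-- The digits are determined by the class modulo `n₁ * p₁ * n₂ * p₂`. -/
theorem digits_unique {β : ℕ} (hn₁ : 0 < n₁) (hn₂ : 0 < n₂) (hp₁ : 0 < p₁)
    (hcop : Nat.Coprime (n₁ * p₁) (n₂ * p₂)) (hβ : Nat.Coprime p₁ β)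
    {a b u v a' b' u' v' : ℕ} (ha : a < n₂) (hb : b < n₁) (hu : u < p₂) (hv : v < p₁)
    (ha' : a' < n₂) (hb' : b' < n₁) (hu' : u' < p₂) (hv' : v' < p₁)
    (h : (n₁ * p₁ * n₂ * p₂ : ℤ) ∣
      ((n₁ * p₁ * a' + n₂ * p₂ * b') + (n₁ * n₂ * p₁ * u' + β * n₁ * v')) -
        ((n₁ * p₁ * a + n₂ * p₂ * b) + (n₁ * n₂ * p₁ * u + β * n₁ * v))) :
    a = a' ∧ b = b' ∧ u = u' ∧ v = v' := by
  have c1 : IsCoprime (n₁ : ℤ) (n₂ * p₂ : ℤ) := by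
    exact_mod_cast hcop.coprime_mul_right.isCoprime
  have c2 : IsCoprime (p₁ : ℤ) (β : ℤ) := hβ.isCoprime
  have z1 : (n₁ : ℤ) ≠ 0 := by exact_mod_cast hn₁.ne'
  have z2 : (n₂ : ℤ) ≠ 0 := by exact_mod_cast hn₂.ne'
  have z3 : (p₁ : ℤ) ≠ 0 := by exact_mod_cast hp₁.ne'
  obtain ⟨q, hq⟩ := h
  have eb : b = b' := digit_unique hb hb' c1
    ⟨p₁ * n₂ * p₂ * q - p₁ * (a' - a) - n₂ * p₁ * (u' - u) - β * (v' - v), by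
      linear_combination hq⟩
  subst eb
  have ev : v = v' := digit_unique hv hv' c2
    ⟨n₂ * p₂ * q - (a' - a) - n₂ * (u' - u), by
      apply mul_left_cancel₀ z1
      linear_combination hq⟩
  subst ev
  have ea : a = a' := digit_unique ha ha' isCoprime_one_right
    ⟨p₂ * q - (u' - u), by
      apply mul_left_cancel₀ (mul_ne_zero z1 z3)
      linear_combination hq⟩
  subst ea
  have eu : u = u' := digit_unique hu hu' isCoprime_one_right
    ⟨q, by
      apply mul_left_cancel₀ (mul_ne_zero (mul_ne_zero z1 z3) z2)
      linear_combination hq⟩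
  exact ⟨rfl, rfl, eu, rfl⟩

theorem tiles_subgroup {β : ℕ} (hn₁ : 0 < n₁) (hn₂ : 0 < n₂) (hp₁ : 0 < p₁) (hp₂ : 0 < p₂)
    (hn₃ : 0 < n₃) (hcop : Nat.Coprime (n₁ * p₁) (n₂ * p₂)) (hβ : Nat.Coprime p₁ β)
    (hN : N = n₁ * n₂ * n₃ * p₁ * p₂) :
    Tiles (kIa N (n₁ * p₁ * n₃) n₂ + kIa N (n₂ * p₂ * n₃) n₁)
      (kIa N (n₁ * n₂ * n₃ * p₁) p₂ + kIa N (β * n₁ * n₃) p₁)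
      (kIa N n₃ (n₁ * p₁ * n₂ * p₂)) := by
  have hsum : ∀ a b u v : ℕ, ((n₁ * p₁ * n₃ * a : ℕ) : ZMod N) + ((n₂ * p₂ * n₃ * b : ℕ) : ZMod N)
      + (((n₁ * n₂ * n₃ * p₁ * u : ℕ) : ZMod N) + ((β * n₁ * n₃ * v : ℕ) : ZMod N)) =
      ((n₃ * ((n₁ * p₁ * a + n₂ * p₂ * b) + (n₁ * n₂ * p₁ * u + β * n₁ * v)) : ℤ) : ZMod N) := by
    intro a b u v
    push_cast
    ring
  refine ⟨?_, ?_⟩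
  · rintro _ ⟨_, ⟨a, ha, rfl⟩, _, ⟨b, hb, rfl⟩, rfl⟩ _ ⟨_, ⟨u, hu, rfl⟩, _, ⟨v, hv, rfl⟩, rfl⟩
    simp only [hsum]
    exact mul_cast_mem hn₁ hn₂ hp₁ hp₂ hn₃ hN _
  · rintro _ ⟨i, -, rfl⟩
    have hi : ((n₃ * i : ℕ) : ZMod N) = ((n₃ * (i : ℤ) : ℤ) : ZMod N) := by push_cast; ring
    obtain ⟨a, b, u, v, ha, hb, hu, hv, hd⟩ := exists_digits hn₁ hn₂ hp₁ hp₂ hcop hβ i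
    have he := (mul_cast_eq_iff hn₃ hN _ _).2 hd
    refine ⟨(_, _), ⟨⟨_, ⟨a, ha, rfl⟩, _, ⟨b, hb, rfl⟩, rfl⟩,
      ⟨_, ⟨u, hu, rfl⟩, _, ⟨v, hv, rfl⟩, rfl⟩, ?_⟩, ?_⟩
    · simp only [hsum]
      rw [hi, he]
    · rintro ⟨_, _⟩ ⟨⟨_, ⟨a', ha', rfl⟩, _, ⟨b', hb', rfl⟩, rfl⟩,
        ⟨_, ⟨u', hu', rfl⟩, _, ⟨v', hv', rfl⟩, rfl⟩, hg⟩
      simp only [hsum] at hg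
      rw [hi, ← he, mul_cast_eq_iff hn₃ hN] at hg
      obtain ⟨rfl, rfl, rfl, rfl⟩ := digits_unique hn₁ hn₂ hp₁ hcop hβ ha' hb' hu' hv' ha hb hu hv hg
      rfl

/-- An initial interval of length `n` in `ℤ/(n * p)` has no nonzero period `a₀ < n`: adding `a₀`
to its last element `n - 1` would leave the interval. -/
theorem digit_eq_zero {n p a₀ a : ℕ} (hp : 2 ≤ p) (ha₀ : a₀ < n) (ha : a < n)
    (h : (n * p : ℤ) ∣ a₀ + (n - 1 : ℕ) - a) : a₀ = 0 := by
  have hlt : (a₀ + (n - 1 : ℕ) - a : ℤ) < n * p := by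
    have : (n : ℤ) * 2 ≤ n * p := by gcongr; exact_mod_cast hp
    omega
  have := Int.eq_zero_of_dvd_of_nonneg_of_lt (by omega) hlt h
  omega

theorem not_isPeriodic_factor (hn₁ : 0 < n₁) (hn₂ : 0 < n₂) (hp₁ : 2 ≤ p₁) (hp₂ : 2 ≤ p₂)
    (hn₃ : 0 < n₃) (hcop : Nat.Coprime (n₁ * p₁) (n₂ * p₂))
    (hN : N = n₁ * n₂ * n₃ * p₁ * p₂) :
    ¬ IsPeriodic (kIa N (n₁ * p₁ * n₃) n₂ + kIa N (n₂ * p₂ * n₃) n₁) := by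
  rintro ⟨g, hg0, hg⟩
  have hgS : g ∈ kIa N (n₁ * p₁ * n₃) n₂ + kIa N (n₂ * p₂ * n₃) n₁ := by
    rw [← hg]
    exact ⟨0, ⟨0, ⟨0, hn₂, by simp⟩, 0, ⟨0, hn₁, by simp⟩, by simp⟩, by simp⟩
  obtain ⟨_, ⟨a₀, ha₀, rfl⟩, _, ⟨b₀, hb₀, rfl⟩, rfl⟩ := hgS
  have hmem : ((n₁ * p₁ * n₃ * a₀ : ℕ) : ZMod N) + ((n₂ * p₂ * n₃ * b₀ : ℕ) : ZMod N) +
      (((n₁ * p₁ * n₃ * (n₂ - 1) : ℕ) : ZMod N) + ((n₂ * p₂ * n₃ * (n₁ - 1) : ℕ) : ZMod N)) ∈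
      kIa N (n₁ * p₁ * n₃) n₂ + kIa N (n₂ * p₂ * n₃) n₁ := by
    rw [← hg]
    exact ⟨_, ⟨_, ⟨n₂ - 1, by omega, rfl⟩, _, ⟨n₁ - 1, by omega, rfl⟩, rfl⟩, rfl⟩
  obtain ⟨_, ⟨a, ha, rfl⟩, _, ⟨b, hb, rfl⟩, he⟩ := hmem
  have he' : ((n₃ * (n₁ * p₁ * a + n₂ * p₂ * b) : ℤ) : ZMod N) =
      ((n₃ * (n₁ * p₁ * (a₀ + (n₂ - 1 : ℕ)) + n₂ * p₂ * (b₀ + (n₁ - 1 : ℕ))) : ℤ) : ZMod N) := by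
    have he2 := he
    push_cast [-Nat.cast_sub, -Nat.cast_pred] at he2 ⊢
    linear_combination he2
  rw [mul_cast_eq_iff hn₃ hN] at he'
  obtain ⟨q, hq⟩ := he'
  have c : IsCoprime (n₁ * p₁ : ℤ) (n₂ * p₂ : ℤ) := by exact_mod_cast hcop.isCoprime
  have ea : a₀ = 0 := digit_eq_zero hp₂ ha₀ ha <| c.symm.dvd_of_dvd_mul_left
    ⟨n₁ * p₁ * q - (b₀ + (n₁ - 1 : ℕ) - b), by linear_combination hq⟩
  have eb : b₀ = 0 := digit_eq_zero hp₁ hb₀ hb <| c.dvd_of_dvd_mul_left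
    ⟨n₂ * p₂ * q - (a₀ + (n₂ - 1 : ℕ) - a), by linear_combination hq⟩
  subst ea eb
  simp at hg0

end


theorem vuzaCanon_construction_cosets (p₁ p₂ n₁ n₂ n₃ N α β : ℕ)
    (hp₁ : Nat.Prime p₁) (hp₂ : Nat.Prime p₂) (hpne : p₁ ≠ p₂)
    (hn₁ : 0 < n₁) (hn₂ : 0 < n₂) (hn₃ : 0 < n₃)
    (hcop : Nat.gcd (n₁ * p₁) (n₂ * p₂) = 1)
    (hN : N = n₁ * n₂ * n₃ * p₁ * p₂)
    (hα : α = 1 ∨ α = n₁ ∨ α = p₁) (hβ : β = 1 ∨ β = n₂ ∨ β = p₂)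
    (K K₁ K₂ : Set (ZMod N))
    (hK : IsCompleteCosetReps (kIa N n₃ (n₁ * p₁ * n₂ * p₂)) K)
    (hKsplit : K = K₁ ∪ K₂) (hKdisj : Disjoint K₁ K₂)
    (S R : Set (ZMod N))
    (hS : S = kIa N (n₁ * p₁ * n₃) n₂ + kIa N (n₂ * p₂ * n₃) n₁)
    (hR : R = (kIa N (n₁ * n₂ * n₃ * p₁) p₂ + kIa N (β * n₁ * n₃) p₁ + K₁)
        ∪ (kIa N (α * n₂ * n₃) p₂ + kIa N (n₁ * n₂ * n₃ * p₂) p₁ + K₂))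
    (hRnp : ¬ IsPeriodic R) :
    IsVuzaCanon S R := by
  have hcop' : Nat.Coprime (n₁ * p₁) (n₂ * p₂) := hcop
  have hβ' : Nat.Coprime p₁ β := by
    rcases hβ with rfl | rfl | rfl
    · exact Nat.coprime_one_right _
    · exact hcop'.coprime_mul_left.coprime_mul_right_right
    · exact hcop'.coprime_mul_left.coprime_mul_left_right
  have hα' : Nat.Coprime p₂ α := by
    rcases hα with rfl | rfl | rfl
    · exact Nat.coprime_one_right _
    · exact hcop'.symm.coprime_mul_left.coprime_mul_right_right
    · exact hcop'.symm.coprime_mul_left.coprime_mul_left_right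
  have h₁ := tiles_subgroup hn₁ hn₂ hp₁.pos hp₂.pos hn₃ hcop' hβ' hN
  have h₂ := tiles_subgroup (N := N) hn₂ hn₁ hp₂.pos hp₁.pos hn₃ hcop'.symm hα' (by rw [hN]; ring)
  rw [show n₂ * p₂ * n₁ * p₁ = n₁ * p₁ * n₂ * p₂ by ring, mul_comm n₂ n₁,
    add_comm (kIa N (n₂ * p₂ * n₃) n₁), add_comm (kIa N (n₁ * n₂ * n₃ * p₂) p₁)] at h₂
  have hex := existsUnique_of_tiles hK hKsplit hKdisj h₁ h₂
  rw [← hR, ← hS] at hex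
  obtain ⟨p, ⟨hpS, hpR, -⟩, -⟩ := hex 0
  refine ⟨⟨⟨_, hpS⟩, ⟨_, hpR⟩, hex⟩, ?_, hRnp⟩
  rw [hS]
  exact not_isPeriodic_factor hn₁ hn₂ hp₁.two_le hp₂.two_le hn₃ hcop' hN
end

section
/- Let p₁, p₂ be distinct primes and n₁, n₂, n₃ positive integers such that gcd(n₁·p₁, n₂·p₂) = 1, set N = n₁·n₂·n₃·p₁·p₂, let H be the subgroup H = n₃·I_{n₁p₁n₂p₂} of ℤ_N, and let K be a complete set of coset representatives for ℤ_N modulo H, written as a disjoint union K = K₁ ∪ K₂. Define A = n₁p₁n₃·I_{n₂}, B = n₂p₂n₃·I_{n₁}, U = n₁n₂n₃p₁·I_{p₂}, V = n₁n₂n₃p₂·I_{p₁}. Let U′ be obtained from U by choosing distinct non-zero elements u₁, …, u_n of U and non-zero elements b₁, …, b_n of B (not necessarily distinct) and setting U′ = (U \ {u₁, …, u_n}) ∪ {u₁+b₁, …, u_n+b_n}; similarly let V′ = (V \ {v₁, …, v_m}) ∪ {v₁+a₁, …, v_m+a_m} for distinct non-zero elements v₁, …, v_m of V and non-zero elements a₁,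 …, a_m of A. Let S = A + B and R = (U + V′ + K₁) ∪ (U′ + V + K₂). If R is a non-periodic subset of ℤ_N, then (S, R) is a Vuza canon of ℤ_N. -/
/-!
Write `α = n₁p₁n₃` and `β = n₂p₂n₃` in `ZMod N`. They have coprime additive orders `n₂p₂` and `n₁p₁`,
so `H` is the internal direct sum of the cyclic groups `⟨β⟩` and `⟨α⟩`. Euclidean division
by `n₂` (resp. `n₁`) gives the direct decompositions `⟨α⟩ = A ⊕ U` and `⟨β⟩ = B ⊕ V`
(`isTiling_multiples`).

Passing from `V` to `V'` moves elements by elements of `⟨α⟩ = A ⊕ U`, so `A + U + V'` and `A + U + V` meet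
the same cosets of `⟨α⟩`, and `A + B` still tiles `H` with `U + V'` (`IsTiling.perturb`).
Exchanging the two roles, `A + B` tiles `H` with `U' + V` too. In each coset `x + H` with `x ∈ K` one may
therefore use either complement, depending on whether `x ∈ K₁` or `x ∈ K₂`; this
gives the rhythmic canon (`existsUnique_of_isTiling`).

For the non-periodicity of `A + B`: a period lies in `A + B`, since `0` does. Its
`α`-coordinate `i` must vanish, for otherwise adding the period to `(n₂ - i)α ∈ A` would produce the
coordinate `n₂ < n₂p₂`, which does not occur in `A + B` (`period_coord`). The same holds
for `β`.
-/

open Pointwise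

/-! ### Tilings of cyclic groups by initial multiples -/

section Tiling

variable {G : Type*} [AddCommGroup G]

/-- `X + Y = H` is a direct decomposition: every element of `H` is uniquely `x + y` with
`x ∈ X`, `y ∈ Y`, and every such sum lies in `H`. -/
structure IsTiling (H : AddSubgroup G) (X Y : Set G) : Prop where
  mem : ∀ x ∈ X, ∀ y ∈ Y, x + y ∈ H
  exists_add : ∀ h ∈ H, ∃ x ∈ X, ∃ y ∈ Y, x + y = h
  unique : ∀ x ∈ X, ∀ y ∈ Y, ∀ x' ∈ X, ∀ y' ∈ Y, x + y = x' + y' → x = x' ∧ y = y'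

/-- The first `n` natural multiples `0, α, …, (n - 1)α` of `α`. -/
def multiples (α : G) (n : ℕ) : Set G := {x | ∃ i < n, x = i • α}

lemma multiples_subset (α : G) (n : ℕ) :
    ∀ x ∈ multiples α n, x ∈ AddSubgroup.zmultiples α := by
  rintro x ⟨i, -, rfl⟩
  exact AddSubgroup.nsmul_mem_zmultiples α i

lemma zero_mem_multiples (α : G) {n : ℕ} (hn : 0 < n) : (0 : G) ∈ multiples α n :=
  ⟨0, hn, by simp⟩

lemma nsmul_inj_of_lt {α : G} {i j k : ℕ} (hk : addOrderOf α = k) (hi : i < k) (hj : j < k)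
    (h : i • α = j • α) : i = j := by
  subst hk
  exact nsmul_injOn_Iio_addOrderOf hi hj h

/-- A cyclic group of order `k` consists of the first `k` multiples of its generator. -/
lemma mem_zmultiples_iff_multiples {α : G} {k : ℕ} (hk : addOrderOf α = k) (hpos : 0 < k) (g : G) :
    g ∈ AddSubgroup.zmultiples α ↔ g ∈ multiples α k := by
  refine ⟨fun hg => ?_, multiples_subset α k g⟩
  have hf : IsOfFinAddOrder α := addOrderOf_pos_iff.mp (by omega)
  obtain ⟨m, rfl⟩ := (hf.mem_multiples_iff_mem_zmultiples).mpr hg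
  refine ⟨m % k, Nat.mod_lt _ hpos, ?_⟩
  subst hk
  exact (mod_addOrderOf_nsmul α m).symm

/-- Euclidean division by `n`: an index below `n * p` is uniquely `i + n * j` with
`i < n` and `j < p`. -/
lemma isTiling_multiples {α : G} {n p : ℕ} (hk : addOrderOf α = n * p) (hn : 0 < n) (hp : 0 < p) :
    IsTiling (AddSubgroup.zmultiples α) (multiples α n) (multiples (n • α) p) where
  mem := by
    rintro x ⟨i, -, rfl⟩ y ⟨j, -, rfl⟩
    rw [← mul_nsmul, ← add_nsmul]
    exact AddSubgroup.nsmul_mem_zmultiples α _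
  exists_add := by
    intro h hh
    obtain ⟨m, hm, rfl⟩ := (mem_zmultiples_iff_multiples hk (Nat.mul_pos hn hp) h).mp hh
    refine ⟨_, ⟨m % n, Nat.mod_lt _ hn, rfl⟩, _, ⟨m / n, Nat.div_lt_of_lt_mul hm, rfl⟩, ?_⟩
    rw [← mul_nsmul, ← add_nsmul, Nat.mod_add_div]
  unique := by
    rintro x ⟨i, hi, rfl⟩ y ⟨j, hj, rfl⟩ x' ⟨i', hi', rfl⟩ y' ⟨j', hj', rfl⟩ h
    rw [← mul_nsmul, ← mul_nsmul, ← add_nsmul, ← add_nsmul] at h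
    have hlt : ∀ a < n, ∀ b < p, a + n * b < n * p := by
      intro a ha b hb
      calc a + n * b < n * (b + 1) := by rw [mul_add]; omega
        _ ≤ n * p := Nat.mul_le_mul_left _ hb
    have e := nsmul_inj_of_lt hk (hlt i hi j hj) (hlt i' hi' j' hj') h
    have e1 : i = i' := by
      simpa [Nat.add_mul_mod_self_left, Nat.mod_eq_of_lt hi, Nat.mod_eq_of_lt hi']
        using congrArg (· % n) e
    subst e1
    have e2 : j = j' := Nat.eq_of_mul_eq_mul_left hn (by omega)
    subst e2
    exact ⟨rfl, rfl⟩

/-! ### Perturbed complements -/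

/-- `V'` meets the same cosets of `P` as `V`, and meets each coset at most once. -/
structure SameCosets (P : AddSubgroup G) (V V' : Set G) : Prop where
  down : ∀ v' ∈ V', ∃ v ∈ V, v' - v ∈ P
  up : ∀ v ∈ V, ∃ v' ∈ V', v' - v ∈ P
  inj : ∀ v' ∈ V', ∀ w' ∈ V', v' - w' ∈ P → v' = w'

/-- Elements of `V ⊆ Q` are pairwise incongruent modulo `P`, and moving some of them inside their
cosets of `P` keeps it so. -/
lemma sameCosets_of_replace {P Q : AddSubgroup G} (hPQ : ∀ x ∈ P, x ∈ Q → x = 0) {V V' : Set G}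
    (hVQ : ∀ v ∈ V, v ∈ Q) {m : ℕ} {v a : Fin m → G} (hinj : Function.Injective v)
    (hv : ∀ i, v i ∈ V) (ha : ∀ i, a i ∈ P)
    (hV' : V' = (V \ Set.range v) ∪ Set.range (fun i => v i + a i)) :
    SameCosets P V V' := by
  have key : ∀ x ∈ V, ∀ y ∈ V, x - y ∈ P → x = y := fun x hx y hy h =>
    sub_eq_zero.mp (hPQ _ h (Q.sub_mem (hVQ x hx) (hVQ y hy)))
  subst hV'
  refine ⟨?_, ?_, ?_⟩
  · rintro v' (⟨h, -⟩ | ⟨i, rfl⟩)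
    · exact ⟨v', h, by simp⟩
    · exact ⟨v i, hv i, by simpa using ha i⟩
  · intro x hx
    by_cases h : x ∈ Set.range v
    · obtain ⟨i, rfl⟩ := h
      exact ⟨v i + a i, Or.inr ⟨i, rfl⟩, by simpa using ha i⟩
    · exact ⟨x, Or.inl ⟨hx, h⟩, by simp⟩
  · rintro x (⟨hx, hxr⟩ | ⟨i, rfl⟩) y (⟨hy, hyr⟩ | ⟨j, rfl⟩) h
    · exact key x hx y hy h
    · refine absurd ⟨j, ?_⟩ hxr
      refine (key x hx _ (hv j) ?_).symm
      have := P.add_mem h (ha j)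
      rwa [show x - (v j + a j) + a j = x - v j by abel] at this
    · refine absurd ⟨i, ?_⟩ hyr
      refine key _ (hv i) y hy ?_
      have := P.sub_mem h (ha i)
      rwa [show v i + a i - y - a i = v i - y by abel] at this
    · have h2 : v i - v j ∈ P := by
        have := P.sub_mem (P.add_mem h (ha j)) (ha i)
        rwa [show v i + a i - (v j + a j) + a j - a i = v i - v j by abel] at this
      obtain rfl := hinj (key _ (hv i) _ (hv j) h2)
      rfl

/-- Replacing `V` by a set `V'` with the same cosets modulo `P = A ⊕ U` preserves the tiling
of `P ⊕ Q = (A + B) ⊕ (U + V)`. -/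
lemma IsTiling.perturb {P Q : AddSubgroup G} (hPQ : ∀ x ∈ P, x ∈ Q → x = 0) {A B U V V' : Set G}
    (hAU : IsTiling P A U) (hBV : IsTiling Q B V) (hV' : SameCosets P V V') :
    IsTiling (P ⊔ Q) (A + B) (U + V') where
  mem := by
    rintro _ ⟨a, ha, b, hb, rfl⟩ _ ⟨u, hu, v', hv', rfl⟩
    obtain ⟨v, hv, hvP⟩ := hV'.down v' hv'
    refine AddSubgroup.mem_sup.mpr
      ⟨_, P.add_mem (hAU.mem a ha u hu) hvP, _, hBV.mem b hb v hv, ?_⟩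
    simp only
    abel
  exists_add := by
    intro h hh
    obtain ⟨x, hx, y, hy, rfl⟩ := AddSubgroup.mem_sup.mp hh
    obtain ⟨b, hb, v, hv, rfl⟩ := hBV.exists_add y hy
    obtain ⟨v', hv', hvP⟩ := hV'.up v hv
    obtain ⟨a, ha, u, hu, hau⟩ := hAU.exists_add _ (P.sub_mem hx hvP)
    refine ⟨_, ⟨a, ha, b, hb, rfl⟩, _, ⟨u, hu, v', hv', rfl⟩, ?_⟩
    have : x = a + u + (v' - v) := by rw [hau]; abel
    rw [this]
    simp only
    abel
  unique := by
    rintro _ ⟨a, ha, b, hb, rfl⟩ _ ⟨u, hu, v', hv', rfl⟩ _ ⟨c, hc, d, hd, rfl⟩ _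
      ⟨w, hw, z', hz', rfl⟩ h
    simp only at h ⊢
    obtain ⟨v, hv, hvP⟩ := hV'.down v' hv'
    obtain ⟨z, hz, hzP⟩ := hV'.down z' hz'
    have hQ := Q.sub_mem (hBV.mem b hb v hv) (hBV.mem d hd z hz)
    have hP := P.sub_mem (P.add_mem (hAU.mem c hc w hw) hzP) (P.add_mem (hAU.mem a ha u hu) hvP)
    have e : c + w + (z' - z) - (a + u + (v' - v)) = b + v - (d + z) := by
      have h' : c + d + (w + z') - (a + b + (u + v')) = 0 := by rw [h, sub_self]
      rw [← sub_eq_zero, ← h']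
      abel
    rw [e] at hP
    obtain ⟨rfl, rfl⟩ := hBV.unique b hb v hv d hd z hz (sub_eq_zero.mp (hPQ _ hP hQ))
    have hz'v' : v' = z' := by
      refine hV'.inj v' hv' z' hz' ?_
      have := P.sub_mem hvP hzP
      rwa [sub_sub_sub_cancel_right] at this
    subst hz'v'
    obtain ⟨rfl, rfl⟩ := hAU.unique a ha u hu c hc w hw (by
      have h' : a + u + (b + v') = c + w + (b + v') := by
        calc a + u + (b + v') = a + b + (u + v') := by abel
          _ = c + b + (w + v') := h
          _ = _ := by abel
      exact add_right_cancel h')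
    exact ⟨rfl, rfl⟩

/-! ### Gluing complements along cosets -/

/-- Two complements `W₁`, `W₂` of the same set `S` in a subgroup may be used on disjoint families
of cosets. -/
lemma existsUnique_of_isTiling {H : AddSubgroup G} {S W₁ W₂ K₁ K₂ : Set G}
    (h₁ : IsTiling H S W₁) (h₂ : IsTiling H S W₂)
    (hK : ∀ g : G, ∃! x, x ∈ K₁ ∪ K₂ ∧ g - x ∈ H) (hd : Disjoint K₁ K₂) (g : G) :
    ∃! p : G × G, p.1 ∈ S ∧ p.2 ∈ (W₁ + K₁) ∪ (W₂ + K₂) ∧ p.1 + p.2 = g := by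
  obtain ⟨x, ⟨hx, hxH⟩, hxu⟩ := hK g
  -- any representation of `g` uses the representative of the coset of `g`
  have hrep : ∀ {W : Set G}, IsTiling H S W → ∀ s ∈ S, ∀ w ∈ W, ∀ k ∈ K₁ ∪ K₂,
      s + (w + k) = g → k = x := by
    intro W hW s hs w hw k hk e
    refine hxu k ⟨hk, ?_⟩
    rw [← e, ← add_assoc, add_sub_cancel_right]
    exact hW.mem s hs w hw
  have hnot : ∀ y, y ∈ K₁ → y ∈ K₂ → False := fun y a b => Set.disjoint_left.mp hd a b
  have huniq : ∀ {W : Set G}, IsTiling H S W → ∀ s ∈ S, ∀ w ∈ W, ∀ s' ∈ S, ∀ w' ∈ W,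
      s + w = g - x → s' + (w' + x) = g → (s', w' + x) = (s, w + x) := by
    intro W hW s hs w hw s' hs' w' hw' e e'
    obtain ⟨rfl, rfl⟩ := hW.unique s hs w hw s' hs' w' hw' (by rw [e, ← e']; abel)
    rfl
  rcases hx with hx | hx
  · obtain ⟨s, hs, w, hw, e⟩ := h₁.exists_add _ hxH
    refine ⟨(s, w + x), ⟨hs, Or.inl ⟨w, hw, x, hx, rfl⟩, ?_⟩, ?_⟩
    · simp only [← add_assoc, e, sub_add_cancel]
    · rintro ⟨s', r'⟩ ⟨hs', ⟨w', hw', k, hk, rfl⟩ | ⟨w', hw', k, hk, rfl⟩, e'⟩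
      · obtain rfl := hrep h₁ s' hs' w' hw' k (Or.inl hk) e'
        exact huniq h₁ s hs w hw s' hs' w' hw' e e'
      · obtain rfl := hrep h₂ s' hs' w' hw' k (Or.inr hk) e'
        exact (hnot k hx hk).elim
  · obtain ⟨s, hs, w, hw, e⟩ := h₂.exists_add _ hxH
    refine ⟨(s, w + x), ⟨hs, Or.inr ⟨w, hw, x, hx, rfl⟩, ?_⟩, ?_⟩
    · simp only [← add_assoc, e, sub_add_cancel]
    · rintro ⟨s', r'⟩ ⟨hs', ⟨w', hw', k, hk, rfl⟩ | ⟨w', hw', k, hk, rfl⟩, e'⟩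
      · obtain rfl := hrep h₁ s' hs' w' hw' k (Or.inl hk) e'
        exact (hnot k hk hx).elim
      · obtain rfl := hrep h₂ s' hs' w' hw' k (Or.inr hk) e'
        exact huniq h₂ s hs w hw s' hs' w' hw' e e'

/-! ### Non-periodicity -/

/-- The `α`-coordinate of a period of `{0, …, n - 1}α + B` vanishes, when `⟨α⟩` has order larger
than `n` and is independent of a subgroup containing `B`. -/
lemma period_coord {α : G} {Q : AddSubgroup G} {B : Set G} (hBQ : ∀ b ∈ B, b ∈ Q)
    (hPQ : ∀ x ∈ AddSubgroup.zmultiples α, x ∈ Q → x = 0) (h0 : (0 : G) ∈ B) {n k : ℕ}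
    (hk : addOrderOf α = k) (hnk : n < k) {i : ℕ} (hi : i < n) {b : G} (hb : b ∈ B)
    (hper : ∀ x ∈ multiples α n + B, i • α + b + x ∈ multiples α n + B) : i = 0 := by
  by_contra hne
  obtain ⟨_, ⟨j, hj, rfl⟩, b', hb', e⟩ :=
    hper _ ⟨(n - i) • α, ⟨n - i, by omega, rfl⟩, 0, h0, rfl⟩
  simp only [add_zero] at e
  have e1 : n • α + b = j • α + b' := by
    rw [e]
    conv_lhs => rw [show n = i + (n - i) by omega, add_nsmul]
    abel
  have e2 : n • α - j • α = b' - b := by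
    rw [sub_eq_sub_iff_add_eq_add, e1]
    abel
  have e3 : n • α = j • α := by
    refine sub_eq_zero.mp (hPQ _ ?_ ?_)
    · exact AddSubgroup.sub_mem _ (AddSubgroup.nsmul_mem_zmultiples α n)
        (AddSubgroup.nsmul_mem_zmultiples α j)
    · rw [e2]
      exact Q.sub_mem (hBQ _ hb') (hBQ _ hb)
  have := nsmul_inj_of_lt hk hnk (hj.trans hnk) e3
  omega

lemma not_isPeriodic_add {α β : G} {n m k l : ℕ} (hn : 0 < n) (hm : 0 < m)
    (hk : addOrderOf α = k) (hl : addOrderOf β = l) (hnk : n < k) (hml : m < l)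
    (hPQ : ∀ x ∈ AddSubgroup.zmultiples α, x ∈ AddSubgroup.zmultiples β → x = 0) :
    ¬ IsPeriodic (multiples α n + multiples β m) := by
  rintro ⟨g, hg, hS⟩
  have hper : ∀ x ∈ multiples α n + multiples β m, g + x ∈ multiples α n + multiples β m :=
    fun x hx => hS ▸ Set.mem_image_of_mem _ hx
  have hgS := hper 0 ⟨0, zero_mem_multiples α hn, 0, zero_mem_multiples β hm, add_zero 0⟩
  rw [add_zero] at hgS
  obtain ⟨_, ⟨i, hi, rfl⟩, _, ⟨j, hj, rfl⟩, rfl⟩ := hgS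
  have hi0 : i = 0 := period_coord (multiples_subset β m) hPQ (zero_mem_multiples β hm) hk hnk hi
    ⟨j, hj, rfl⟩ hper
  have hj0 : j = 0 := period_coord (multiples_subset α n) (fun x h h' => hPQ x h' h)
    (zero_mem_multiples α hn) hl hml hj ⟨i, hi, rfl⟩
    (by rwa [add_comm (multiples β m), add_comm (j • β)])
  subst hi0 hj0
  simp at hg

/-! ### Cyclic groups of coprime orders -/

/-- Elements of coprime orders generate independent subgroups. -/
lemma zmultiples_inter_of_coprime {α β : G} (h : Nat.Coprime (addOrderOf α) (addOrderOf β)) :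
    ∀ x ∈ AddSubgroup.zmultiples α, x ∈ AddSubgroup.zmultiples β → x = 0 := by
  intro x hα hβ
  have h1 : addOrderOf x ∣ addOrderOf α := addOrderOf_dvd_of_mem_zmultiples hα
  have h2 : addOrderOf x ∣ addOrderOf β := addOrderOf_dvd_of_mem_zmultiples hβ
  exact AddMonoid.addOrderOf_eq_one_iff.mp (Nat.eq_one_of_dvd_coprimes h h1 h2)

lemma zmultiples_sup_of_coprime (γ : G) {a b : ℕ} (h : Nat.Coprime a b) :
    AddSubgroup.zmultiples (a • γ) ⊔ AddSubgroup.zmultiples (b • γ) = AddSubgroup.zmultiples γ := by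
  apply le_antisymm
  · rw [sup_le_iff, AddSubgroup.zmultiples_le, AddSubgroup.zmultiples_le]
    exact ⟨AddSubgroup.nsmul_mem_zmultiples γ a, AddSubgroup.nsmul_mem_zmultiples γ b⟩
  · rw [AddSubgroup.zmultiples_le, AddSubgroup.mem_sup]
    -- Bézout: `1 = a x + b y`
    refine ⟨Nat.gcdA a b • a • γ, AddSubgroup.zsmul_mem_zmultiples _ _,
      Nat.gcdB a b • b • γ, AddSubgroup.zsmul_mem_zmultiples _ _, ?_⟩
    rw [← natCast_zsmul, ← natCast_zsmul, smul_smul, smul_smul, ← add_smul]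
    have := Nat.gcd_eq_gcd_ab a b
    rw [h.gcd_eq_one] at this
    rw [mul_comm _ (a : ℤ), mul_comm _ (b : ℤ), ← this]
    simp

end Tiling

/-! ### The construction in `ZMod N` -/

lemma kIa_eq_multiples (N k a : ℕ) : kIa N k a = multiples (k : ZMod N) a := by
  ext x
  simp only [kIa, multiples, Set.mem_ofPred_eq, nsmul_eq_mul, Nat.cast_mul, mul_comm]

lemma addOrderOf_natCast_of_mul {N k a : ℕ} (h : N = k * a) (hk : 0 < k) (ha : 0 < a) :
    addOrderOf (k : ZMod N) = a := by
  subst h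
  rw [ZMod.addOrderOf_coe k (Nat.mul_pos hk ha).ne', Nat.gcd_mul_right_left,
    Nat.mul_div_cancel_left _ hk]

theorem vuzaCanon_construction_perturbed (p₁ p₂ n₁ n₂ n₃ N : ℕ)
    (hp₁ : Nat.Prime p₁) (hp₂ : Nat.Prime p₂) (hpne : p₁ ≠ p₂)
    (hn₁ : 0 < n₁) (hn₂ : 0 < n₂) (hn₃ : 0 < n₃)
    (hcop : Nat.gcd (n₁ * p₁) (n₂ * p₂) = 1)
    (hN : N = n₁ * n₂ * n₃ * p₁ * p₂)
    (K K₁ K₂ : Set (ZMod N))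
    (hK : IsCompleteCosetReps (kIa N n₃ (n₁ * p₁ * n₂ * p₂)) K)
    (hKsplit : K = K₁ ∪ K₂) (hKdisj : Disjoint K₁ K₂)
    (A B U V U' V' : Set (ZMod N))
    (hA : A = kIa N (n₁ * p₁ * n₃) n₂) (hB : B = kIa N (n₂ * p₂ * n₃) n₁)
    (hU : U = kIa N (n₁ * n₂ * n₃ * p₁) p₂) (hV : V = kIa N (n₁ * n₂ * n₃ * p₂) p₁)
    -- U' is obtained from U by replacing distinct non-zero elements u i of U
    -- by u i + b i, where the b i are non-zero elements of B
    (hU' : ∃ (n : ℕ) (u b : Fin n → ZMod N), Function.Injective u ∧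
      (∀ i, u i ∈ U ∧ u i ≠ 0) ∧ (∀ i, b i ∈ B ∧ b i ≠ 0) ∧
      U' = (U \ Set.range u) ∪ Set.range (fun i => u i + b i))
    -- V' is obtained from V by replacing distinct non-zero elements v i of V
    -- by v i + a i, where the a i are non-zero elements of A
    (hV' : ∃ (m : ℕ) (v a : Fin m → ZMod N), Function.Injective v ∧
      (∀ i, v i ∈ V ∧ v i ≠ 0) ∧ (∀ i, a i ∈ A ∧ a i ≠ 0) ∧
      V' = (V \ Set.range v) ∪ Set.range (fun i => v i + a i))
    (S R : Set (ZMod N))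
    (hS : S = A + B)
    (hR : R = (U + V' + K₁) ∪ (U' + V + K₂))
    (hRnp : ¬ IsPeriodic R) :
    IsVuzaCanon S R := by

  have hA' := kIa_eq_multiples N (n₁ * p₁ * n₃) n₂
  have hB' := kIa_eq_multiples N (n₂ * p₂ * n₃) n₁
  have hU₀ := kIa_eq_multiples N (n₁ * n₂ * n₃ * p₁) p₂
  have hV₀ := kIa_eq_multiples N (n₁ * n₂ * n₃ * p₂) p₁
  have hp₁0 := hp₁.pos
  have hp₂0 := hp₂.pos
  -- generators of the two independent summands of `H`
  set α : ZMod N := ((n₁ * p₁ * n₃ : ℕ) : ZMod N) with hα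
  set β : ZMod N := ((n₂ * p₂ * n₃ : ℕ) : ZMod N) with hβ
  have hUα : ((n₁ * n₂ * n₃ * p₁ : ℕ) : ZMod N) = n₂ • α := by
    rw [hα]; push_cast [nsmul_eq_mul]; ring
  have hVβ : ((n₁ * n₂ * n₃ * p₂ : ℕ) : ZMod N) = n₁ • β := by
    rw [hβ]; push_cast [nsmul_eq_mul]; ring
  rw [hA'] at hA
  rw [hB'] at hB
  rw [hU₀, hUα] at hU
  rw [hV₀, hVβ] at hV
  have oα : addOrderOf α = n₂ * p₂ :=
    addOrderOf_natCast_of_mul (by rw [hN]; ring) (by positivity) (by positivity)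
  have oβ : addOrderOf β = n₁ * p₁ :=
    addOrderOf_natCast_of_mul (by rw [hN]; ring) (by positivity) (by positivity)
  have oγ : addOrderOf (n₃ : ZMod N) = n₁ * p₁ * n₂ * p₂ :=
    addOrderOf_natCast_of_mul (by rw [hN]; ring) hn₃ (by positivity)
  have hαβ : ∀ x ∈ AddSubgroup.zmultiples α, x ∈ AddSubgroup.zmultiples β → x = 0 := by
    refine zmultiples_inter_of_coprime ?_
    rw [oα, oβ]
    exact Nat.Coprime.symm hcop
  have hβα : ∀ x ∈ AddSubgroup.zmultiples β, x ∈ AddSubgroup.zmultiples α → x = 0 :=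
    fun x h h' => hαβ x h' h
  have hsup : AddSubgroup.zmultiples α ⊔ AddSubgroup.zmultiples β =
      AddSubgroup.zmultiples (n₃ : ZMod N) := by
    rw [← zmultiples_sup_of_coprime (n₃ : ZMod N) (show Nat.Coprime (n₁ * p₁) (n₂ * p₂) from hcop)]
    simp only [hα, hβ, nsmul_eq_mul, Nat.cast_mul]
  have tA : IsTiling (AddSubgroup.zmultiples α) A U := by
    rw [hA, hU]; exact isTiling_multiples oα hn₂ hp₂0
  have tB : IsTiling (AddSubgroup.zmultiples β) B V := by
    rw [hB, hV]; exact isTiling_multiples oβ hn₁ hp₁0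
  have hAα : ∀ x ∈ A, x ∈ AddSubgroup.zmultiples α := hA ▸ multiples_subset α n₂
  have hBβ : ∀ x ∈ B, x ∈ AddSubgroup.zmultiples β := hB ▸ multiples_subset β n₁
  have hUsub : ∀ x ∈ U, x ∈ AddSubgroup.zmultiples α := fun x hx => by
    simpa using tA.mem 0 (hA ▸ zero_mem_multiples α hn₂) x hx
  have hVsub : ∀ x ∈ V, x ∈ AddSubgroup.zmultiples β := fun x hx => by
    simpa using tB.mem 0 (hB ▸ zero_mem_multiples β hn₁) x hx
  have cU : SameCosets (AddSubgroup.zmultiples β) U U' := by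
    obtain ⟨n, u, b, hinj, hu, hb, e⟩ := hU'
    exact sameCosets_of_replace hβα hUsub hinj (fun i => (hu i).1) (fun i => hBβ _ (hb i).1) e
  have cV : SameCosets (AddSubgroup.zmultiples α) V V' := by
    obtain ⟨m, v, a, hinj, hv, ha, e⟩ := hV'
    exact sameCosets_of_replace hαβ hVsub hinj (fun i => (hv i).1) (fun i => hAα _ (ha i).1) e
  have t₁ := IsTiling.perturb hαβ tA tB cV
  have t₂ := IsTiling.perturb hβα tB tA cU
  rw [hsup] at t₁
  rw [sup_comm, hsup, add_comm B A, add_comm V U'] at t₂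
  have hK' : ∀ g : ZMod N, ∃! x, x ∈ K₁ ∪ K₂ ∧ g - x ∈ AddSubgroup.zmultiples (n₃ : ZMod N) := by
    intro g
    simp only [mem_zmultiples_iff_multiples oγ (by positivity), ← kIa_eq_multiples, ← hKsplit]
    exact hK g
  have hcanon := existsUnique_of_isTiling t₁ t₂ hK' hKdisj
  rw [← hS, ← hR] at hcanon
  obtain ⟨p, ⟨hpS, hpR, -⟩, -⟩ := hcanon 0
  refine ⟨⟨⟨_, hpS⟩, ⟨_, hpR⟩, hcanon⟩, ?_, hRnp⟩
  rw [hS, hA, hB]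
  exact not_isPeriodic_add hn₂ hn₁ oα oβ (lt_mul_of_one_lt_right hn₂ hp₂.one_lt)
    (lt_mul_of_one_lt_right hn₁ hp₁.one_lt) hαβ
end
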